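/- arXiv:2311.10008 — 4 statements merged into one kernel-verified Lean document; each statement's English description precedes it below -/
import Mathlib

section
/- Let a, b be positive integers with gcd(a,b) = 1, a ≡ 17 (mod 18), b ≡ 11 (mod 18), and such that every prime dividing ab is congruent to 2 modulo 3. Then the equation a·u₁³ + a·u₂³ − 2b·u₃³ = b has a solution (u₁,u₂,u₃) ∈ ℤ_p³ for every prime p, but it has no solution (u₁,u₂,u₃) ∈ ℤ³. -/
lemma adj_form {w : ℂ} (hw : w ^ 2 = -1 - w) {z : ℂ} (hz : z ∈ Algebra.adjoin ℤ {w}) :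
    ∃ s t : ℤ, z = s + t * w := by
  induction hz using Algebra.adjoin_induction with
  | mem x hx => 
    rw [Set.mem_singleton_iff] at hx
    exact ⟨0, 1, by simp [hx]⟩
  | algebraMap r => exact ⟨r, 0, by simp⟩
  | add x y _ _ hx hy =>
    obtain ⟨s, t, rfl⟩ := hx
    obtain ⟨s', t', rfl⟩ := hy
    exact ⟨s + s', t + t', by push_cast; ring⟩
  | mul x y _ _ hx hy =>
    obtain ⟨s, t, rfl⟩ := hx
    obtain ⟨s', t', rfl⟩ := hy
    refine ⟨s * s' - t * t', s * t' + t * s' - t * t', ?_⟩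
    push_cast
    linear_combination (t * t' : ℂ) * hw

/-- A sum over `ZMod p` symmetric under `x ↦ 1 - x` is its value at the fixed point mod 2. -/
lemma sum_symm {p : ℕ} [Fact p.Prime] (h2 : (2 : ZMod p) ≠ 0) (f : ZMod p → ℂ)
    (hf : ∀ x, f (1 - x) = f x) :
    ∃ S : Finset (ZMod p), ∑ x, f x = f 2⁻¹ + 2 * ∑ x ∈ S, f x := by
  classical
  refine ⟨Finset.univ.filter fun x => x.val < (1 - x).val, ?_⟩
  have h1 := Finset.sum_filter_add_sum_filter_not Finset.univ
    (fun x : ZMod p => x.val < (1 - x).val) f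
  have h3 := Finset.sum_filter_add_sum_filter_not
    (Finset.univ.filter fun x : ZMod p => ¬ x.val < (1 - x).val) (fun x => x = 2⁻¹) f
  have hfix : ∀ x : ZMod p, x = 1 - x ↔ x = 2⁻¹ := by
    intro x
    constructor
    · intro h
      field_simp
      linear_combination h
    · rintro rfl
      field_simp
      ring
  have h4 : (Finset.univ.filter fun x : ZMod p => ¬ x.val < (1 - x).val).filter
      (fun x => x = 2⁻¹) = {2⁻¹} := by
    ext x
    simp only [Finset.mem_filter, Finset.mem_univ, true_and, Finset.mem_singleton,
      and_iff_right_iff_imp]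
    intro h
    rw [← (hfix x).2 h]
    exact lt_irrefl _
  have h5 : ∑ x ∈ (Finset.univ.filter fun x : ZMod p => ¬ x.val < (1 - x).val).filter
      (fun x => ¬ x = 2⁻¹), f x = ∑ x ∈ Finset.univ.filter
      (fun x : ZMod p => x.val < (1 - x).val), f x := by
    refine Finset.sum_bij' (fun x _ => 1 - x) (fun x _ => 1 - x) ?_ ?_ ?_ ?_ ?_
    · intro x hx
      simp only [Finset.mem_filter, Finset.mem_univ, true_and, sub_sub_cancel] at hx ⊢
      refine lt_of_le_of_ne (not_lt.1 hx.1) fun h => hx.2 ((hfix x).1 ?_)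
      exact (ZMod.val_injective p h).symm
    · intro x hx
      simp only [Finset.mem_filter, Finset.mem_univ, true_and, sub_sub_cancel] at hx ⊢
      refine ⟨not_lt.2 hx.le, fun h => ?_⟩
      have := (hfix _).2 h
      rw [sub_sub_cancel] at this
      rw [this] at hx
      exact lt_irrefl _ hx
    · intro x _; simp
    · intro x _; simp
    · intro x _; exact (hf x).symm
  rw [h4, Finset.sum_singleton, h5] at h3
  rw [← h1, ← h3]
  ring

lemma two_cube_repr {p : ℕ} [Fact p.Prime] (hp3 : p % 3 = 1) (y : ZMod p) (hy : y ^ 3 = 2) :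
    ∃ x y : ℤ, (p : ℤ) = x ^ 2 + 27 * y ^ 2 := by
  have hp : p.Prime := Fact.out
  have h2 : (2 : ZMod p) ≠ 0 := by
    intro h
    have h' : ((2 : ℕ) : ZMod p) = 0 := by exact_mod_cast h
    rw [ZMod.natCast_eq_zero_iff] at h'
    have := (Nat.prime_dvd_prime_iff_eq hp Nat.prime_two).1 h'
    omega
  obtain ⟨w, hw⟩ : ∃ w : ℂ, IsPrimitiveRoot w 3 := ⟨_, Complex.isPrimitiveRoot_exp 3 (by norm_num)⟩
  have hw1 : w ≠ 1 := hw.ne_one (by norm_num)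
  have hw3 : w ^ 3 = 1 := hw.pow_eq_one
  have hw2 : w ^ 2 = -1 - w := by
    have : (w - 1) * (w ^ 2 + w + 1) = 0 := by linear_combination hw3
    rcases mul_eq_zero.1 this with h | h
    · exact absurd (sub_eq_zero.1 h) hw1
    · linear_combination h
  have hdvd : 3 ∣ Fintype.card (ZMod p) - 1 := by rw [ZMod.card]; omega
  obtain ⟨χ, hχ⟩ := MulChar.exists_mulChar_orderOf (ZMod p) hdvd hw
  have hχ3 : χ ^ 3 = 1 := by rw [← hχ]; exact pow_orderOf_eq_one χ
  have hχ1 : χ ≠ 1 := by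
    rintro rfl
    simp at hχ
  have hχ2 : χ * χ ≠ 1 := by
    intro h
    apply hχ1
    have : χ ^ 3 = (χ * χ) * χ := by rw [pow_succ, pow_two]
    rw [hχ3, h, one_mul] at this
    exact this.symm
  -- norm
  have hN := jacobiSum_mul_jacobiSum_inv (F := ZMod p) (F' := ℂ)
    (by rw [ringChar.eq_zero, ZMod.ringChar_zmod_n]; exact hp.ne_zero.symm) hχ1 hχ1 hχ2
  have hconj : jacobiSum χ⁻¹ χ⁻¹ = starRingEnd ℂ (jacobiSum χ χ) := by
    simp only [jacobiSum, map_sum, map_mul]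
    refine Finset.sum_congr rfl fun x _ => ?_
    rw [← MulChar.star_apply', ← MulChar.star_apply']
    rfl
  -- mod 3
  obtain ⟨z, hz, hJ3⟩ := exists_jacobiSum_eq_neg_one_add (F := ZMod p) (by norm_num) hχ3 hχ3 hdvd hw
  obtain ⟨s1, t1, rfl⟩ := adj_form hw2 hz
  -- mod 2
  obtain ⟨S, hS⟩ := sum_symm h2 (fun x => χ x * χ (1 - x)) (by
    intro x; simp only [sub_sub_cancel]; ring)
  have hmem : ∑ x ∈ S, χ x * χ (1 - x) ∈ Algebra.adjoin ℤ {w} :=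
    Subalgebra.sum_mem _ fun x _ => Subalgebra.mul_mem _
      (MulChar.apply_mem_algebraAdjoin_of_pow_eq_one hχ3 hw _)
      (MulChar.apply_mem_algebraAdjoin_of_pow_eq_one hχ3 hw _)
  obtain ⟨s2, t2, hst⟩ := adj_form hw2 hmem
  have hy0 : y ≠ 0 := by
    rintro rfl
    apply h2
    rw [← hy]; simp
  have hχinv : χ 2⁻¹ = 1 := by
    rw [← hy, ← inv_pow, map_pow, ← MulChar.pow_apply' χ (by norm_num), hχ3]
    exact MulChar.one_apply (inv_ne_zero hy0).isUnit
  have hhalf : (1 : ZMod p) - 2⁻¹ = 2⁻¹ := by field_simp; ring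
  have hJ2 : jacobiSum χ χ = 1 + 2 * (s2 + t2 * w) := by
    rw [jacobiSum, hS, hst]
    simp only [hhalf, hχinv, mul_one]
  have him : w.im ≠ 0 := by
    intro h
    have hre : w = (w.re : ℂ) := by
      apply Complex.ext <;> simp [h]
    rw [hre] at hw2
    have : w.re ^ 2 = -1 - w.re := by exact_mod_cast hw2
    nlinarith [sq_nonneg (2 * w.re + 1)]
  have hJ3' : jacobiSum χ χ = ((-1 + 3 * t1 : ℤ) : ℂ) + ((-3 * (s1 - t1) : ℤ) : ℂ) * w := by
    rw [hJ3]
    push_cast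
    linear_combination (s1 + t1 * w - 3 * t1) * hw2
  have ht : (-3 * (s1 - t1) : ℤ) = 2 * t2 := by
    have h := hJ3'.symm.trans hJ2
    have h' := congrArg Complex.im h
    simp at h'
    have : ((-3 * (s1 - t1) : ℤ) : ℝ) = ((2 * t2 : ℤ) : ℝ) := by
      apply mul_right_cancel₀ him
      push_cast
      linarith
    exact_mod_cast this
  obtain ⟨v, hv⟩ : ∃ v, t2 = 3 * v := ⟨t2 / 3, by omega⟩
  rw [ht, hv] at hJ3'
  set s : ℤ := -1 + 3 * t1
  have hwc : starRingEnd ℂ w = -1 - w := by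
    have h0 : (w.re + w.re + 1 = 0) := by
      have := congrArg Complex.im hw2
      simp [pow_two] at this
      apply mul_right_cancel₀ him
      linarith
    apply Complex.ext
    · simp; linarith
    · simp
  rw [hconj, hJ3'] at hN
  simp only [map_add, map_mul, hwc, ZMod.card] at hN
  simp only [map_intCast] at hN
  refine ⟨s - 3 * v, v, ?_⟩
  have : ((p : ℤ) : ℂ) = (((s - 3 * v) ^ 2 + 27 * v ^ 2 : ℤ) : ℂ) := by
    push_cast at hN ⊢
    rw [← hN]
    linear_combination (-(36:ℂ) * v ^ 2) * hw2
  exact_mod_cast this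

lemma descent_aux (n : ℕ) : ∀ c d : ℤ, c ^ 2 - c * d + d ^ 2 = n → n % 2 = 1 → 
    (∀ p : ℕ, p.Prime → p ∣ n → p % 3 = 2 ∨ ∃ x y : ℤ, (p : ℤ) = x ^ 2 + 27 * y ^ 2) →
    (6 ∣ c ∨ 6 ∣ d ∨ 6 ∣ c - d) := by
  induction n using Nat.strong_induction_on with
  | _ n ih =>
  intro c d hN hodd hpr
  by_cases hn1 : n = 1
  · subst hn1
    have h1 : (2 * c - d) ^ 2 + 3 * d ^ 2 = 4 := by push_cast at hN; linarith
    have h2 : (2 * d - c) ^ 2 + 3 * c ^ 2 = 4 := by push_cast at hN; linarith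
    have hd1 : d ≤ 1 := by nlinarith [sq_nonneg (2 * c - d)]
    have hd2 : -1 ≤ d := by nlinarith [sq_nonneg (2 * c - d)]
    have hc1 : c ≤ 1 := by nlinarith [sq_nonneg (2 * d - c)]
    have hc2 : -1 ≤ c := by nlinarith [sq_nonneg (2 * d - c)]
    interval_cases c <;> interval_cases d <;> simp_all
  obtain ⟨p, hp, hpn⟩ := Nat.exists_prime_and_dvd hn1
  obtain ⟨m, hm⟩ := hpn
  have hn0 : 0 < n := by omega
  have hpp : Prime (p : ℤ) := Nat.prime_iff_prime_int.1 hp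
  have hp0 : (p : ℤ) ≠ 0 := hpp.ne_zero
  rcases hpr p hp ⟨m, hm⟩ with h3 | ⟨x, y, hxy⟩
  · -- inert prime
    have hpdvd : (p : ℤ) ∣ c ^ 2 - c * d + d ^ 2 := by rw [hN, hm]; push_cast; exact dvd_mul_right _ _
    have : Fact p.Prime := ⟨hp⟩
    have hz : ((c : ZMod p)) ^ 2 - c * d + d ^ 2 = 0 := by
      have := (ZMod.intCast_zmod_eq_zero_iff_dvd _ p).2 hpdvd
      push_cast at this; exact this
    have hcop : (p - 1).Coprime 3 := by
      rw [Nat.coprime_comm, Nat.Prime.coprime_iff_not_dvd Nat.prime_three]; omega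
    have hd : (d : ZMod p) = 0 := by
      by_contra hd
      have hq : ((c : ZMod p) / d) ^ 2 - (c / d) + 1 = 0 := by
        field_simp; linear_combination hz
      set q := (c : ZMod p) / d
      have hq3 : (-q) ^ 3 = 1 := by linear_combination (-q - 1) * hq
      have hq0 : -q ≠ 0 := by intro h; rw [h] at hq3; simp at hq3
      have hqp : (-q) ^ (p - 1) = 1 := ZMod.pow_card_sub_one_eq_one hq0
      have h1 : -q = 1 := by
        have a1 := orderOf_dvd_of_pow_eq_one hq3
        have a2 := orderOf_dvd_of_pow_eq_one hqp
        have := Nat.dvd_gcd a2 a1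
        rw [hcop.gcd_eq_one, Nat.dvd_one, orderOf_eq_one_iff] at this
        exact this
      have h30 : ((3 : ℕ) : ZMod p) = 0 := by
        push_cast
        have : q = -1 := by linear_combination -h1
        rw [this] at hq
        linear_combination hq
      rw [ZMod.natCast_eq_zero_iff] at h30
      have := (Nat.prime_dvd_prime_iff_eq hp Nat.prime_three).1 h30
      omega
    have hc : (c : ZMod p) = 0 := by
      rw [hd] at hz
      have : (c : ZMod p) ^ 2 = 0 := by linear_combination hz
      exact pow_eq_zero_iff (by norm_num) |>.1 this
    obtain ⟨c', rfl⟩ := (ZMod.intCast_zmod_eq_zero_iff_dvd _ p).1 hc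
    obtain ⟨d', rfl⟩ := (ZMod.intCast_zmod_eq_zero_iff_dvd _ p).1 hd
    have hm' : (p : ℤ) * (c' ^ 2 - c' * d' + d' ^ 2) = m := by
      apply mul_left_cancel₀ hp0
      rw [hm] at hN; push_cast at hN
      linear_combination hN
    obtain ⟨k, hk⟩ : p ∣ m := by
      have : (p : ℤ) ∣ m := ⟨_, hm'.symm⟩
      exact_mod_cast this
    have hkn : k ∣ n := ⟨p * p, by rw [hm, hk]; ring⟩
    have hk' : c' ^ 2 - c' * d' + d' ^ 2 = k := by
      apply mul_left_cancel₀ hp0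
      rw [hm', hk]; push_cast; ring
    have hlt : k < n := by
      rw [hm, hk]
      have hk0 : 0 < k := Nat.pos_of_dvd_of_pos hkn hn0
      have := hp.two_le
      nlinarith [Nat.mul_le_mul this this]
    have hko : k % 2 = 1 := by
      rcases Nat.even_or_odd k with he | ho
      · have := he.two_dvd.trans hkn; omega
      · exact Nat.odd_iff.1 ho
    rcases ih k hlt c' d' hk' hko (fun q hq hqk => hpr q hq (hqk.trans hkn)) with h | h | h
    · exact Or.inl (h.mul_left _)
    · exact Or.inr (Or.inl (h.mul_left _))
    · refine Or.inr (Or.inr ?_); rw [← mul_sub]; exact h.mul_left _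
  · -- split prime
    have hm0 : 0 < m := by
      rcases Nat.eq_zero_or_pos m with h | h
      · simp [h] at hm; omega
      · exact h
    have hlt : m < n := by
      rw [hm]; have := hp.two_le; nlinarith
    have hmn : m ∣ n := ⟨p, by rw [hm]; ring⟩
    have hmo : m % 2 = 1 := by
      rcases Nat.even_or_odd m with he | ho
      · have := he.two_dvd.trans hmn; omega
      · exact Nat.odd_iff.1 ho
    have hNm : c ^ 2 - c * d + d ^ 2 = p * m := by rw [hN, hm]; push_cast; ring
    have key : ∀ e y : ℤ, (p : ℤ) = e ^ 2 - e * (6 * y) + (6 * y) ^ 2 →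
        (p : ℤ) ∣ d * e - c * (6 * y) → (6 ∣ c ∨ 6 ∣ d ∨ 6 ∣ c - d) := by
      intro e y hpe hdv
      obtain ⟨d', hd'⟩ := hdv
      have hnm : (c * (e - 6 * y) + d * (6 * y)) ^ 2 - (c * (e - 6 * y) + d * (6 * y)) * (p * d')
          + (p * d') ^ 2 = p * p * m := by
        rw [← hd']
        linear_combination (e ^ 2 - e * (6 * y) + (6 * y) ^ 2) * hNm - p * m * hpe
      have hdv2 : (p : ℤ) ∣ (c * (e - 6 * y) + d * (6 * y)) ^ 2 :=
        ⟨p * m + (c * (e - 6 * y) + d * (6 * y)) * d' - p * d' ^ 2, by linear_combination hnm⟩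
      obtain ⟨c', hc'⟩ := hpp.dvd_of_dvd_pow hdv2
      rw [hc'] at hnm
      have h1 : c' ^ 2 - c' * d' + d' ^ 2 = m := by
        apply mul_left_cancel₀ (mul_ne_zero hp0 hp0)
        linear_combination hnm
      have hc : c = c' * e - d' * (6 * y) := by
        apply mul_left_cancel₀ hp0
        linear_combination e * hc' - (6 * y) * hd' + c * hpe
      have hd : d = c' * (6 * y) + d' * e - d' * (6 * y) := by
        apply mul_left_cancel₀ hp0
        linear_combination (6 * y) * hc' + (e - 6 * y) * hd' + d * hpe
      rcases ih m hlt c' d' h1 hmo (fun q hq hqk => hpr q hq (hqk.trans hmn)) with h | h | h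
      · obtain ⟨k, rfl⟩ := h
        exact Or.inl ⟨k * e - d' * y, by rw [hc]; ring⟩
      · obtain ⟨k, rfl⟩ := h
        exact Or.inr (Or.inl ⟨c' * y + k * e - k * (6 * y), by rw [hd]; ring⟩)
      · obtain ⟨k, hk⟩ := h
        refine Or.inr (Or.inr ⟨k * e - c' * y, ?_⟩)
        rw [hc, hd]; linear_combination e * hk
    have hp1 : (p : ℤ) = (x + 3 * y) ^ 2 - (x + 3 * y) * (6 * y) + (6 * y) ^ 2 := by
      rw [hxy]; ring
    have hp2 : (p : ℤ) = (x + 3 * (-y)) ^ 2 - (x + 3 * (-y)) * (6 * (-y)) + (6 * (-y)) ^ 2 := by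
      rw [hxy]; ring
    have hprod : (p : ℤ) ∣ (d * (x + 3 * y) - c * (6 * y)) * 
        (d * (x + 3 * (-y)) - c * (6 * (-y))) :=
      ⟨d ^ 2 - (6 * y) ^ 2 * m, by linear_combination (-(6 * y) ^ 2) * hNm - d ^ 2 * hxy⟩
    rcases hpp.dvd_or_dvd hprod with h | h
    · exact key _ _ hp1 h
    · exact key _ _ hp2 h

lemma cube_hensel {p : ℕ} [Fact p.Prime] (A C x0 : ℤ_[p])
    (h : ‖A * x0 ^ 3 - C‖ < ‖3 * A * x0 ^ 2‖ ^ 2) : ∃ x : ℤ_[p], A * x ^ 3 = C := by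
  obtain ⟨z, hz, -⟩ := hensels_lemma (p := p) (R := ℤ_[p])
    (F := Polynomial.C A * Polynomial.X ^ 3 - Polynomial.C C) (a := x0) (by
      have e1 : Polynomial.aeval x0 (Polynomial.C A * Polynomial.X ^ 3 - Polynomial.C C) =
          A * x0 ^ 3 - C := by simp
      have e2 : Polynomial.aeval x0
          (Polynomial.C A * Polynomial.X ^ 3 - Polynomial.C C).derivative = 3 * A * x0 ^ 2 := by
        simp; ring
      rw [e1, e2]
      exact h)
  refine ⟨z, ?_⟩
  simp at hz
  linear_combination hz

lemma norm_one_of_toZMod {p : ℕ} [Fact p.Prime] (x : ℤ_[p]) (h : PadicInt.toZMod x ≠ 0) :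
    ‖x‖ = 1 := by
  rw [← PadicInt.isUnit_iff]
  by_contra hx
  apply h
  have : x ∈ IsLocalRing.maximalIdeal ℤ_[p] := hx
  rw [← PadicInt.ker_toZMod] at this
  exact this

lemma norm_lt_of_toZMod {p : ℕ} [Fact p.Prime] (x : ℤ_[p]) (h : PadicInt.toZMod x = 0) :
    ‖x‖ < 1 := by
  have : x ∈ RingHom.ker (PadicInt.toZMod (p := p)) := h
  rw [PadicInt.ker_toZMod] at this
  exact PadicInt.mem_nonunits.1 this

lemma cube_hensel_modp {p : ℕ} [Fact p.Prime] (h3 : (3 : ZMod p) ≠ 0) (A C : ℤ_[p]) (x : ZMod p)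
    (hA : PadicInt.toZMod A ≠ 0) (hx : x ≠ 0)
    (h : PadicInt.toZMod A * x ^ 3 = PadicInt.toZMod C) : ∃ x : ℤ_[p], A * x ^ 3 = C := by
  obtain ⟨x0, rfl⟩ := ZMod.ringHom_surjective (PadicInt.toZMod (p := p)) x
  apply cube_hensel A C x0
  rw [norm_one_of_toZMod (3 * A * x0 ^ 2), one_pow]
  · apply norm_lt_of_toZMod
    simp [h]
  · simp only [map_mul, map_pow, map_ofNat]
    exact mul_ne_zero (mul_ne_zero h3 hA) (pow_ne_zero _ hx)

open Pointwise in
/-- Three-cube forms over `F_p` are universal (Cauchy–Davenport). -/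
lemma three_cubes {p : ℕ} [Fact p.Prime] (e c : ZMod p) (he : e ≠ 0) :
    ∃ x y z : ZMod p, x ^ 3 + y ^ 3 + e * z ^ 3 = c := by
  classical
  have hp : p.Prime := Fact.out
  let A : Finset (ZMod p) := Finset.univ.image fun x => x ^ 3
  let B : Finset (ZMod p) := A.image fun x => e * x
  have hA0 : (0 : ZMod p) ∈ A := Finset.mem_image.2 ⟨0, Finset.mem_univ _, by simp⟩
  have hAn : A.Nonempty := ⟨0, hA0⟩
  have hBn : B.Nonempty := hAn.image _
  have hB : B.card = A.card := Finset.card_image_of_injective _ (mul_right_injective₀ he)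
  have hA : p + 2 ≤ 3 * A.card := by
    have h1 : (Finset.univ.erase (0 : ZMod p)).card ≤ 3 * (A.erase 0).card := by
      apply Finset.card_le_mul_card_image_of_maps_to (f := fun x => x ^ 3)
      · intro x hx
        rw [Finset.mem_erase] at hx ⊢
        exact ⟨pow_ne_zero _ hx.1, Finset.mem_image.2 ⟨x, Finset.mem_univ _, rfl⟩⟩
      · intro b _
        refine le_trans (Finset.card_le_card (t := (Polynomial.nthRoots 3 b).toFinset) ?_) ?_
        · intro x hx
          rw [Finset.mem_filter] at hx
          rw [Multiset.mem_toFinset, Polynomial.mem_nthRoots (by norm_num)]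
          exact hx.2
        · exact (Multiset.toFinset_card_le _).trans (Polynomial.card_nthRoots _ _)
    rw [Finset.card_erase_of_mem (Finset.mem_univ _), Finset.card_erase_of_mem hA0,
      Finset.card_univ, ZMod.card] at h1
    have := Finset.card_pos.2 hAn
    have := hp.two_le
    omega
  have h1 := ZMod.cauchy_davenport hp hAn hAn
  have h2 := ZMod.cauchy_davenport hp (hAn.add hAn) hBn
  have h3 : p ≤ (A + A + B).card := by
    rw [hB] at h2
    have := Finset.card_pos.2 hAn
    omega
  have h4 : A + A + B = Finset.univ := by
    rw [← Finset.card_eq_iff_eq_univ, ZMod.card]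
    exact le_antisymm ((Finset.card_le_univ _).trans_eq (ZMod.card p)) h3
  have hc : c ∈ A + A + B := by rw [h4]; exact Finset.mem_univ _
  obtain ⟨s, hs, t, ht, rfl⟩ := Finset.mem_add.1 hc
  obtain ⟨u, hu, v, hv, rfl⟩ := Finset.mem_add.1 hs
  obtain ⟨x, -, rfl⟩ := Finset.mem_image.1 hu
  obtain ⟨y, -, rfl⟩ := Finset.mem_image.1 hv
  obtain ⟨w, hw, rfl⟩ := Finset.mem_image.1 ht
  obtain ⟨z, -, rfl⟩ := Finset.mem_image.1 hw
  exact ⟨x, y, z, rfl⟩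

lemma cube_surj {p : ℕ} [Fact p.Prime] (hp : p % 3 = 2) (c : ZMod p) : ∃ x : ZMod p, x ^ 3 = c := by
  have hcop : (Nat.card (ZMod p)ˣ).Coprime 3 := by
    rw [Nat.card_eq_fintype_card, ZMod.card_units, Nat.coprime_comm, Nat.Prime.coprime_iff_not_dvd Nat.prime_three]; omega
  by_cases hc : c = 0
  · exact ⟨0, by simp [hc]⟩
  · obtain ⟨y, hy⟩ := (powCoprime hcop).surjective (Units.mk0 c hc)
    refine ⟨y, ?_⟩
    have := congrArg Units.val hy
    simpa using this

lemma local_sol (a b : ℤ) (hab : IsCoprime a b) (ha18 : a % 18 = 17) (hb18 : b % 18 = 11)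
    (hprime : ∀ p : ℕ, p.Prime → (p : ℤ) ∣ a * b → p % 3 = 2) (p : ℕ) [Fact p.Prime] :
      ∃ u₁ u₂ u₃ : ℤ_[p],
        (a : ℤ_[p]) * u₁ ^ 3 + (a : ℤ_[p]) * u₂ ^ 3 - 2 * (b : ℤ_[p]) * u₃ ^ 3 = (b : ℤ_[p]) := by
  have hp : p.Prime := Fact.out
  by_cases hp3 : p = 3
  · subst hp3
    -- choose k with a(3k-1)^3 - a ≡ b mod 27
    obtain ⟨k, hk⟩ : ∃ k : ℤ, (27 : ℤ) ∣ a * (3 * k - 1) ^ 3 - (b + a) := by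
      have h : ∃ k : ℤ, (a * (3 * k - 1) ^ 3 - (b + a)) % 27 = 0 := by
        have e : ∀ k : ℤ, (a * (3 * k - 1) ^ 3 - (b + a)) % 27 = (9 * (a * k) - 2 * a - b) % 27 := by
          intro k
          have : a * (3 * k - 1) ^ 3 - (b + a) = 9 * (a * k) - 2 * a - b + 27 * (a * (k ^ 3 - k ^ 2)) := by
            ring
          omega
        have h9 : ∃ j : ℤ, 2 * a + b = 9 * j := ⟨(2 * a + b) / 9, by omega⟩
        obtain ⟨j, hj⟩ := h9
        refine ⟨-j, ?_⟩
        rw [e]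
        obtain ⟨i, hi⟩ : ∃ i : ℤ, a = 3 * i - 1 := ⟨(a + 1) / 3, by omega⟩
        have : 9 * (a * -j) - 2 * a - b = 27 * (-(i * j)) := by
          rw [show 9 * (a * -j) - 2 * a - b = 9 * (a * -j) - (2 * a + b) by ring, hj, hi]; ring
        omega
      obtain ⟨k, hk⟩ := h
      exact ⟨k, Int.dvd_of_emod_eq_zero hk⟩
    have hu : ¬ (3 : ℤ) ∣ a * (3 * k - 1) ^ 2 := by
      intro h
      rcases Int.prime_three.dvd_or_dvd h with h | h
      · omega
      · have := Int.prime_three.dvd_of_dvd_pow h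
        omega
    obtain ⟨x, hx⟩ := cube_hensel (p := 3) (a : ℤ_[3]) ((b + a : ℤ) : ℤ_[3]) ((3 * k - 1 : ℤ) : ℤ_[3]) (by
      have e1 : (a : ℤ_[3]) * ((3 * k - 1 : ℤ) : ℤ_[3]) ^ 3 - ((b + a : ℤ) : ℤ_[3]) =
        ((a * (3 * k - 1) ^ 3 - (b + a) : ℤ) : ℤ_[3]) := by push_cast; ring
      have e2 : 3 * (a : ℤ_[3]) * ((3 * k - 1 : ℤ) : ℤ_[3]) ^ 2 =
        ((3 : ℕ) : ℤ_[3]) * ((a * (3 * k - 1) ^ 2 : ℤ) : ℤ_[3]) := by push_cast; ring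
      rw [e1, e2, norm_mul, PadicInt.norm_p]
      have n2 : ‖((a * (3 * k - 1) ^ 2 : ℤ) : ℤ_[3])‖ = 1 := by
        apply norm_one_of_toZMod
        rw [map_intCast]
        intro h
        exact hu ((ZMod.intCast_zmod_eq_zero_iff_dvd _ 3).1 h)
      have n1 := (PadicInt.norm_int_le_pow_iff_dvd (p := 3) (k := a * (3 * k - 1) ^ 3 - (b + a)) (n := 3)).2
        (by exact_mod_cast hk)
      rw [n2]
      refine lt_of_le_of_lt n1 ?_
      norm_num)
    refine ⟨x, -1, 0, ?_⟩
    push_cast at hx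
    linear_combination hx
  have h3 : (3 : ZMod p) ≠ 0 := by
    intro h
    have h' : ((3 : ℕ) : ZMod p) = 0 := by exact_mod_cast h
    rw [ZMod.natCast_eq_zero_iff] at h'
    exact hp3 ((Nat.prime_dvd_prime_iff_eq hp Nat.prime_three).1 h')
  by_cases hp2 : p = 2
  · subst hp2
    obtain ⟨x, hx⟩ := cube_hensel_modp h3 (a : ℤ_[2]) (b : ℤ_[2]) 1
      (by
        rw [map_intCast]
        intro h
        have := (ZMod.intCast_zmod_eq_zero_iff_dvd _ 2).1 h
        omega) one_ne_zero (by
        rw [map_intCast, map_intCast, one_pow, mul_one, ZMod.intCast_eq_intCast_iff]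
        change a % 2 = b % 2
        omega)
    exact ⟨x, 0, 0, by linear_combination hx⟩
  have h2 : (2 : ZMod p) ≠ 0 := by
    intro h
    have h' : ((2 : ℕ) : ZMod p) = 0 := by exact_mod_cast h
    rw [ZMod.natCast_eq_zero_iff] at h'
    exact hp2 ((Nat.prime_dvd_prime_iff_eq hp Nat.prime_two).1 h')
  have hT2 : PadicInt.toZMod (2 : ℤ_[p]) = 2 := map_ofNat _ 2
  by_cases hpm : p % 3 = 2
  · obtain ⟨y, hy⟩ := cube_surj hpm (-(2 : ZMod p)⁻¹)
    have hy0 : y ≠ 0 := by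
      rintro rfl
      have : (2 : ZMod p)⁻¹ = 0 := by
        rw [zero_pow (by norm_num)] at hy
        exact neg_eq_zero.1 hy.symm
      exact inv_ne_zero h2 this
    obtain ⟨x, hx⟩ := cube_hensel_modp h3 (2 : ℤ_[p]) (-1) y (by rw [hT2]; exact h2) hy0 (by
      rw [hy, hT2]; simp [h2])
    exact ⟨1, -1, x, by linear_combination (-(b : ℤ_[p])) * hx⟩
  have hab' : ¬ (p : ℤ) ∣ a * b := fun h => hpm (hprime p hp h)
  have ha0 : (a : ZMod p) ≠ 0 := fun h =>
    hab' (((ZMod.intCast_zmod_eq_zero_iff_dvd _ p).1 h).mul_right _)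
  have hb0 : (b : ZMod p) ≠ 0 := fun h =>
    hab' (((ZMod.intCast_zmod_eq_zero_iff_dvd _ p).1 h).mul_left _)
  obtain ⟨x, y, z, hxyz⟩ := three_cubes (-(2 * b / a) : ZMod p) (b / a)
    (neg_ne_zero.2 (div_ne_zero (mul_ne_zero h2 hb0) ha0))
  have hxyz' : (a : ZMod p) * x ^ 3 + a * y ^ 3 - 2 * b * z ^ 3 = b := by
    field_simp at hxyz
    linear_combination hxyz
  obtain ⟨x', hx'⟩ := ZMod.ringHom_surjective (PadicInt.toZMod (p := p)) x
  obtain ⟨y', hy'⟩ := ZMod.ringHom_surjective (PadicInt.toZMod (p := p)) y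
  obtain ⟨z', hz'⟩ := ZMod.ringHom_surjective (PadicInt.toZMod (p := p)) z
  by_cases hx0 : x = 0
  · by_cases hy0 : y = 0
    · have hz0 : z ≠ 0 := by
        rintro rfl
        apply hb0
        rw [← hxyz', hx0, hy0]
        simp
      obtain ⟨u, hu⟩ := cube_hensel_modp h3 (-(2 * b) : ℤ_[p]) (b - a * x' ^ 3 - a * y' ^ 3) z
        (by simp [hT2, h2, hb0]) hz0 (by simp [hT2, hx', hy']; linear_combination hxyz')
      exact ⟨x', y', u, by linear_combination hu⟩
    · obtain ⟨u, hu⟩ := cube_hensel_modp h3 (a : ℤ_[p]) (b - a * x' ^ 3 + 2 * b * z' ^ 3) y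
        (by simp [ha0]) hy0 (by simp [hT2, hx', hz']; linear_combination hxyz')
      exact ⟨x', u, z', by linear_combination hu⟩
  · obtain ⟨u, hu⟩ := cube_hensel_modp h3 (a : ℤ_[p]) (b - a * y' ^ 3 + 2 * b * z' ^ 3) x
      (by simp [ha0]) hx0 (by simp [hT2, hy', hz']; linear_combination hxyz')
    exact ⟨u, y', z', by linear_combination hu⟩

lemma mod_nine : ∀ x y z : ZMod 9, 8 * x ^ 3 + 8 * y ^ 3 - 2 * 2 * z ^ 3 = 2 →
    3 * (x - y) = 0 ∧ 3 * x ≠ 0 := by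
  decide +kernel

lemma global_none (a b : ℤ) (ha18 : a % 18 = 17) (hb18 : b % 18 = 11)
    (hprime : ∀ p : ℕ, p.Prime → (p : ℤ) ∣ a * b → p % 3 = 2) (x y z : ℤ)
    (h : a * x ^ 3 + a * y ^ 3 - 2 * b * z ^ 3 = b) : False := by
  have h9 : 3 ∣ x - y ∧ ¬ 3 ∣ x := by
    have ha : (a : ZMod 9) = 8 := by
      have : (a : ZMod 9) = ((8 : ℤ) : ZMod 9) := by
        rw [ZMod.intCast_eq_intCast_iff]; change a % 9 = 8 % 9; omega
      exact_mod_cast this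
    have hb : (b : ZMod 9) = 2 := by
      have : (b : ZMod 9) = ((2 : ℤ) : ZMod 9) := by
        rw [ZMod.intCast_eq_intCast_iff]; change b % 9 = 2 % 9; omega
      exact_mod_cast this
    have hz := congrArg (Int.cast : ℤ → ZMod 9) h
    push_cast at hz
    rw [ha, hb] at hz
    obtain ⟨h1, h2⟩ := mod_nine _ _ _ hz
    have h1' : ((3 * (x - y) : ℤ) : ZMod 9) = 0 := by push_cast; exact h1
    have h2' : ((3 * x : ℤ) : ZMod 9) ≠ 0 := by push_cast; exact h2
    have h1'' := (ZMod.intCast_zmod_eq_zero_iff_dvd _ 9).1 h1'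
    have h2'' := fun hh => h2' ((ZMod.intCast_zmod_eq_zero_iff_dvd _ 9).2 hh)
    push_cast at h1'' h2''
    constructor
    · omega
    · intro h3; apply h2''; omega
  have hodd : (x + y) % 2 = 1 := by
    rcases Int.even_or_odd (x + y) with he | ho
    · exfalso
      obtain ⟨k, hk⟩ := he
      have : b = 2 * (a * (k * (x ^ 2 - x * y + y ^ 2)) - b * z ^ 3) := by
        linear_combination -h + a * (x ^ 2 - x * y + y ^ 2) * hk
      omega
    · exact Int.odd_iff.1 ho
  have hnn : 0 ≤ x ^ 2 - x * y + y ^ 2 := by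
    nlinarith [sq_nonneg (x - y), sq_nonneg x, sq_nonneg y, sq_nonneg (x + y)]
  obtain ⟨n, hn⟩ := Int.eq_ofNat_of_zero_le hnn
  have hfin := descent_aux n x y hn (by
      have hno : Odd (x ^ 2 - x * y + y ^ 2) := by
        have hc : (Odd x ∧ Even y) ∨ (Even x ∧ Odd y) := by
          rcases Int.even_or_odd x with hx | hx
          · exact Or.inr ⟨hx, by rw [Int.even_iff] at hx; rw [Int.odd_iff]; omega⟩
          · exact Or.inl ⟨hx, by rw [Int.odd_iff] at hx; rw [Int.even_iff]; omega⟩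
        rcases hc with ⟨hx, hy⟩ | ⟨hx, hy⟩
        · exact ((hx.pow).sub_even (hy.mul_left _)).add_even (hy.pow_of_ne_zero (by norm_num))
        · exact ((hx.pow_of_ne_zero (by norm_num)).sub (hx.mul_right _)).add_odd (hy.pow)
      rw [hn, Int.odd_iff] at hno
      omega) (by
    intro p hp hpn
    have : Fact p.Prime := ⟨hp⟩
    have hpp : Prime (p : ℤ) := Nat.prime_iff_prime_int.1 hp
    have hpd : (p : ℤ) ∣ x ^ 2 - x * y + y ^ 2 := by rw [hn]; exact_mod_cast hpn
    by_cases hp2 : p % 3 = 2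
    · exact Or.inl hp2
    right
    have hp1 : p % 3 = 1 := by
      by_contra hp1
      have h3 : 3 ∣ p := by omega
      have h3' := (Nat.prime_dvd_prime_iff_eq Nat.prime_three hp).1 h3
      subst h3'
      obtain ⟨k, hk⟩ := h9.1
      obtain ⟨l, hl⟩ := hpd
      have : (3 : ℤ) ∣ x ^ 2 :=
        ⟨l + k * x - 3 * k ^ 2, by
          have hy : y = x - 3 * k := by linarith
          subst hy
          push_cast at hl
          linear_combination hl⟩
      exact h9.2 (Int.prime_three.dvd_of_dvd_pow this)
    have hdiv : (p : ℤ) ∣ b * (1 + 2 * z ^ 3) := by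
      have : b * (1 + 2 * z ^ 3) = (x ^ 2 - x * y + y ^ 2) * (a * (x + y)) := by
        linear_combination -h
      rw [this]; exact hpd.mul_right _
    rcases hpp.dvd_or_dvd hdiv with hd | hd
    · exact absurd (hprime p hp (hd.mul_left _)) hp2
    · have hz : (1 : ZMod p) + 2 * (z : ZMod p) ^ 3 = 0 := by
        have := (ZMod.intCast_zmod_eq_zero_iff_dvd _ p).2 hd
        push_cast at this; exact this
      have hz0 : (z : ZMod p) ≠ 0 := by
        intro h0; rw [h0] at hz; simp at hz
      refine two_cube_repr hp1 (-(z : ZMod p)⁻¹) ?_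
      field_simp
      linear_combination -hz)
  rcases hfin with h | h | h <;> omega

/-- For positive coprime integers `a ≡ 17 (mod 18)`, `b ≡ 11 (mod 18)`
such that every prime dividing `ab` is `≡ 2 (mod 3)`, the equation
`a·u₁³ + a·u₂³ − 2b·u₃³ = b` is soluble over `ℤ_p` for every prime `p`,
but has no integral solution. -/
theorem stmt_1 (a b : ℤ) (ha : 0 < a) (hb : 0 < b) (hab : IsCoprime a b)
    (ha18 : a % 18 = 17) (hb18 : b % 18 = 11)
    (hprime : ∀ p : ℕ, p.Prime → (p : ℤ) ∣ a * b → p % 3 = 2) :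
    (∀ (p : ℕ) [Fact p.Prime],
      ∃ u₁ u₂ u₃ : ℤ_[p],
        (a : ℤ_[p]) * u₁ ^ 3 + (a : ℤ_[p]) * u₂ ^ 3 - 2 * (b : ℤ_[p]) * u₃ ^ 3 = (b : ℤ_[p])) ∧
    ¬ ∃ u₁ u₂ u₃ : ℤ, a * u₁ ^ 3 + a * u₂ ^ 3 - 2 * b * u₃ ^ 3 = b := by
  exact ⟨fun p _ => local_sol a b hab ha18 hb18 hprime p,
    fun ⟨x, y, z, h⟩ => global_none a b ha18 hb18 hprime x y z h⟩
end

section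
/- There is an absolute constant C > 0 such that for all real numbers X, Y, Z, W ≥ 2, the number of sextuples (k, ℓ, m, n, s, t) of positive integers satisfying k·ℓ·m ≤ X, k·n·s ≤ Y, ℓ·n·t ≤ Z and m·s·t ≤ W is at most C·(X·Y·Z·W)^{1/2}·(log(X·Y·Z·W))². -/
lemma aux_sqrt (c x : ℝ) (hc : 0 ≤ c) : c * √x = √(c ^ 2 * x) := by
  rw [Real.sqrt_mul (by positivity), Real.sqrt_sq hc]

open Finset in
lemma aux_tail (N : ℕ) (r : ℝ) (hr : 0 < r) :
    ∑ s ∈ (Icc 1 N).filter (fun s : ℕ => r ≤ (s : ℝ)), (((s : ℝ)) ^ 2)⁻¹ ≤ 2 / r := by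
  have hc : 0 < ⌈r⌉₊ := Nat.ceil_pos.mpr hr
  calc ∑ s ∈ (Icc 1 N).filter (fun s : ℕ => r ≤ (s : ℝ)), (((s : ℝ)) ^ 2)⁻¹
      ≤ ∑ s ∈ Ioo (⌈r⌉₊ - 1) (N + 1), (((s : ℝ)) ^ 2)⁻¹ := by
        apply sum_le_sum_of_subset_of_nonneg
        · intro s hs
          simp only [mem_filter, mem_Icc, mem_Ioo] at hs ⊢
          have := Nat.ceil_le.mpr hs.2
          omega
        · intros; positivity
    _ ≤ 2 / (((⌈r⌉₊ - 1 : ℕ) : ℝ) + 1) := sum_Ioo_inv_sq_le _ _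
    _ ≤ 2 / r := by
        have h : (((⌈r⌉₊ - 1 : ℕ) : ℝ) + 1) = (⌈r⌉₊ : ℝ) := by
          exact_mod_cast Nat.sub_add_cancel hc
        rw [h]
        gcongr
        exact Nat.le_ceil r

open Finset in
lemma aux_count (N : ℕ) (r : ℝ) (hr : 0 ≤ r) :
    (((Icc 1 N).filter (fun s : ℕ => (s : ℝ) ≤ r)).card : ℝ) ≤ r := by
  have : (Icc 1 N).filter (fun s : ℕ => (s : ℝ) ≤ r) ⊆ Icc 1 ⌊r⌋₊ := by
    intro s hs
    simp only [mem_filter, mem_Icc] at hs ⊢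
    exact ⟨hs.1.1, Nat.le_floor hs.2⟩
  have h := card_le_card this
  rw [Nat.card_Icc] at h
  calc _ ≤ ((⌊r⌋₊ : ℕ) : ℝ) := by exact_mod_cast h
    _ ≤ r := Nat.floor_le hr

open Finset in
lemma aux_min (N : ℕ) (P Q : ℝ) (hP : 0 < P) (hQ : 0 < Q) :
    ∑ t ∈ Icc 1 N, min P (Q / (t : ℝ) ^ 2) ≤ 3 * √(P * Q) := by
  set r := √(Q / P) with hr
  have hr0 : 0 < r := Real.sqrt_pos.mpr (by positivity)
  have h1 : P * r = √(P * Q) := by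
    rw [hr, eq_comm, Real.sqrt_eq_iff_mul_self_eq (by positivity) (by positivity)]
    have := Real.mul_self_sqrt (show 0 ≤ Q / P by positivity)
    symm
    calc P * √(Q/P) * (P * √(Q/P)) = P * P * (√(Q/P) * √(Q/P)) := by ring
      _ = P * Q := by rw [this]; field_simp
  have h2 : Q * (2 / r) = 2 * √(P * Q) := by
    rw [← h1]
    have : r * r = Q / P := Real.mul_self_sqrt (show 0 ≤ Q / P by positivity)
    field_simp
    field_simp at this
    nlinarith
  rw [← sum_filter_add_sum_filter_not (Icc 1 N) (fun s : ℕ => (s : ℝ) ≤ r)]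
  have a1 : ∑ t ∈ (Icc 1 N).filter (fun s : ℕ => (s : ℝ) ≤ r), min P (Q / (t : ℝ) ^ 2)
      ≤ P * r := by
    calc _ ≤ ∑ t ∈ (Icc 1 N).filter (fun s : ℕ => (s : ℝ) ≤ r), P :=
          sum_le_sum fun i _ => min_le_left _ _
      _ = P * ((Icc 1 N).filter (fun s : ℕ => (s : ℝ) ≤ r)).card := by
          rw [sum_const, nsmul_eq_mul, mul_comm]
      _ ≤ _ := by gcongr; exact aux_count N r hr0.le
  have a2 : ∑ t ∈ (Icc 1 N).filter (fun s : ℕ => ¬ (s : ℝ) ≤ r), min P (Q / (t : ℝ) ^ 2)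
      ≤ Q * (2 / r) := by
    calc _ ≤ ∑ t ∈ (Icc 1 N).filter (fun s : ℕ => ¬ (s : ℝ) ≤ r), Q * ((t : ℝ) ^ 2)⁻¹ :=
          sum_le_sum fun i _ => min_le_right _ _
      _ ≤ ∑ t ∈ (Icc 1 N).filter (fun s : ℕ => r ≤ (s : ℝ)), Q * ((t : ℝ) ^ 2)⁻¹ := by
          apply sum_le_sum_of_subset_of_nonneg
          · intro s hs
            simp only [mem_filter, not_le] at hs ⊢
            exact ⟨hs.1, hs.2.le⟩
          · intros; positivity
      _ ≤ _ := by
          rw [← mul_sum]; gcongr; exact aux_tail N r hr0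
  linarith

open Finset in
lemma aux_C (N : ℕ) (D E : ℝ) (hD : 0 < D) (hE : 0 < E) :
    ∑ s ∈ Icc 1 N, ∑ t ∈ Icc 1 N,
      (if (t : ℝ) ≤ E * s ∧ (s : ℝ) * t ≤ D then 1 / (s : ℝ) else 0) ≤ 3 * √(E * D) := by
  refine le_trans (sum_le_sum fun s hs => ?_) (aux_min N E D hE hD)
  have hs0 : (0 : ℝ) < s := by exact_mod_cast (mem_Icc.mp hs).1
  have e : (Icc 1 N).filter (fun t : ℕ => (t : ℝ) ≤ E * s ∧ (s : ℝ) * t ≤ D)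
      = (Icc 1 N).filter (fun t : ℕ => (t : ℝ) ≤ min (E * s) (D / s)) := by
    apply filter_congr
    intro t _
    rw [le_min_iff, le_div_iff₀ hs0, mul_comm (t : ℝ)]
  rw [← sum_filter, e, sum_const, nsmul_eq_mul]
  have h := aux_count N (min (E * s) (D / s)) (by positivity)
  calc _ ≤ min (E * s) (D / s) * (1 / (s : ℝ)) := by gcongr
    _ = min (E * s * (1 / (s : ℝ))) (D / s * (1 / (s : ℝ))) :=
        min_mul_of_nonneg _ _ (by positivity)
    _ = _ := by
        congr 1 <;> field_simp

open Finset in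
lemma aux_D (N : ℕ) (D E : ℝ) (hD : 0 < D) (hE : 0 < E) :
    ∑ s ∈ Icc 1 N, ∑ t ∈ Icc 1 N,
      (if (t : ℝ) ≤ E * s ∧ D ≤ (s : ℝ) * t then 1 / ((s : ℝ) ^ 2 * t) else 0)
      ≤ 6 * √(1 / D * E) := by
  rw [sum_comm]
  have key := aux_min N (1 / D) E (by positivity) hE
  have : ∑ t ∈ Icc 1 N, 2 * min (1 / D) (E / (t : ℝ) ^ 2) ≤ 6 * √(1 / D * E) := by
    rw [← mul_sum]; linarith
  refine le_trans (sum_le_sum fun t ht => ?_) this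
  have ht0 : (0 : ℝ) < t := by exact_mod_cast (mem_Icc.mp ht).1
  have e : (Icc 1 N).filter (fun s : ℕ => (t : ℝ) ≤ E * s ∧ D ≤ (s : ℝ) * t)
      = (Icc 1 N).filter (fun s : ℕ => max (t / E) (D / t) ≤ (s : ℝ)) := by
    apply filter_congr
    intro s _
    rw [max_le_iff, div_le_iff₀ ht0, div_le_iff₀ hE, mul_comm E]
  rw [← sum_filter, e]
  have hm : 0 < max (t / E) (D / t) := lt_max_of_lt_left (by positivity)
  have h := aux_tail N (max (t / E) (D / t)) hm
  calc _ = (∑ s ∈ (Icc 1 N).filter (fun s : ℕ => max (t / E) (D / t) ≤ (s : ℝ)),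
              (((s : ℝ)) ^ 2)⁻¹) * (1 / t) := by
        rw [sum_mul]
        refine sum_congr rfl fun s _ => ?_
        rw [one_div, mul_inv, one_div]
    _ ≤ 2 / max (t / E) (D / t) * (1 / t) := by gcongr
    _ ≤ _ := by
        rw [div_mul_div_comm, mul_one, mul_min_of_nonneg _ _ (by norm_num : (0 : ℝ) ≤ 2), le_min_iff]
        constructor
        · rw [div_le_iff₀ (by positivity)]
          have := le_max_right (t / E) (D / t)
          rw [div_le_iff₀ ht0] at this
          calc (2 : ℝ) = 2 * (1 / D) * D := by field_simp
            _ ≤ _ := by gcongr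
        · rw [div_le_iff₀ (by positivity)]
          have := le_max_left (t / E) (D / t)
          calc (2 : ℝ) = 2 * (E / t ^ 2) * (t / E * t) := by field_simp
            _ ≤ _ := by gcongr

open Finset in
lemma aux_half (N : ℕ) (A B C W : ℝ) (hA : 0 < A) (hB : 0 < B) (hC : 0 < C) (hW : 0 < W) :
    ∑ s ∈ Icc 1 N, ∑ t ∈ Icc 1 N,
      (if (t : ℝ) ≤ C / B * s then min (B / (s : ℝ)) (C / t) * min A (W / (s * t)) else 0)
      ≤ 9 * √(A * B * C * W) := by
  have h1 := aux_C N (W / A) (C / B) (by positivity) (by positivity)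
  have h2 := aux_D N (W / A) (C / B) (by positivity) (by positivity)
  have e1 : A * B * √(C / B * (W / A)) = √(A * B * C * W) := by
    rw [aux_sqrt _ _ (show 0 ≤ A * B by positivity)]
    congr 1; field_simp
  have e2 : B * W * √(1 / (W / A) * (C / B)) = √(A * B * C * W) := by
    rw [aux_sqrt _ _ (show 0 ≤ B * W by positivity)]
    congr 1; field_simp
  have h1' := mul_le_mul_of_nonneg_left h1 (show 0 ≤ A * B by positivity)
  have h2' := mul_le_mul_of_nonneg_left h2 (show 0 ≤ B * W by positivity)
  have : 9 * √(A * B * C * W) = A * B * (3 * √(C / B * (W / A)))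
      + B * W * (6 * √(1 / (W / A) * (C / B))) := by
    linear_combination (-3) * e1 + (-6) * e2
  rw [this]
  refine le_trans ?_ (add_le_add h1' h2')
  simp only [mul_sum, ← sum_add_distrib]
  refine sum_le_sum fun s hs => sum_le_sum fun t ht => ?_
  have hs0 : (0 : ℝ) < s := by exact_mod_cast (mem_Icc.mp hs).1
  have ht0 : (0 : ℝ) < t := by exact_mod_cast (mem_Icc.mp ht).1
  by_cases c1 : (t : ℝ) ≤ C / B * s
  · by_cases c2 : (s : ℝ) * t ≤ W / A
    · rw [if_pos c1, if_pos ⟨c1, c2⟩]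
      have : 0 ≤ B * W * (if (t : ℝ) ≤ C / B * s ∧ W / A ≤ (s : ℝ) * t
          then 1 / ((s : ℝ) ^ 2 * t) else 0) := by
        split_ifs <;> positivity
      have : min (B / (s : ℝ)) (C / t) * min A (W / (s * t)) ≤ B / s * A := by
        gcongr
        · exact min_le_left _ _
        · exact min_le_left _ _
      have : B / s * A = A * B * (1 / s) := by ring
      linarith
    · rw [if_pos c1, if_neg (fun h => c2 h.2), if_pos ⟨c1, (not_le.mp c2).le⟩]
      have : min (B / (s : ℝ)) (C / t) * min A (W / (s * t)) ≤ B / s * (W / (s * t)) := by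
        gcongr
        · exact min_le_left _ _
        · exact min_le_right _ _
      have : B / s * (W / (s * t)) = B * W * (1 / ((s : ℝ) ^ 2 * t)) := by field_simp
      linarith
  · rw [if_neg c1, if_neg (fun h => c1 h.1), if_neg (fun h => c1 h.1)]
    simp

open Finset in
lemma aux_full (N : ℕ) (A B C W : ℝ) (hA : 0 < A) (hB : 0 < B) (hC : 0 < C) (hW : 0 < W) :
    ∑ s ∈ Icc 1 N, ∑ t ∈ Icc 1 N, min (B / (s : ℝ)) (C / t) * min A (W / (s * t))
      ≤ 18 * √(A * B * C * W) := by
  have h1 := aux_half N A B C W hA hB hC hW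
  have h2 := aux_half N A C B W hA hC hB hW
  rw [sum_comm, mul_right_comm A C B] at h2
  have : 18 * √(A * B * C * W) = 9 * √(A * B * C * W) + 9 * √(A * B * C * W) := by ring
  rw [this]
  refine le_trans ?_ (add_le_add h1 h2)
  simp only [← sum_add_distrib]
  refine sum_le_sum fun s hs => sum_le_sum fun t ht => ?_
  have hs0 : (0 : ℝ) < s := by exact_mod_cast (mem_Icc.mp hs).1
  have ht0 : (0 : ℝ) < t := by exact_mod_cast (mem_Icc.mp ht).1
  have hn : 0 ≤ min (B / (s : ℝ)) (C / t) * min A (W / (s * t)) := by positivity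
  rw [min_comm (C / (t : ℝ)), mul_comm (t : ℝ) s]
  by_cases c1 : (t : ℝ) ≤ C / B * s
  · rw [if_pos c1]
    split_ifs <;> linarith
  · have c2 : (s : ℝ) ≤ B / C * t := by
      have := (not_le.mp c1).le
      calc (s : ℝ) = B / C * (C / B * s) := by field_simp
        _ ≤ _ := by gcongr
    rw [if_neg c1, if_pos c2]
    linarith

open Finset in
lemma aux_harm (X : ℝ) (hX : 1 ≤ X) : ∑ k ∈ Icc 1 ⌊X⌋₊, 1 / (k : ℝ) ≤ 1 + Real.log X := by
  have h := harmonic_floor_le_one_add_log X hX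
  rw [harmonic_eq_sum_Icc] at h
  push_cast at h
  simpa using h

open Finset in
lemma aux_kl (X Y Z W : ℝ) (hX : 2 ≤ X) (hY : 2 ≤ Y) (hZ : 2 ≤ Z) (hW : 2 ≤ W) (N : ℕ) :
    ∑ k ∈ Icc 1 ⌊X⌋₊, ∑ l ∈ Icc 1 ⌊X⌋₊, ∑ s ∈ Icc 1 N, ∑ t ∈ Icc 1 N,
      min (Y / (k : ℝ) / s) (Z / (l : ℝ) / t) * min (X / (k * l : ℝ)) (W / (s * t))
      ≤ 72 * √(X * Y * Z * W) * Real.log (X * Y * Z * W) ^ 2 := by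
  have hstep : ∀ k ∈ Icc 1 ⌊X⌋₊, ∀ l ∈ Icc 1 ⌊X⌋₊, ∑ s ∈ Icc 1 N, ∑ t ∈ Icc 1 N,
      min (Y / (k : ℝ) / s) (Z / (l : ℝ) / t) * min (X / (k * l : ℝ)) (W / (s * t))
      ≤ 18 * √(X * Y * Z * W) * (1 / (k : ℝ) * (1 / (l : ℝ))) := by
    intro k hk l hl
    have hk0 : (0 : ℝ) < k := by exact_mod_cast (mem_Icc.mp hk).1
    have hl0 : (0 : ℝ) < l := by exact_mod_cast (mem_Icc.mp hl).1
    refine (aux_full N (X / (k * l)) (Y / k) (Z / l) W (by positivity) (by positivity)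
      (by positivity) (by positivity)).trans (le_of_eq ?_)
    have : X / (k * l) * (Y / k) * (Z / l) * W
        = X * Y * Z * W * (1 / (k : ℝ) * (1 / (l : ℝ))) ^ 2 := by field_simp
    rw [this, Real.sqrt_mul (by positivity), Real.sqrt_sq (by positivity)]
    ring
  refine (sum_le_sum fun k hk => sum_le_sum fun l hl => hstep k hk l hl).trans ?_
  simp only [← mul_sum, ← sum_mul]
  have hh := aux_harm X (by linarith)
  have hh0 : 0 ≤ ∑ k ∈ Icc 1 ⌊X⌋₊, 1 / (k : ℝ) := sum_nonneg fun _ _ => by positivity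
  have hYZ : 8 ≤ Y * Z * W := by
    have : 4 ≤ Y * Z := by nlinarith
    nlinarith
  have hprod : X * 8 ≤ X * Y * Z * W := by nlinarith
  have hlX : Real.log X ≤ Real.log (X * Y * Z * W) :=
    Real.log_le_log (by linarith) (by linarith)
  have hl1 : 1 ≤ Real.log (X * Y * Z * W) := by
    rw [Real.le_log_iff_exp_le (by linarith)]
    have := Real.exp_one_lt_d9
    linarith
  have hS : ∑ k ∈ Icc 1 ⌊X⌋₊, 1 / (k : ℝ) ≤ 2 * Real.log (X * Y * Z * W) := by linarith
  have : (∑ k ∈ Icc 1 ⌊X⌋₊, 1 / (k : ℝ)) * (∑ k ∈ Icc 1 ⌊X⌋₊, 1 / (k : ℝ))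
      ≤ (2 * Real.log (X * Y * Z * W)) * (2 * Real.log (X * Y * Z * W)) := by gcongr
  calc _ ≤ 18 * √(X * Y * Z * W) *
        ((2 * Real.log (X * Y * Z * W)) * (2 * Real.log (X * Y * Z * W))) := by gcongr
    _ = _ := by ring

/-- There is an absolute constant `C > 0` such that for all reals
`X, Y, Z, W ≥ 2`, the number of sextuples of positive integers `(k, ℓ, m, n, s, t)`
with `kℓm ≤ X`, `kns ≤ Y`, `ℓnt ≤ Z`, `mst ≤ W` is at most
`C·(XYZW)^{1/2}·(log(XYZW))²`. -/
theorem stmt_4 :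
    ∃ C : ℝ, 0 < C ∧ ∀ X Y Z W : ℝ, 2 ≤ X → 2 ≤ Y → 2 ≤ Z → 2 ≤ W →
      (({v : ℕ × ℕ × ℕ × ℕ × ℕ × ℕ |
          0 < v.1 ∧ 0 < v.2.1 ∧ 0 < v.2.2.1 ∧ 0 < v.2.2.2.1 ∧ 0 < v.2.2.2.2.1 ∧
          0 < v.2.2.2.2.2 ∧
          ((v.1 * v.2.1 * v.2.2.1 : ℕ) : ℝ) ≤ X ∧
          ((v.1 * v.2.2.2.1 * v.2.2.2.2.1 : ℕ) : ℝ) ≤ Y ∧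
          ((v.2.1 * v.2.2.2.1 * v.2.2.2.2.2 : ℕ) : ℝ) ≤ Z ∧
          ((v.2.2.1 * v.2.2.2.2.1 * v.2.2.2.2.2 : ℕ) : ℝ) ≤ W}.ncard : ℝ)) ≤
        C * (X * Y * Z * W) ^ ((1 : ℝ) / 2) * Real.log (X * Y * Z * W) ^ 2 := by
  refine ⟨72, by norm_num, fun X Y Z W hX hY hZ hW => ?_⟩
  rw [← Real.sqrt_eq_rpow]
  refine le_trans ?_ (aux_kl X Y Z W hX hY hZ hW (⌊Y⌋₊ + ⌊Z⌋₊))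
  set K := Finset.Icc 1 ⌊X⌋₊ with hK
  set S := Finset.Icc 1 (⌊Y⌋₊ + ⌊Z⌋₊) with hS
  let F : (ℕ × ℕ × ℕ × ℕ) → Finset (ℕ × ℕ) := fun q =>
    Finset.Icc 1 ⌊min (Y / (q.1 : ℝ) / q.2.2.1) (Z / (q.2.1 : ℝ) / q.2.2.2)⌋₊ ×ˢ
    Finset.Icc 1 ⌊min (X / (q.1 * q.2.1 : ℝ)) (W / (q.2.2.1 * q.2.2.2))⌋₊
  let T : Finset (Σ _ : ℕ × ℕ × ℕ × ℕ, ℕ × ℕ) := (K ×ˢ K ×ˢ S ×ˢ S).sigma F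
  have hcard : (T.card : ℝ) ≤ ∑ k ∈ K, ∑ l ∈ K, ∑ s ∈ S, ∑ t ∈ S,
      min (Y / (k : ℝ) / s) (Z / (l : ℝ) / t) * min (X / (k * l : ℝ)) (W / (s * t)) := by
    simp only [T, Finset.card_sigma, Finset.sum_product]
    push_cast
    refine Finset.sum_le_sum fun k _ => Finset.sum_le_sum fun l _ =>
      Finset.sum_le_sum fun s _ => Finset.sum_le_sum fun t _ => ?_
    simp only [F, Finset.card_product, Nat.card_Icc, Nat.add_sub_cancel]
    push_cast
    gcongr
    · exact Nat.floor_le (by positivity)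
    · exact Nat.floor_le (by positivity)
  refine le_trans ?_ hcard
  rw [← Set.ncard_coe_finset]
  refine Nat.cast_le.mpr (Set.ncard_le_ncard_of_injOn
    (fun v => ⟨(v.1, v.2.1, v.2.2.2.2.1, v.2.2.2.2.2), (v.2.2.2.1, v.2.2.1)⟩) ?_ ?_
    (Finset.finite_toSet _))
  · rintro ⟨k, l, m, n, s, t⟩ ⟨hk, hl, hm, hn, hs, ht, h1, h2, h3, h4⟩
    dsimp only at hk hl hm hn hs ht h1 h2 h3 h4
    have g1 := Nat.le_floor h1
    have g2 := Nat.le_floor h2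
    have g3 := Nat.le_floor h3
    have k1 : k ≤ k * l * m := by rw [mul_assoc]; exact Nat.le_mul_of_pos_right _ (by positivity)
    have l1 : l ≤ k * l * m := by
      rw [mul_comm k, mul_assoc]; exact Nat.le_mul_of_pos_right _ (by positivity)
    have s1 : s ≤ k * n * s := Nat.le_mul_of_pos_left _ (by positivity)
    have t1 : t ≤ l * n * t := Nat.le_mul_of_pos_left _ (by positivity)
    push_cast at h1 h2 h3 h4
    have hk' : (0 : ℝ) < k := by exact_mod_cast hk
    have hl' : (0 : ℝ) < l := by exact_mod_cast hl
    have hs' : (0 : ℝ) < s := by exact_mod_cast hs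
    have ht' : (0 : ℝ) < t := by exact_mod_cast ht
    simp only [T, F, K, S, Finset.mem_coe, Finset.mem_sigma, Finset.mem_product, Finset.mem_Icc]
    refine ⟨⟨⟨hk, k1.trans g1⟩, ⟨hl, l1.trans g1⟩, ⟨hs, by omega⟩, ⟨ht, by omega⟩⟩,
      ⟨hn, Nat.le_floor (le_min ?_ ?_)⟩, ⟨hm, Nat.le_floor (le_min ?_ ?_)⟩⟩
    · rw [le_div_iff₀ hs', le_div_iff₀ hk']; linarith
    · rw [le_div_iff₀ ht', le_div_iff₀ hl']; linarith
    · rw [le_div_iff₀ (by positivity)]; linarith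
    · rw [le_div_iff₀ (by positivity)]; linarith
  · rintro ⟨k, l, m, n, s, t⟩ _ ⟨k', l', m', n', s', t'⟩ _ h
    simp only [Sigma.mk.injEq, Prod.mk.injEq, heq_eq_eq] at h ⊢
    tauto
end

section
/- There exist constants c₁, c₂ > 0 and B₀ ≥ 3 such that for all real B ≥ B₀, the number of triples (a₁, a₂, a₃) of nonzero integers with |aᵢ| ≤ B for all i, gcd(a₁,a₂,a₃) = 1, and such that a₁·a₂·a₃ = 2·r³ for some rational number r, lies between c₁·B·(log B)⁶ and c₂·B·(log B)⁶. -/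
namespace CubicCount

open Finset

def M1 (y : Fin 6 → ℕ) : ℕ := (y 0 * y 1) ^ 2 * (y 2 * y 4)
def M2 (y : Fin 6 → ℕ) : ℕ := (y 2 * y 3) ^ 2 * (y 0 * y 5)
def M3 (y : Fin 6 → ℕ) : ℕ := (y 4 * y 5) ^ 2 * (y 1 * y 3)

noncomputable def Xr (B : ℝ) (m : ℕ) : ℝ := (B / m) ^ (1 / 3 : ℝ)
noncomputable def X (B : ℝ) (m : ℕ) : ℕ := ⌊Xr B m⌋₊

lemma Xr_nonneg {B : ℝ} (hB : 0 ≤ B) (m : ℕ) : 0 ≤ Xr B m := by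
  unfold Xr; positivity

lemma Xr_cube {B : ℝ} (hB : 0 ≤ B) (m : ℕ) : Xr B m ^ 3 = B / m := by
  unfold Xr
  rw [← Real.rpow_natCast, ← Real.rpow_mul (by positivity)]
  norm_num

lemma le_X_iff {B : ℝ} (hB : 0 ≤ B) {m : ℕ} (hm : 0 < m) (x : ℕ) :
    x ≤ X B m ↔ ((x ^ 3 * m : ℕ) : ℝ) ≤ B := by
  unfold X
  rw [Nat.le_floor_iff (Xr_nonneg hB m),
    ← pow_le_pow_iff_left₀ (by positivity) (Xr_nonneg hB m) (by norm_num : 3 ≠ 0),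
    Xr_cube hB, le_div_iff₀ (by exact_mod_cast hm)]
  push_cast
  rfl

lemma Xr_prod {B : ℝ} (hB : 0 ≤ B) (y : Fin 6 → ℕ) (hy : ∀ k, 0 < y k) :
    Xr B (M1 y) * Xr B (M2 y) * Xr B (M3 y) = B * ∏ k, (1 / (y k : ℝ)) := by
  have h : (Xr B (M1 y) * Xr B (M2 y) * Xr B (M3 y)) ^ 3 = (B * ∏ k, (1 / (y k : ℝ))) ^ 3 := by
    rw [mul_pow, mul_pow, Xr_cube hB, Xr_cube hB, Xr_cube hB]
    have := fun k => (Nat.cast_pos (α := ℝ)).2 (hy k)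
    have h0 := (this 0).ne'
    have h1 := (this 1).ne'
    have h2 := (this 2).ne'
    have h3 := (this 3).ne'
    have h4 := (this 4).ne'
    have h5 := (this 5).ne'
    simp only [Fin.prod_univ_six, M1, M2, M3]
    push_cast
    field_simp
  refine (pow_left_inj₀ ?_ ?_ (by norm_num : 3 ≠ 0)).1 h
  · have := Xr_nonneg hB (M1 y)
    have := Xr_nonneg hB (M2 y)
    have := Xr_nonneg hB (M3 y)
    positivity
  · exact mul_nonneg hB (prod_nonneg fun _ _ => by positivity)

noncomputable def Om (B : ℝ) (S : Fin 6 → Finset ℕ) (d1 d2 d3 : ℕ) :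
    Finset (Σ _ : Fin 6 → ℕ, ℕ × ℕ × ℕ) :=
  (Fintype.piFinset S).sigma fun y =>
    (Ioc 0 (X B (M1 y))).filter (d1 ∣ ·) ×ˢ
      ((Ioc 0 (X B (M2 y))).filter (d2 ∣ ·) ×ˢ (Ioc 0 (X B (M3 y))).filter (d3 ∣ ·))

lemma card_Om (B : ℝ) (S : Fin 6 → Finset ℕ) (d1 d2 d3 : ℕ) :
    (Om B S d1 d2 d3).card = ∑ y ∈ Fintype.piFinset S,
      (X B (M1 y) / d1) * ((X B (M2 y) / d2) * (X B (M3 y) / d3)) := by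
  simp [Om, card_sigma, card_product, Nat.Ioc_filter_dvd_card_eq_div]

lemma sum_weights (S : Fin 6 → Finset ℕ) :
    ∑ y ∈ Fintype.piFinset S, ∏ k, (1 / (y k : ℝ)) = ∏ k, ∑ n ∈ S k, (1 / (n : ℝ)) :=
  (Finset.prod_univ_sum S (fun _ n => (1 / (n : ℝ)))).symm

lemma card_Om_le {B : ℝ} (hB : 0 ≤ B) (S : Fin 6 → Finset ℕ) (hS : ∀ k, ∀ n ∈ S k, 0 < n)
    (d1 d2 d3 : ℕ) :
    ((Om B S d1 d2 d3).card : ℝ) ≤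
      B * (∏ k, ∑ n ∈ S k, (1 / (n : ℝ))) / (d1 * d2 * d3) := by
  rw [card_Om, ← sum_weights, mul_sum, sum_div]
  push_cast
  refine sum_le_sum fun y hy => ?_
  rw [Fintype.mem_piFinset] at hy
  rw [← Xr_prod hB y (fun k => hS k _ (hy k))]
  have key : ∀ m d : ℕ, ((X B m / d : ℕ) : ℝ) ≤ Xr B m / d := fun m d =>
    Nat.cast_div_le.trans (by
      gcongr
      exact Nat.floor_le (Xr_nonneg hB m))
  calc _ ≤ (Xr B (M1 y) / d1) * ((Xr B (M2 y) / d2) * (Xr B (M3 y) / d3)) := by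
        have := Xr_nonneg hB (M1 y)
        have := Xr_nonneg hB (M2 y)
        gcongr <;> apply key
    _ = _ := by
        rw [div_mul_div_comm, div_mul_div_comm]; ring

lemma card_Om_ge {B : ℝ} (hB : 0 ≤ B) (S : Fin 6 → Finset ℕ) (hS : ∀ k, ∀ n ∈ S k, 0 < n)
    (N : ℕ) (hN : ∀ k, ∀ n ∈ S k, n ≤ N) (hNB : 1000 * (N : ℝ) ^ 6 ≤ B) :
    (729 / 1000) * (B * (∏ k, ∑ n ∈ S k, (1 / (n : ℝ)))) ≤ ((Om B S 1 1 1).card : ℝ) := by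
  rw [card_Om, ← sum_weights, mul_sum, mul_sum]
  push_cast
  refine sum_le_sum fun y hy => ?_
  rw [Fintype.mem_piFinset] at hy
  have hp := fun k => hS k _ (hy k)
  have hn := fun k => hN k _ (hy k)
  rw [← Xr_prod hB y hp]
  have key : ∀ m : ℕ, 0 < m → m ≤ N ^ 6 → 9 / 10 * Xr B m ≤ (X B m : ℝ) := by
    intro m h0 hm
    have h10 : 10 ≤ X B m := by
      rw [le_X_iff hB h0]
      refine le_trans ?_ hNB
      push_cast
      have : (m : ℝ) ≤ (N : ℝ) ^ 6 := by exact_mod_cast hm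
      linarith
    have h10' : (10 : ℝ) ≤ X B m := by exact_mod_cast h10
    have := Nat.lt_floor_add_one (Xr B m)
    unfold X at *
    linarith
  have b1 : M1 y ≤ N ^ 6 := by
    calc M1 y ≤ (N * N) ^ 2 * (N * N) := by unfold M1; gcongr <;> apply hn
      _ = _ := by ring
  have b2 : M2 y ≤ N ^ 6 := by
    calc M2 y ≤ (N * N) ^ 2 * (N * N) := by unfold M2; gcongr <;> apply hn
      _ = _ := by ring
  have b3 : M3 y ≤ N ^ 6 := by
    calc M3 y ≤ (N * N) ^ 2 * (N * N) := by unfold M3; gcongr <;> apply hn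
      _ = _ := by ring
  have p0 := hp 0
  have p1 := hp 1
  have p2 := hp 2
  have p3 := hp 3
  have p4 := hp 4
  have p5 := hp 5
  have k1 := key (M1 y) (by unfold M1; positivity) b1
  have k2 := key (M2 y) (by unfold M2; positivity) b2
  have k3 := key (M3 y) (by unfold M3; positivity) b3
  have := Xr_nonneg hB (M1 y)
  have := Xr_nonneg hB (M2 y)
  have := Xr_nonneg hB (M3 y)
  simp only [Nat.div_one]
  calc _ = (9 / 10 * Xr B (M1 y)) * ((9 / 10 * Xr B (M2 y)) * (9 / 10 * Xr B (M3 y))) := by ring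
    _ ≤ _ := by gcongr

/-! ### decomposition -/

def Dec (a b c : ℕ) : Prop :=
  ∃ (y : Fin 6 → ℕ) (x1 x2 x3 : ℕ), a = x1 ^ 3 * M1 y ∧ b = x2 ^ 3 * M2 y ∧ c = x3 ^ 3 * M3 y

lemma Dec.swap12 {a b c : ℕ} (h : Dec a b c) : Dec b a c := by
  obtain ⟨y, x1, x2, x3, rfl, rfl, rfl⟩ := h
  refine ⟨![y 2, y 3, y 0, y 1, y 5, y 4], x2, x1, x3, ?_, ?_, ?_⟩ <;>
    simp [M1, M2, M3] <;> ring_nf <;> simp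

lemma Dec.swap23 {a b c : ℕ} (h : Dec a b c) : Dec a c b := by
  obtain ⟨y, x1, x2, x3, rfl, rfl, rfl⟩ := h
  refine ⟨![y 1, y 0, y 4, y 5, y 2, y 3], x1, x3, x2, ?_, ?_, ?_⟩ <;>
    simp [M1, M2, M3] <;> ring_nf <;> simp

lemma Dec.step {a b c : ℕ} (h : Dec a b c) (p i j : ℕ) (hij : i + j = 3) :
    Dec (p ^ i * a) (p ^ j * b) c := by
  obtain ⟨y, x1, x2, x3, rfl, rfl, rfl⟩ := h
  have hi : i ≤ 3 := by omega
  obtain rfl : j = 3 - i := by omega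
  interval_cases i
  · refine ⟨y, x1, p * x2, x3, ?_, ?_, ?_⟩ <;> simp [M1, M2, M3] <;> ring
  · refine ⟨![y 0, y 1, p * y 2, y 3, y 4, y 5], x1, x2, x3, ?_, ?_, ?_⟩ <;>
      simp [M1, M2, M3] <;> ring
  · refine ⟨![p * y 0, y 1, y 2, y 3, y 4, y 5], x1, x2, x3, ?_, ?_, ?_⟩ <;>
      simp [M1, M2, M3] <;> ring
  · refine ⟨y, p * x1, x2, x3, ?_, ?_, ?_⟩ <;> simp [M1, M2, M3] <;> ring

lemma dec_aux {a b c p r : ℕ} (hp : p.Prime) (hr : 0 < r) (h : a * b * c = (p * r) ^ 3)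
    (hc : ¬ p ∣ c) :
    ∃ i j a' b', i + j = 3 ∧ a = p ^ i * a' ∧ b = p ^ j * b' ∧ a' * b' * c = r ^ 3 := by
  have h1 : p ^ 3 ∣ a * b := by
    have : p ^ 3 ∣ a * b * c := by rw [h, mul_pow]; exact dvd_mul_right _ _
    exact (Nat.Coprime.pow_left 3 ((Nat.Prime.coprime_iff_not_dvd hp).2 hc)).dvd_of_dvd_mul_right this
  obtain ⟨k1, k2, ⟨a', rfl⟩, ⟨b', rfl⟩, hk⟩ := (Nat.dvd_mul).1 h1
  obtain ⟨i, hi, rfl⟩ := (Nat.dvd_prime_pow hp).1 (Dvd.intro _ hk)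
  have hk2 : k2 = p ^ (3 - i) := by
    have : p ^ i * k2 = p ^ i * p ^ (3 - i) := by
      rw [hk, ← pow_add]; congr 1; omega
    exact Nat.eq_of_mul_eq_mul_left (pow_pos hp.pos _) this
  subst hk2
  refine ⟨i, 3 - i, a', b', by omega, rfl, rfl, ?_⟩
  have : p ^ 3 * (a' * b' * c) = p ^ 3 * r ^ 3 := by
    rw [← mul_pow, ← h]
    calc _ = (p ^ i * p ^ (3 - i)) * (a' * b' * c) := by rw [hk]
      _ = _ := by ring
  exact Nat.eq_of_mul_eq_mul_left (pow_pos hp.pos _) this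

lemma dec_exists (r : ℕ) : 0 < r → ∀ a b c : ℕ, a * b * c = r ^ 3 → 
    (∀ p : ℕ, p.Prime → ¬ (p ∣ a ∧ p ∣ b ∧ p ∣ c)) → Dec a b c := by
  induction r using Nat.strong_induction_on with
  | _ r ih =>
    intro hr a b c h hg
    by_cases hr1 : r = 1
    · subst hr1
      have h' : a * b * c = 1 := by simpa using h
      have hc := Nat.eq_one_of_mul_eq_one_left h'
      have hab := Nat.eq_one_of_mul_eq_one_right h'
      have ha := Nat.eq_one_of_mul_eq_one_right hab
      have hb := Nat.eq_one_of_mul_eq_one_left hab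
      exact ⟨fun _ => 1, 1, 1, 1, by simp [M1, ha], by simp [M2, hb], by simp [M3, hc]⟩
    · obtain ⟨p, hp, s, rfl⟩ := Nat.exists_prime_and_dvd hr1
      have hs : 0 < s := Nat.pos_of_mul_pos_left hr
      have hlt : s < p * s := by
        have := hp.two_le
        nlinarith
      have hgp := hg p hp
      by_cases hc : p ∣ c
      · by_cases hb : p ∣ b
        · have ha : ¬ p ∣ a := fun ha => hgp ⟨ha, hb, hc⟩
          obtain ⟨i, j, b', c', hij, rfl, rfl, h'⟩ :=
            dec_aux (a := b) (b := c) (c := a) hp hs (by rw [← h]; ring) ha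
          have hd := ih s hlt hs b' c' a h' (fun q hq hh => hg q hq
            ⟨hh.2.2, hh.1.mul_left _, hh.2.1.mul_left _⟩)
          exact (hd.step p i j hij).swap23.swap12
        · obtain ⟨i, j, a', c', hij, rfl, rfl, h'⟩ :=
            dec_aux (a := a) (b := c) (c := b) hp hs (by rw [← h]; ring) hb
          have hd := ih s hlt hs a' c' b h' (fun q hq hh => hg q hq
            ⟨hh.1.mul_left _, hh.2.2, hh.2.1.mul_left _⟩)
          exact (hd.step p i j hij).swap23
      · obtain ⟨i, j, a', b', hij, rfl, rfl, h'⟩ := dec_aux hp hs h hc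
        have hd := ih s hlt hs a' b' c h' (fun q hq hh => hg q hq
            ⟨hh.1.mul_left _, hh.2.1.mul_left _, hh.2.2⟩)
        exact hd.step p i j hij

end CubicCount
namespace CubicCount
open Finset
/-! ### upper bound -/

def A (B : ℝ) : Set (ℤ × ℤ × ℤ) :=
  {t : ℤ × ℤ × ℤ | t.1 ≠ 0 ∧ t.2.1 ≠ 0 ∧ t.2.2 ≠ 0 ∧
          |(t.1 : ℝ)| ≤ B ∧ |(t.2.1 : ℝ)| ≤ B ∧ |(t.2.2 : ℝ)| ≤ B ∧
          Int.gcd (Int.gcd t.1 t.2.1) t.2.2 = 1 ∧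
          ∃ r : ℚ, ((t.1 : ℚ) * (t.2.1 : ℚ) * (t.2.2 : ℚ)) = 2 * r ^ 3}

lemma int_of_rat {n : ℤ} {r : ℚ} (h : (n : ℚ) = 2 * r ^ 3) : ∃ m : ℤ, n = 2 * m ^ 3 := by
  have h1 : ((4 * n : ℤ) : ℚ) = (2 * r) ^ 3 := by push_cast; rw [h]; ring
  have h2 : (2 * r).den ^ 3 = 1 := by
    rw [← Rat.den_pow, ← h1]; exact Rat.den_intCast _
  have h3 : (2 * r).den = 1 := by
    simpa using h2
  have h4 : ((2 * r).num : ℚ) = 2 * r := by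
    rw [Rat.den_eq_one_iff] at h3; exact h3
  rw [← h4] at h1
  have h5 : 4 * n = (2 * r).num ^ 3 := by exact_mod_cast h1
  have h6 : (2 : ℤ) ∣ (2 * r).num := by
    apply Int.prime_two.dvd_of_dvd_pow (n := 3)
    rw [← h5]; omega
  obtain ⟨m, hm⟩ := h6
  rw [hm] at h5
  exact ⟨m, by ring_nf at h5 ⊢; omega⟩

lemma halve {a b c m : ℕ} (h : a * b * c = 2 * m ^ 3) :
    ∃ e1 e2 e3 a' b' c' : ℕ, (e1 = 1 ∨ e1 = 2) ∧ (e2 = 1 ∨ e2 = 2) ∧ (e3 = 1 ∨ e3 = 2) ∧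
      a = e1 * a' ∧ b = e2 * b' ∧ c = e3 * c' ∧ a' * b' * c' = m ^ 3 := by
  have h2 : 2 ∣ a * b * c := by rw [h]; exact dvd_mul_right _ _
  rcases (Nat.prime_two.dvd_mul).1 h2 with h3 | ⟨c', rfl⟩
  · rcases (Nat.prime_two.dvd_mul).1 h3 with ⟨a', rfl⟩ | ⟨b', rfl⟩
    · exact ⟨2, 1, 1, a', b, c, by simp, by simp, by simp, rfl, by simp, by simp, by
        apply Nat.eq_of_mul_eq_mul_left (by norm_num : 0 < 2); rw [← h]; ring⟩
    · exact ⟨1, 2, 1, a, b', c, by simp, by simp, by simp, by simp, rfl, by simp, by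
        apply Nat.eq_of_mul_eq_mul_left (by norm_num : 0 < 2); rw [← h]; ring⟩
  · exact ⟨1, 1, 2, a, b, c', by simp, by simp, by simp, by simp, by simp, rfl, by
        apply Nat.eq_of_mul_eq_mul_left (by norm_num : 0 < 2); rw [← h]; ring⟩

def mults : Finset ℤ := {1, -1, 2, -2}

lemma mults_mem {a : ℤ} {e n : ℕ} (he : e = 1 ∨ e = 2) (h : a.natAbs = e * n) :
    ∃ c ∈ mults, a = c * (n : ℤ) := by
  rcases he with rfl | rfl <;> rcases Int.natAbs_eq a with h' | h' <;> rw [h] at h'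
  · exact ⟨1, by decide, by rw [h']; push_cast; ring⟩
  · exact ⟨-1, by decide, by rw [h']; push_cast; ring⟩
  · exact ⟨2, by decide, by rw [h']; push_cast; ring⟩
  · exact ⟨-2, by decide, by rw [h']; push_cast; ring⟩

def G (q : (ℤ × ℤ × ℤ) × (Σ _ : Fin 6 → ℕ, ℕ × ℕ × ℕ)) : ℤ × ℤ × ℤ :=
  (q.1.1 * ((q.2.2.1 ^ 3 * M1 q.2.1 : ℕ) : ℤ),
   q.1.2.1 * ((q.2.2.2.1 ^ 3 * M2 q.2.1 : ℕ) : ℤ),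
   q.1.2.2 * ((q.2.2.2.2 ^ 3 * M3 q.2.1 : ℕ) : ℤ))

lemma gcd_iff (a b c : ℤ) : Int.gcd (Int.gcd a b) c = 1 ↔
    ∀ p : ℕ, p.Prime → ¬ (p ∣ a.natAbs ∧ p ∣ b.natAbs ∧ p ∣ c.natAbs) := by
  have : Int.gcd (Int.gcd a b) c = Nat.gcd (Nat.gcd a.natAbs b.natAbs) c.natAbs := rfl
  rw [this]
  constructor
  · intro h p hp hh
    have := Nat.dvd_gcd (Nat.dvd_gcd hh.1 hh.2.1) hh.2.2
    rw [h] at this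
    exact hp.one_lt.ne' (Nat.dvd_one.1 this)
  · intro h
    by_contra hne
    obtain ⟨p, hp, hd⟩ := Nat.exists_prime_and_dvd hne
    exact h p hp ⟨(hd.trans (Nat.gcd_dvd_left _ _)).trans (Nat.gcd_dvd_left _ _),
      (hd.trans (Nat.gcd_dvd_left _ _)).trans (Nat.gcd_dvd_right _ _),
      hd.trans (Nat.gcd_dvd_right _ _)⟩

noncomputable def U (B : ℝ) : Finset ((ℤ × ℤ × ℤ) × (Σ _ : Fin 6 → ℕ, ℕ × ℕ × ℕ)) :=
  (mults ×ˢ mults ×ˢ mults) ×ˢ Om B (fun _ => Icc 1 ⌊B⌋₊) 1 1 1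

lemma nat_le_of_abs {B : ℝ} {a : ℤ} {e n : ℕ} (he : e = 1 ∨ e = 2) (h : a.natAbs = e * n)
    (ha : |(a : ℝ)| ≤ B) : (n : ℝ) ≤ B := by
  refine le_trans ?_ ha
  rw [← Int.cast_abs, Int.abs_eq_natAbs, h]
  push_cast
  rcases he with rfl | rfl <;> push_cast <;> nlinarith [Nat.cast_nonneg (α := ℝ) n]

lemma A_subset {B : ℝ} (hB : 0 ≤ B) : A B ⊆ ((U B).image G : Finset (ℤ × ℤ × ℤ)) := by
  rintro ⟨a, b, c⟩ ⟨ha, hb, hc, hab, hbb, hcb, hg, r, hr⟩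
  simp only at *
  obtain ⟨m, hm⟩ := int_of_rat (n := a * b * c) (r := r) (by push_cast; exact hr)
  have hm' : a.natAbs * b.natAbs * c.natAbs = 2 * m.natAbs ^ 3 := by
    rw [← Int.natAbs_mul, ← Int.natAbs_mul, hm, Int.natAbs_mul, Int.natAbs_pow]; rfl
  have hm0 : 0 < m.natAbs := by
    rw [Int.natAbs_pos]
    rintro rfl
    have : a * b * c ≠ 0 := mul_ne_zero (mul_ne_zero ha hb) hc
    exact this (by rw [hm]; norm_num)
  obtain ⟨e1, e2, e3, a', b', c', he1, he2, he3, h1, h2, h3, h⟩ := halve hm'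
  rw [gcd_iff] at hg
  have hd := dec_exists m.natAbs hm0 a' b' c' h (fun p hp hh => hg p hp
    ⟨h1 ▸ hh.1.mul_left _, h2 ▸ hh.2.1.mul_left _, h3 ▸ hh.2.2.mul_left _⟩)
  have hna := nat_le_of_abs he1 h1 hab
  have hnb := nat_le_of_abs he2 h2 hbb
  have hnc := nat_le_of_abs he3 h3 hcb
  obtain ⟨c1, hc1, rfl⟩ := mults_mem he1 h1
  obtain ⟨c2, hc2, rfl⟩ := mults_mem he2 h2
  obtain ⟨c3, hc3, rfl⟩ := mults_mem he3 h3
  obtain ⟨y, x1, x2, x3, rfl, rfl, rfl⟩ := hd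
  have hpa : 0 < x1 ^ 3 * M1 y := Nat.pos_of_ne_zero fun h0 => by simp [h0] at ha
  have hpb : 0 < x2 ^ 3 * M2 y := Nat.pos_of_ne_zero fun h0 => by simp [h0] at hb
  have hpc : 0 < x3 ^ 3 * M3 y := Nat.pos_of_ne_zero fun h0 => by simp [h0] at hc
  have hx1 : 0 < x1 := Nat.pos_of_ne_zero fun h0 => by simp [h0] at hpa
  have hx2 : 0 < x2 := Nat.pos_of_ne_zero fun h0 => by simp [h0] at hpb
  have hx3 : 0 < x3 := Nat.pos_of_ne_zero fun h0 => by simp [h0] at hpc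
  have hM1 : 0 < M1 y := Nat.pos_of_ne_zero fun h0 => by simp [h0] at hpa
  have hM2 : 0 < M2 y := Nat.pos_of_ne_zero fun h0 => by simp [h0] at hpb
  have hM3 : 0 < M3 y := Nat.pos_of_ne_zero fun h0 => by simp [h0] at hpc
  simp only [coe_image, Set.mem_image, mem_coe]
  refine ⟨((c1, c2, c3), ⟨y, x1, x2, x3⟩), ?_, rfl⟩
  simp only [U, Om, mem_product, mem_sigma, mem_filter, one_dvd, and_true, mem_Ioc,
    Fintype.mem_piFinset, mem_Icc]
  refine ⟨⟨hc1, hc2, hc3⟩, ?_, ⟨hx1, (le_X_iff hB hM1 x1).2 hna⟩,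
    ⟨hx2, (le_X_iff hB hM2 x2).2 hnb⟩, ⟨hx3, (le_X_iff hB hM3 x3).2 hnc⟩⟩
  have aux : ∀ d n : ℕ, 0 < n → (n : ℝ) ≤ B → d ∣ n → 1 ≤ d ∧ d ≤ ⌊B⌋₊ := fun d n hn hnB hd =>
    ⟨Nat.pos_of_dvd_of_pos hd hn, (Nat.le_of_dvd hn hd).trans (Nat.le_floor hnB)⟩
  have d0 : y 0 ∣ x1 ^ 3 * M1 y := ⟨x1 ^ 3 * (y 0 * y 1 ^ 2 * (y 2 * y 4)), by unfold M1; ring⟩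
  have d1 : y 1 ∣ x1 ^ 3 * M1 y := ⟨x1 ^ 3 * (y 0 ^ 2 * y 1 * (y 2 * y 4)), by unfold M1; ring⟩
  have d2 : y 2 ∣ x1 ^ 3 * M1 y := ⟨x1 ^ 3 * ((y 0 * y 1) ^ 2 * y 4), by unfold M1; ring⟩
  have d4 : y 4 ∣ x1 ^ 3 * M1 y := ⟨x1 ^ 3 * ((y 0 * y 1) ^ 2 * y 2), by unfold M1; ring⟩
  have d3 : y 3 ∣ x3 ^ 3 * M3 y := ⟨x3 ^ 3 * ((y 4 * y 5) ^ 2 * y 1), by unfold M3; ring⟩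
  have d5 : y 5 ∣ x2 ^ 3 * M2 y := ⟨x2 ^ 3 * ((y 2 * y 3) ^ 2 * y 0), by unfold M2; ring⟩
  intro k
  fin_cases k
  · exact aux _ _ hpa hna d0
  · exact aux _ _ hpa hna d1
  · exact aux _ _ hpa hna d2
  · exact aux _ _ hpc hnc d3
  · exact aux _ _ hpa hna d4
  · exact aux _ _ hpb hnb d5

lemma A_finite {B : ℝ} (hB : 0 ≤ B) : (A B).Finite := (Finset.finite_toSet _).subset (A_subset hB)

lemma A_upper {B : ℝ} (hB : 3 ≤ B) : ((A B).ncard : ℝ) ≤ (64 * 2 ^ 6) * B * Real.log B ^ 6 := by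
  have hB0 : 0 ≤ B := by linarith
  have h1 : (A B).ncard ≤ 64 * (Om B (fun _ => Icc 1 ⌊B⌋₊) 1 1 1).card := by
    refine (Set.ncard_le_ncard (A_subset hB0) (Finset.finite_toSet _)).trans ?_
    rw [Set.ncard_coe_finset]
    refine Finset.card_image_le.trans ?_
    rw [U, card_product, card_product, card_product]
    have : mults.card = 4 := rfl
    rw [this]
  have h2 := card_Om_le hB0 (fun _ => Icc 1 ⌊B⌋₊) (fun k n hn => (mem_Icc.1 hn).1) 1 1 1
  have h3 : ∑ n ∈ Icc 1 ⌊B⌋₊, (1 / (n : ℝ)) ≤ 2 * Real.log B := by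
    have := harmonic_floor_le_one_add_log B (by linarith)
    rw [harmonic_eq_sum_Icc] at this
    push_cast at this
    simp only [one_div]
    have h1 : 1 ≤ Real.log B := by
      rw [Real.le_log_iff_exp_le (by linarith)]
      linarith [Real.exp_one_lt_d9]
    linarith
  have h4 : ∏ k : Fin 6, ∑ n ∈ Icc 1 ⌊B⌋₊, (1 / (n : ℝ)) ≤ (2 * Real.log B) ^ 6 := by
    rw [prod_const]
    simp only [card_univ, Fintype.card_fin]
    gcongr
  have h1' : ((A B).ncard : ℝ) ≤ 64 * ((Om B (fun _ => Icc 1 ⌊B⌋₊) 1 1 1).card : ℝ) := by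
    exact_mod_cast h1
  have h5 : B * ∏ k : Fin 6, ∑ n ∈ Icc 1 ⌊B⌋₊, (1 / (n : ℝ)) ≤ B * (2 * Real.log B) ^ 6 := by
    gcongr
  simp only [Nat.cast_one, mul_one, div_one] at h2
  calc _ ≤ 64 * (B * (2 * Real.log B) ^ 6) := by linarith
    _ = _ := by ring

end CubicCount
namespace CubicCount
open Finset
/-! ### lower bound sums -/

def S0 (Q K : ℕ) : Finset ℕ := (range K).image fun k => 1 + Q * k

noncomputable def W (Q K : ℕ) : ℝ := ∑ n ∈ S0 Q K, (1 / (n : ℝ))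

lemma sum_filter_le (Q K D : ℕ) (hQ : 1 < Q) (hD : 0 < D) :
    ∑ n ∈ (S0 Q K).filter (D ∣ ·), (1 / (n : ℝ)) ≤ W Q K / D := by
  set F := (S0 Q K).filter (D ∣ ·) with hF
  set f : ℕ → ℕ := fun n => 1 + Q * (n / D / Q) with hf
  have prop : ∀ n ∈ F, ∃ m k, n = D * m ∧ k < K ∧ n = 1 + Q * k ∧ n / D = m ∧ ¬ Q ∣ m := by
    intro n hn
    rw [hF, mem_filter, S0, mem_image] at hn
    obtain ⟨⟨k, hk, rfl⟩, m, hm⟩ := hn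
    refine ⟨m, k, hm, mem_range.1 hk, rfl, ?_, ?_⟩
    · rw [hm, Nat.mul_div_cancel_left _ hD]
    · rintro ⟨s, rfl⟩
      have : Q ∣ 1 + Q * k := by rw [hm]; exact ⟨D * s, by ring⟩
      have : Q ∣ 1 := (Nat.dvd_add_left (dvd_mul_right Q k)).1 this
      have := Nat.dvd_one.1 this
      omega
  have hle : ∀ n ∈ F, (1 / (n : ℝ)) ≤ (1 / (f n : ℝ)) / D := by
    intro n hn
    obtain ⟨m, k, h1, h2, h3, h4, h5⟩ := prop n hn
    have h6 : f n ≤ m := by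
      simp only [hf, h4]
      have := Nat.div_add_mod m Q
      have h7 : m % Q ≠ 0 := fun h => h5 (Nat.dvd_of_mod_eq_zero h)
      omega
    have h8 : 0 < f n := by simp [hf]
    rw [div_div]
    have h9 : ((f n : ℝ) * D) ≤ n := by
      have h10 : f n * D ≤ n := by
        calc f n * D ≤ m * D := Nat.mul_le_mul_right _ h6
          _ = n := by rw [h1]; ring
      exact_mod_cast h10
    have : (0 : ℝ) < (f n : ℝ) * D := by positivity
    gcongr
  have hinj : Set.InjOn f F := by
    intro n hn n' hn' hnn
    obtain ⟨m, k, h1, h2, h3, h4, h5⟩ := prop n hn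
    obtain ⟨m', k', h1', h2', h3', h4', h5'⟩ := prop n' hn'
    have hq : m / Q = m' / Q := by
      simp only [hf, h4, h4'] at hnn
      have : Q * (m / Q) = Q * (m' / Q) := by omega
      exact Nat.eq_of_mul_eq_mul_left (by omega) this
    have hcop : Nat.gcd Q D = 1 := by
      have hdq := Nat.gcd_dvd_left Q D
      have hdn : Nat.gcd Q D ∣ 1 + Q * k := by
        rw [← h3, h1]; exact (Nat.gcd_dvd_right Q D).mul_right _
      exact Nat.dvd_one.1 ((Nat.dvd_add_left (hdq.mul_right k)).1 hdn)
    have hmod : D * m ≡ D * m' [MOD Q] := by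
      rw [← h1, ← h1', h3, h3']
      simp [Nat.ModEq]
    have hmm : m % Q = m' % Q := Nat.ModEq.cancel_left_of_coprime hcop hmod
    have : m = m' := by
      rw [← Nat.div_add_mod m Q, ← Nat.div_add_mod m' Q, hq, hmm]
    rw [h1, h1', this]
  calc _ ≤ ∑ n ∈ F, (1 / (f n : ℝ)) / D := sum_le_sum hle
    _ = (∑ n ∈ F, (1 / (f n : ℝ))) / D := by rw [sum_div]
    _ = (∑ n ∈ F.image f, (1 / (n : ℝ))) / D := by rw [sum_image hinj]
    _ ≤ _ := by
        unfold W
        gcongr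
        intro x hx
        obtain ⟨n, hn, rfl⟩ := mem_image.1 hx
        obtain ⟨m, k, h1, h2, h3, h4, h5⟩ := prop n hn
        rw [S0, mem_image]
        refine ⟨n / D / Q, ?_, rfl⟩
        rw [mem_range]
        refine lt_of_le_of_lt ?_ h2
        calc n / D / Q ≤ n / Q := Nat.div_le_div_right (Nat.div_le_self _ _)
          _ = k := by
            rw [h3, Nat.add_mul_div_left _ _ (by omega), Nat.div_eq_of_lt hQ]; omega

lemma W_nonneg (Q K : ℕ) : 0 ≤ W Q K := sum_nonneg fun _ _ => by positivity

lemma W_ge (Q K : ℕ) (hQ : 1 < Q) : Real.log (K + 1) / Q ≤ W Q K := by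
  unfold W S0
  rw [sum_image (by
    intro a _ b _ h
    simp only at h
    have : Q * a = Q * b := by omega
    exact Nat.eq_of_mul_eq_mul_left (by omega) this)]
  have h1 := log_add_one_le_harmonic K
  rw [harmonic] at h1
  push_cast at h1
  calc _ ≤ (∑ i ∈ range K, ((i : ℝ) + 1)⁻¹) / Q := by gcongr
    _ = ∑ i ∈ range K, ((i : ℝ) + 1)⁻¹ / Q := by rw [sum_div]
    _ ≤ _ := by
      refine sum_le_sum fun i _ => ?_
      rw [inv_eq_one_div, div_div]
      have : (1 : ℝ) ≤ Q := by exact_mod_cast hQ.le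
      apply one_div_le_one_div_of_le
      · positivity
      · push_cast; nlinarith

lemma sum_sq_le (P N : ℕ) (hP : 0 < P) : ∑ d ∈ Ioc P N, (1 / (d : ℝ) ^ 2) ≤ 1 / (P : ℝ) := by
  rcases le_or_gt P N with h | h
  · have key : ∑ d ∈ Ioc P N, (1 / (d : ℝ) ^ 2) ≤ 1 / (P : ℝ) - 1 / (N : ℝ) := by
      induction N, h using Nat.le_induction with
      | base => simp
      | succ n hn ih =>
        rw [← Finset.insert_Ioc_right_eq_Ioc_add_one (by omega), sum_insert (by simp)]
        have h0 : (0 : ℝ) < n := by exact_mod_cast (by omega : 0 < n)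
        have : 1 / ((n + 1 : ℕ) : ℝ) ^ 2 ≤ 1 / (n : ℝ) - 1 / ((n + 1 : ℕ) : ℝ) := by
          push_cast
          rw [div_sub_div _ _ (by positivity) (by positivity), div_le_div_iff₀ (by positivity) (by positivity)]
          nlinarith
        linarith
    have : (0 : ℝ) ≤ 1 / N := by positivity
    linarith
  · rw [Finset.Ioc_eq_empty (by omega)]; simp

lemma sum_cube_le (N : ℕ) : ∑ d ∈ Ioc 1 N, (1 / (d : ℝ) ^ 3) ≤ (1 / 4 : ℝ) := by
  rcases le_or_gt 1 N with h | h
  · have key : ∑ d ∈ Ioc 1 N, (1 / (d : ℝ) ^ 3) ≤ 1 / 4 - 1 / (2 * (N : ℝ) * ((N : ℝ) + 1)) := by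
      induction N, h using Nat.le_induction with
      | base => norm_num
      | succ n hn ih =>
        rw [← Finset.insert_Ioc_right_eq_Ioc_add_one (by omega), sum_insert (by simp)]
        have h0 : (0 : ℝ) < n := by exact_mod_cast (by omega : 0 < n)
        have : 1 / ((n + 1 : ℕ) : ℝ) ^ 3 ≤ 1 / (2 * (n : ℝ) * (n + 1)) -
            1 / (2 * ((n + 1 : ℕ) : ℝ) * ((n + 1 : ℕ) + 1)) := by
          push_cast
          have : 1 / (2 * (n : ℝ) * (n + 1)) - 1 / (2 * ((n : ℝ) + 1) * (n + 1 + 1)) =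
            1 / (n * (n + 1) * (n + 2)) := by field_simp; ring
          rw [this]
          apply one_div_le_one_div_of_le (by positivity)
          nlinarith
        linarith
    have : (0 : ℝ) ≤ 1 / (2 * N * (N + 1)) := by positivity
    linarith
  · rw [Finset.Ioc_eq_empty (by omega)]; norm_num
end CubicCount
namespace CubicCount
open Finset

/-! ### lower bound -/

def SD (Q K : ℕ) (D : Fin 6 → ℕ) : Fin 6 → Finset ℕ := fun k => (S0 Q K).filter (D k ∣ ·)

noncomputable def E (B : ℝ) (Q K : ℕ) (D : Fin 6 → ℕ) (d1 d2 d3 : ℕ) :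
    Finset (Σ _ : Fin 6 → ℕ, ℕ × ℕ × ℕ) := Om B (SD Q K D) d1 d2 d3

lemma S0_pos {Q K n : ℕ} (h : n ∈ S0 Q K) : 0 < n := by
  obtain ⟨k, _, rfl⟩ := mem_image.1 h
  omega

lemma S0_le {Q K n : ℕ} (hQ : 1 < Q) (h : n ∈ S0 Q K) : n ≤ Q * K := by
  obtain ⟨k, hk, rfl⟩ := mem_image.1 h
  have := mem_range.1 hk
  calc 1 + Q * k ≤ Q + Q * k := by omega
    _ = Q * (k + 1) := by ring
    _ ≤ Q * K := Nat.mul_le_mul_left _ (by omega)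

lemma E_card_le {B : ℝ} (hB : 0 ≤ B) {Q : ℕ} (K : ℕ) (hQ : 1 < Q) (D : Fin 6 → ℕ)
    (hD : ∀ k, 0 < D k) (d1 d2 d3 : ℕ) :
    ((E B Q K D d1 d2 d3).card : ℝ) ≤
      (B * W Q K ^ 6) * (1 / ((∏ k, (D k : ℝ)) * (d1 * d2 * d3))) := by
  refine (card_Om_le hB _ (fun k n hn => S0_pos (mem_filter.1 hn).1) d1 d2 d3).trans ?_
  have h : ∏ k, ∑ n ∈ SD Q K D k, (1 / (n : ℝ)) ≤ ∏ k : Fin 6, (W Q K / D k) :=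
    prod_le_prod (fun k _ => sum_nonneg fun _ _ => by positivity)
      (fun k _ => sum_filter_le Q K (D k) hQ (hD k))
  rw [prod_div_distrib, prod_const] at h
  simp only [card_univ, Fintype.card_fin] at h
  calc _ ≤ B * (W Q K ^ 6 / ∏ k, (D k : ℝ)) / (d1 * d2 * d3) := by
        gcongr
        exact h
    _ = _ := by rw [mul_div_assoc', div_div, mul_one_div]

lemma E_card_ge {B : ℝ} (hB : 0 ≤ B) {Q K : ℕ} (hQ : 1 < Q)
    (hNB : 1000 * ((Q * K : ℕ) : ℝ) ^ 6 ≤ B) :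
    (729 / 1000) * (B * W Q K ^ 6) ≤ ((E B Q K (fun _ => 1) 1 1 1).card : ℝ) := by
  have := card_Om_ge hB (SD Q K (fun _ => 1)) (fun k n hn => S0_pos (mem_filter.1 hn).1) (Q * K)
    (fun k n hn => S0_le hQ (mem_filter.1 hn).1) hNB
  simpa [SD, W, E] using this

def o : Fin 6 → Fin 3 := ![2, 1, 2, 0, 1, 0]

def dd (k : Fin 6) (d : ℕ) (i : Fin 3) : ℕ := if o k = i then d else 1

def D1 (k : Fin 6) (d : ℕ) : Fin 6 → ℕ := fun l => if l = k then d else 1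

def D2 (i j : Fin 6) (d : ℕ) : Fin 6 → ℕ := fun l => D1 i d l * D1 j d l

def Good (w : Σ _ : Fin 6 → ℕ, ℕ × ℕ × ℕ) : Prop :=
  (∀ d, 1 < d → ¬ (d ∣ w.2.1 ∧ d ∣ w.2.2.1 ∧ d ∣ w.2.2.2)) ∧
  (¬ (2 ∣ w.2.2.1 ∧ 2 ∣ w.2.2.2)) ∧
  (∀ k d, 1 < d → d ∣ w.1 k → 
    ¬ (dd k d 0 ∣ w.2.1 ∧ dd k d 1 ∣ w.2.2.1 ∧ dd k d 2 ∣ w.2.2.2)) ∧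
  (∀ i j d, 1 < d → ¬ ∀ l, D2 i j d l ∣ w.1 l)

lemma mem_E {B : ℝ} {Q K : ℕ} {D : Fin 6 → ℕ} {d1 d2 d3 : ℕ} {w : Σ _ : Fin 6 → ℕ, ℕ × ℕ × ℕ} :
    w ∈ E B Q K D d1 d2 d3 ↔ w ∈ E B Q K (fun _ => 1) 1 1 1 ∧ (∀ k, D k ∣ w.1 k) ∧
      d1 ∣ w.2.1 ∧ d2 ∣ w.2.2.1 ∧ d3 ∣ w.2.2.2 := by
  simp only [E, Om, SD, mem_sigma, Fintype.mem_piFinset, mem_filter, mem_product, one_dvd, and_true,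
    forall_and]
  tauto

lemma mem_E1 {B : ℝ} {Q K : ℕ} {w : Σ _ : Fin 6 → ℕ, ℕ × ℕ × ℕ} :
    w ∈ E B Q K (fun _ => 1) 1 1 1 ↔ (∀ k, w.1 k ∈ S0 Q K) ∧
      (0 < w.2.1 ∧ w.2.1 ≤ X B (M1 w.1)) ∧ (0 < w.2.2.1 ∧ w.2.2.1 ≤ X B (M2 w.1)) ∧
      (0 < w.2.2.2 ∧ w.2.2.2 ≤ X B (M3 w.1)) := by
  simp only [E, Om, SD, mem_sigma, Fintype.mem_piFinset, mem_filter, mem_product, one_dvd, and_true,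
    mem_Ioc]

lemma M_pos {y : Fin 6 → ℕ} (hy : ∀ k, 0 < y k) : 0 < M1 y ∧ 0 < M2 y ∧ 0 < M3 y := by
  have p0 := hy 0
  have p1 := hy 1
  have p2 := hy 2
  have p3 := hy 3
  have p4 := hy 4
  have p5 := hy 5
  refine ⟨by unfold M1; positivity, by unfold M2; positivity, by unfold M3; positivity⟩

lemma dvd_gt {P Q K d n : ℕ} (hPQ : ∀ d, 1 < d → d ≤ P → d ∣ Q) (hn : n ∈ S0 Q K) (hd : 1 < d)
    (hdn : d ∣ n) : P < d := by
  by_contra hle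
  obtain ⟨k, _, rfl⟩ := mem_image.1 hn
  have h1 := hPQ d hd (by omega)
  have := Nat.dvd_one.1 ((Nat.dvd_add_left (h1.mul_right k)).1 hdn)
  omega

lemma prod_D1 (k : Fin 6) (d : ℕ) : ∏ l, (D1 k d l : ℝ) = d := by
  simp [D1, Finset.prod_ite_eq']

lemma prod_D2 (i j : Fin 6) (d : ℕ) : ∏ l, (D2 i j d l : ℝ) = d ^ 2 := by
  simp only [D2, Nat.cast_mul, prod_mul_distrib, prod_D1]; ring

lemma prod_dd (k : Fin 6) (d : ℕ) : ((dd k d 0 : ℝ) * dd k d 1 * dd k d 2) = d := by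
  fin_cases k <;> simp [dd, o]

open Classical in
lemma good_card {B : ℝ} (hB : 0 ≤ B) {P Q K : ℕ} (hP : 420 ≤ P) (hQ : 1 < Q)
    (hPQ : ∀ d, 1 < d → d ≤ P → d ∣ Q) (hNB : 1000 * ((Q * K : ℕ) : ℝ) ^ 6 ≤ B) :
    (1 / 8) * (B * W Q K ^ 6) ≤ (((E B Q K (fun _ => 1) 1 1 1).filter Good).card : ℝ) := by
  set T := B * W Q K ^ 6 with hT
  have hT0 : 0 ≤ T := mul_nonneg hB (pow_nonneg (W_nonneg _ _) _)
  set N := Q * K with hN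
  set Ω := E B Q K (fun _ => 1) 1 1 1 with hΩ
  set E1 := (Ioc 1 ⌊B⌋₊).biUnion fun d => E B Q K (fun _ => 1) d d d with hE1
  set E2 := E B Q K (fun _ => 1) 1 2 2 with hE2
  set E3 := (univ : Finset (Fin 6)).biUnion fun k => (Ioc P N).biUnion fun d =>
    E B Q K (D1 k d) (dd k d 0) (dd k d 1) (dd k d 2) with hE3
  set E4 := (univ : Finset (Fin 6 × Fin 6)).biUnion fun ij => (Ioc P N).biUnion fun d =>
    E B Q K (D2 ij.1 ij.2 d) 1 1 1 with hE4
  have hsub : Ω ⊆ Ω.filter Good ∪ (E1 ∪ (E2 ∪ (E3 ∪ E4))) := by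
    intro w hw
    by_cases hg : Good w
    · exact mem_union_left _ (mem_filter.2 ⟨hw, hg⟩)
    apply mem_union_right
    have hw' := mem_E1.1 hw
    obtain ⟨hy, ⟨hx1, hx1'⟩, hx2, hx3⟩ := hw'
    have hMp := M_pos (fun k => S0_pos (hy k))
    unfold Good at hg
    have hg' := (not_and_or.1 hg).imp_right fun h => (not_and_or.1 h).imp_right fun h =>
      not_and_or.1 h
    clear hg
    rcases hg' with hg | hg | hg | hg
    · push Not at hg
      obtain ⟨d, hd, h1, h2, h3⟩ := hg
      apply mem_union_left
      rw [hE1, mem_biUnion]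
      refine ⟨d, mem_Ioc.2 ⟨hd, ?_⟩, mem_E.2 ⟨hw, fun k => one_dvd _, h1, h2, h3⟩⟩
      refine (Nat.le_of_dvd hx1 h1).trans (Nat.le_floor ?_)
      refine le_trans ?_ ((le_X_iff hB hMp.1 _).1 hx1')
      have : w.2.1 ≤ w.2.1 ^ 3 * M1 w.1 :=
        (Nat.le_self_pow (by norm_num) _).trans (Nat.le_mul_of_pos_right _ hMp.1)
      exact_mod_cast this
    · push Not at hg
      apply mem_union_right
      apply mem_union_left
      exact mem_E.2 ⟨hw, fun k => one_dvd _, one_dvd _, hg.1, hg.2⟩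
    · push Not at hg
      obtain ⟨k, d, hd, hdk, h1, h2, h3⟩ := hg
      apply mem_union_right
      apply mem_union_right
      apply mem_union_left
      rw [hE3, mem_biUnion]
      refine ⟨k, mem_univ _, mem_biUnion.2 ⟨d, mem_Ioc.2 ⟨dvd_gt hPQ (hy k) hd hdk, ?_⟩,
        mem_E.2 ⟨hw, ?_, h1, h2, h3⟩⟩⟩
      · exact (Nat.le_of_dvd (S0_pos (hy k)) hdk).trans (S0_le hQ (hy k))
      · intro l
        unfold D1
        split_ifs with h
        · rw [h]; exact hdk
        · exact one_dvd _
    · push Not at hg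
      obtain ⟨i, j, d, hd, h1⟩ := hg
      have hdi : d ∣ w.1 i := by
        refine Dvd.dvd.trans ?_ (h1 i)
        have : D1 i d i = d := by simp [D1]
        rw [D2, this]
        exact dvd_mul_right _ _
      apply mem_union_right
      apply mem_union_right
      apply mem_union_right
      rw [hE4, mem_biUnion]
      refine ⟨(i, j), mem_univ _, mem_biUnion.2 ⟨d, mem_Ioc.2 ⟨dvd_gt hPQ (hy i) hd hdi, ?_⟩,
        mem_E.2 ⟨hw, h1, one_dvd _, one_dvd _, one_dvd _⟩⟩⟩
      exact (Nat.le_of_dvd (S0_pos (hy i)) hdi).trans (S0_le hQ (hy i))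
  have hcard : Ω.card ≤ (Ω.filter Good).card + (E1.card + (E2.card + (E3.card + E4.card))) := by
    refine (card_le_card hsub).trans ((card_union_le _ _).trans ?_)
    gcongr
    refine (card_union_le _ _).trans ?_
    gcongr
    refine (card_union_le _ _).trans ?_
    gcongr
    exact card_union_le _ _
  have hcard' : (Ω.card : ℝ) ≤ (Ω.filter Good).card +
      ((E1.card : ℝ) + (E2.card + (E3.card + E4.card))) := by exact_mod_cast hcard
  have hlow := E_card_ge hB hQ hNB
  have h1 : (E1.card : ℝ) ≤ T * (1 / 4) := by
    calc (E1.card : ℝ) ≤ ∑ d ∈ Ioc 1 ⌊B⌋₊, ((E B Q K (fun _ => 1) d d d).card : ℝ) := by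
          exact_mod_cast card_biUnion_le
      _ ≤ ∑ d ∈ Ioc 1 ⌊B⌋₊, T * (1 / (d : ℝ) ^ 3) := by
          refine sum_le_sum fun d _ => ?_
          refine (E_card_le hB K hQ _ (fun _ => one_pos) d d d).trans (le_of_eq ?_)
          simp only [Nat.cast_one, prod_const_one, one_mul]
          rw [← hT]; ring
      _ ≤ _ := by
          rw [← mul_sum]
          exact mul_le_mul_of_nonneg_left (sum_cube_le _) hT0
  have h2 : (E2.card : ℝ) ≤ T * (1 / 4) := by
    refine (E_card_le hB K hQ _ (fun _ => one_pos) 1 2 2).trans (le_of_eq ?_)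
    rw [← hT]; norm_num
  have hsq := sum_sq_le P N (by omega)
  have hP1 : 1 / (P : ℝ) ≤ 1 / 420 := by
    apply one_div_le_one_div_of_le (by norm_num)
    exact_mod_cast hP
  have hsq' := mul_le_mul_of_nonneg_left (hsq.trans hP1) hT0
  have h3 : (E3.card : ℝ) ≤ 6 * (T * (1 / 420)) := by
    calc (E3.card : ℝ) ≤ ∑ k : Fin 6, (∑ d ∈ Ioc P N,
          ((E B Q K (D1 k d) (dd k d 0) (dd k d 1) (dd k d 2)).card : ℝ)) := by
          have : E3.card ≤ ∑ k : Fin 6, (∑ d ∈ Ioc P N,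
            ((E B Q K (D1 k d) (dd k d 0) (dd k d 1) (dd k d 2)).card)) :=
            card_biUnion_le.trans (sum_le_sum fun k _ => card_biUnion_le)
          exact_mod_cast this
      _ ≤ ∑ k : Fin 6, ∑ d ∈ Ioc P N, T * (1 / (d : ℝ) ^ 2) := by
          refine sum_le_sum fun k _ => sum_le_sum fun d hd => ?_
          refine (E_card_le hB K hQ _ (fun l => ?_) _ _ _).trans (le_of_eq ?_)
          · unfold D1
            have := (mem_Ioc.1 hd).1
            split_ifs <;> omega
          · rw [prod_D1, prod_dd, ← hT]; ring
      _ ≤ _ := by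
          rw [sum_const, ← mul_sum]
          simp only [card_univ, Fintype.card_fin, nsmul_eq_mul]
          push_cast
          linarith
  have h4 : (E4.card : ℝ) ≤ 36 * (T * (1 / 420)) := by
    calc (E4.card : ℝ) ≤ ∑ k : Fin 6 × Fin 6, (∑ d ∈ Ioc P N,
          ((E B Q K (D2 k.1 k.2 d) 1 1 1).card : ℝ)) := by
          have : E4.card ≤ ∑ k : Fin 6 × Fin 6, (∑ d ∈ Ioc P N,
            ((E B Q K (D2 k.1 k.2 d) 1 1 1).card)) :=
            card_biUnion_le.trans (sum_le_sum fun k _ => card_biUnion_le)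
          exact_mod_cast this
      _ ≤ ∑ k : Fin 6 × Fin 6, ∑ d ∈ Ioc P N, T * (1 / (d : ℝ) ^ 2) := by
          refine sum_le_sum fun k _ => sum_le_sum fun d hd => ?_
          refine (E_card_le hB K hQ _ (fun l => ?_) _ _ _).trans (le_of_eq ?_)
          · unfold D2 D1
            have := (mem_Ioc.1 hd).1
            apply Nat.mul_pos <;> split_ifs <;> omega
          · rw [prod_D2, ← hT]; simp
      _ ≤ _ := by
          rw [sum_const, ← mul_sum]
          simp only [card_univ, Fintype.card_fin, Fintype.card_prod, nsmul_eq_mul]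
          push_cast
          linarith
  linarith

def F (w : Σ _ : Fin 6 → ℕ, ℕ × ℕ × ℕ) : ℤ × ℤ × ℤ := G ((2, 1, 1), w)

lemma good_unique {w : Σ _ : Fin 6 → ℕ, ℕ × ℕ × ℕ} (hg : Good w) {p : ℕ} (hp : p.Prime)
    {i j : Fin 6} (hij : i ≠ j) (hi : p ∣ w.1 i) : ¬ p ∣ w.1 j := by
  intro hj
  refine hg.2.2.2 i j p hp.one_lt fun l => ?_
  unfold D2 D1
  by_cases h1 : l = i
  · subst h1; simp [hij, hi]
  · by_cases h2 : l = j
    · subst h2; simp [h1, hj]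
    · simp [h1, h2]

lemma good_sqfree {w : Σ _ : Fin 6 → ℕ, ℕ × ℕ × ℕ} (hg : Good w) {p : ℕ} (hp : p.Prime)
    (i : Fin 6) : ¬ p * p ∣ w.1 i := by
  intro hj
  refine hg.2.2.2 i i p hp.one_lt fun l => ?_
  unfold D2 D1
  by_cases h1 : l = i
  · subst h1; simp [hj]
  · simp [h1]

lemma fact_sum_le {w : Σ _ : Fin 6 → ℕ, ℕ × ℕ × ℕ} (hg : Good w) (hy : ∀ k, 0 < w.1 k)
    {p : ℕ} (hp : p.Prime) :
    (w.1 0).factorization p + (w.1 1).factorization p + (w.1 2).factorization p +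
    (w.1 3).factorization p + (w.1 4).factorization p + (w.1 5).factorization p ≤ 1 := by
  have hle : ∀ k, (w.1 k).factorization p ≤ 1 := by
    intro k
    by_contra h
    apply good_sqfree hg hp k
    rw [← sq]
    exact (hp.pow_dvd_iff_le_factorization (hy k).ne').2 (by omega)
  have hu : ∀ i j, i ≠ j → (w.1 i).factorization p = 0 ∨ (w.1 j).factorization p = 0 := by
    intro i j hij
    by_cases h : p ∣ w.1 i
    · exact Or.inr (Nat.factorization_eq_zero_of_not_dvd (good_unique hg hp hij h))
    · exact Or.inl (Nat.factorization_eq_zero_of_not_dvd h)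
  have h0 := hle 0
  have h1 := hle 1
  have h2 := hle 2
  have h3 := hle 3
  have h4 := hle 4
  have h5 := hle 5
  have h01 := hu 0 1 (by decide)
  have h02 := hu 0 2 (by decide)
  have h03 := hu 0 3 (by decide)
  have h04 := hu 0 4 (by decide)
  have h05 := hu 0 5 (by decide)
  have h12 := hu 1 2 (by decide)
  have h13 := hu 1 3 (by decide)
  have h14 := hu 1 4 (by decide)
  have h15 := hu 1 5 (by decide)
  have h23 := hu 2 3 (by decide)
  have h24 := hu 2 4 (by decide)
  have h25 := hu 2 5 (by decide)
  have h34 := hu 3 4 (by decide)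
  have h35 := hu 3 5 (by decide)
  have h45 := hu 4 5 (by decide)
  omega

lemma fact_b {x a b c d : ℕ} (hx : 0 < x) (ha : 0 < a) (hb : 0 < b) (hc : 0 < c) (hd : 0 < d)
    (p : ℕ) : (x ^ 3 * ((a * b) ^ 2 * (c * d))).factorization p =
      3 * x.factorization p + 2 * a.factorization p + 2 * b.factorization p
        + c.factorization p + d.factorization p := by
  rw [Nat.factorization_mul (by positivity) (by positivity),
    Nat.factorization_mul (by positivity) (by positivity),
    Nat.factorization_mul hc.ne' hd.ne', Nat.factorization_pow, Nat.factorization_pow,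
    Nat.factorization_mul ha.ne' hb.ne']
  simp
  ring

lemma seven {a b c d e f : ℕ} (h : a + b + c + d + e + f ≤ 1) :
    (a = 0 ∧ b = 0 ∧ c = 0 ∧ d = 0 ∧ e = 0 ∧ f = 0) ∨
    (a = 1 ∧ b = 0 ∧ c = 0 ∧ d = 0 ∧ e = 0 ∧ f = 0) ∨
    (a = 0 ∧ b = 1 ∧ c = 0 ∧ d = 0 ∧ e = 0 ∧ f = 0) ∨
    (a = 0 ∧ b = 0 ∧ c = 1 ∧ d = 0 ∧ e = 0 ∧ f = 0) ∨
    (a = 0 ∧ b = 0 ∧ c = 0 ∧ d = 1 ∧ e = 0 ∧ f = 0) ∨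
    (a = 0 ∧ b = 0 ∧ c = 0 ∧ d = 0 ∧ e = 1 ∧ f = 0) ∨
    (a = 0 ∧ b = 0 ∧ c = 0 ∧ d = 0 ∧ e = 0 ∧ f = 1) := by
  omega

lemma exps {x1 x2 x3 a b c d e f x1' x2' x3' a' b' c' d' e' f' : ℕ}
    (h : a + b + c + d + e + f ≤ 1) (h' : a' + b' + c' + d' + e' + f' ≤ 1)
    (f1 : 3 * x1 + 2 * a + 2 * b + c + e = 3 * x1' + 2 * a' + 2 * b' + c' + e')
    (f2 : 3 * x2 + 2 * c + 2 * d + a + f = 3 * x2' + 2 * c' + 2 * d' + a' + f')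
    (f3 : 3 * x3 + 2 * e + 2 * f + b + d = 3 * x3' + 2 * e' + 2 * f' + b' + d') :
    (x1 = x1' ∧ x2 = x2' ∧ x3 = x3') ∧ a = a' ∧ b = b' ∧ c = c' ∧ d = d' ∧ e = e' ∧ f = f' := by
  rcases seven h with s | s | s | s | s | s | s <;>
  rcases seven h' with t | t | t | t | t | t | t <;>
  obtain ⟨rfl, rfl, rfl, rfl, rfl, rfl⟩ := s <;>
  obtain ⟨rfl, rfl, rfl, rfl, rfl, rfl⟩ := t <;> omega

lemma F_inj {w w' : Σ _ : Fin 6 → ℕ, ℕ × ℕ × ℕ} (hg : Good w) (hg' : Good w')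
    (hy : ∀ k, 0 < w.1 k) (hy' : ∀ k, 0 < w'.1 k)
    (hx : 0 < w.2.1 ∧ 0 < w.2.2.1 ∧ 0 < w.2.2.2) (hx' : 0 < w'.2.1 ∧ 0 < w'.2.2.1 ∧ 0 < w'.2.2.2)
    (h : F w = F w') : w = w' := by
  obtain ⟨y, x1, x2, x3⟩ := w
  obtain ⟨y', x1', x2', x3'⟩ := w'
  simp only [F, G, Prod.mk.injEq] at h hy hy' hx hx'
  obtain ⟨h1, h2, h3⟩ := h
  have e1 : x1 ^ 3 * M1 y = x1' ^ 3 * M1 y' := by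
    have := mul_left_cancel₀ (by norm_num) h1
    exact_mod_cast this
  have e2 : x2 ^ 3 * M2 y = x2' ^ 3 * M2 y' := by
    have := mul_left_cancel₀ (by norm_num) h2
    exact_mod_cast this
  have e3 : x3 ^ 3 * M3 y = x3' ^ 3 * M3 y' := by
    have := mul_left_cancel₀ (by norm_num) h3
    exact_mod_cast this
  have key : ∀ p : ℕ, p.Prime → 
      (x1.factorization p = x1'.factorization p ∧ x2.factorization p = x2'.factorization p ∧
      x3.factorization p = x3'.factorization p) ∧
      (y 0).factorization p = (y' 0).factorization p ∧
      (y 1).factorization p = (y' 1).factorization p ∧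
      (y 2).factorization p = (y' 2).factorization p ∧
      (y 3).factorization p = (y' 3).factorization p ∧
      (y 4).factorization p = (y' 4).factorization p ∧
      (y 5).factorization p = (y' 5).factorization p := by
    intro p hp
    have f1 := congrArg (fun n => n.factorization p) e1
    have f2 := congrArg (fun n => n.factorization p) e2
    have f3 := congrArg (fun n => n.factorization p) e3
    simp only [M1, M2, M3] at f1 f2 f3
    rw [fact_b hx.1 (hy _) (hy _) (hy _) (hy _), fact_b hx'.1 (hy' _) (hy' _) (hy' _) (hy' _)] at f1
    rw [fact_b hx.2.1 (hy _) (hy _) (hy _) (hy _),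
      fact_b hx'.2.1 (hy' _) (hy' _) (hy' _) (hy' _)] at f2
    rw [fact_b hx.2.2 (hy _) (hy _) (hy _) (hy _),
      fact_b hx'.2.2 (hy' _) (hy' _) (hy' _) (hy' _)] at f3
    have s := fact_sum_le hg hy hp
    have s' := fact_sum_le hg' hy' hp
    exact exps s s' f1 f2 f3
  have fin : ∀ a b : ℕ, 0 < a → 0 < b → (∀ p, p.Prime → a.factorization p = b.factorization p) →
      a = b := by
    intro a b ha hb hab
    refine Nat.eq_of_factorization_eq ha.ne' hb.ne' fun p => ?_
    by_cases hp : p.Prime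
    · exact hab p hp
    · simp [Nat.factorization_eq_zero_of_not_prime _ hp]
  have hyy : y = y' := by
    funext k
    refine fin _ _ (hy k) (hy' k) fun p hp => ?_
    obtain ⟨_, k0, k1, k2, k3, k4, k5⟩ := key p hp
    fin_cases k <;> assumption
  have hx1 := fin _ _ hx.1 hx'.1 fun p hp => (key p hp).1.1
  have hx2 := fin _ _ hx.2.1 hx'.2.1 fun p hp => (key p hp).1.2.1
  have hx3 := fin _ _ hx.2.2 hx'.2.2 fun p hp => (key p hp).1.2.2
  rw [hyy, hx1, hx2, hx3]

lemma prime_dvd_b {p x a b c d : ℕ} (hp : p.Prime) (h : p ∣ x ^ 3 * ((a * b) ^ 2 * (c * d))) :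
    p ∣ x ∨ p ∣ a ∨ p ∣ b ∨ p ∣ c ∨ p ∣ d := by
  rcases hp.dvd_mul.1 h with h | h
  · exact Or.inl (hp.dvd_of_dvd_pow h)
  · rcases hp.dvd_mul.1 h with h | h
    · rcases hp.dvd_mul.1 (hp.dvd_of_dvd_pow h) with h | h <;> tauto
    · rcases hp.dvd_mul.1 h with h | h <;> tauto

lemma good_gcd {w : Σ _ : Fin 6 → ℕ, ℕ × ℕ × ℕ} (hg : Good w) (hodd : ∀ k, ¬ 2 ∣ w.1 k)
    (p : ℕ) (hp : p.Prime) (h1 : p ∣ 2 * (w.2.1 ^ 3 * M1 w.1)) (h2 : p ∣ w.2.2.1 ^ 3 * M2 w.1)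
    (h3 : p ∣ w.2.2.2 ^ 3 * M3 w.1) : False := by
  have hu := fun i j hij => good_unique hg hp (i := i) (j := j) hij
  have hg1 := hg.1 p hp.one_lt
  have hg2 := hg.2.1
  have hg3 := fun k => hg.2.2.1 k p hp.one_lt
  obtain ⟨y, x1, x2, x3⟩ := w
  simp only at *
  have g3 : (p ∣ y 0 → ¬ p ∣ x3) ∧ (p ∣ y 1 → ¬ p ∣ x2) ∧ (p ∣ y 2 → ¬ p ∣ x3) ∧
      (p ∣ y 3 → ¬ p ∣ x1) ∧ (p ∣ y 4 → ¬ p ∣ x2) ∧ (p ∣ y 5 → ¬ p ∣ x1) := by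
    have t0 := hg3 0
    have t1 := hg3 1
    have t2 := hg3 2
    have t3 := hg3 3
    have t4 := hg3 4
    have t5 := hg3 5
    simp [dd, o] at t0 t1 t2 t3 t4 t5
    exact ⟨t0, t1, t2, t3, t4, t5⟩
  have c2 := prime_dvd_b hp h2
  have c3 := prime_dvd_b hp h3
  by_cases hp2 : p = 2
  · subst hp2
    simp only [hodd, or_false] at c2 c3
    exact hg2 ⟨c2, c3⟩
  · have h1' : p ∣ x1 ^ 3 * M1 y := by
      rcases hp.dvd_mul.1 h1 with h | h
      · exact absurd ((Nat.prime_dvd_prime_iff_eq hp Nat.prime_two).1 h) hp2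
      · exact h
    have c1 := prime_dvd_b hp h1'
    have h01 := hu 0 1 (by decide)
    have h02 := hu 0 2 (by decide)
    have h03 := hu 0 3 (by decide)
    have h04 := hu 0 4 (by decide)
    have h05 := hu 0 5 (by decide)
    have h12 := hu 1 2 (by decide)
    have h13 := hu 1 3 (by decide)
    have h14 := hu 1 4 (by decide)
    have h15 := hu 1 5 (by decide)
    have h23 := hu 2 3 (by decide)
    have h24 := hu 2 4 (by decide)
    have h25 := hu 2 5 (by decide)
    have h34 := hu 3 4 (by decide)
    have h35 := hu 3 5 (by decide)
    have h45 := hu 4 5 (by decide)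
    clear hg hu h1 h2 h3 h1' hodd hg2 hg3
    by_cases q0 : p ∣ y 0
    · simp_all
    by_cases q1 : p ∣ y 1
    · simp_all
    by_cases q2 : p ∣ y 2
    · simp_all
    by_cases q3 : p ∣ y 3
    · simp_all
    by_cases q4 : p ∣ y 4
    · simp_all
    by_cases q5 : p ∣ y 5
    · simp_all
    simp_all

open Classical in
lemma A_lower {B : ℝ} (hB : 0 ≤ B) {P Q K : ℕ} (hP : 420 ≤ P) (hQ : 1 < Q)
    (hPQ : ∀ d, 1 < d → d ≤ P → d ∣ Q) (hNB : 1000 * ((Q * K : ℕ) : ℝ) ^ 6 ≤ B / 2) :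
    (1 / 8) * (B / 2 * W Q K ^ 6) ≤ ((A B).ncard : ℝ) := by
  have hB2 : 0 ≤ B / 2 := by positivity
  refine (good_card hB2 hP hQ hPQ hNB).trans ?_
  set Ω := (E (B / 2) Q K (fun _ => 1) 1 1 1).filter Good with hΩ
  have hinj : Set.InjOn F Ω := by
    intro w hw w' hw' h
    obtain ⟨hw, hg⟩ := mem_filter.1 (mem_coe.1 hw)
    obtain ⟨hw', hg'⟩ := mem_filter.1 (mem_coe.1 hw')
    rw [mem_E1] at hw hw'
    exact F_inj hg hg' (fun k => S0_pos (hw.1 k)) (fun k => S0_pos (hw'.1 k))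
      ⟨hw.2.1.1, hw.2.2.1.1, hw.2.2.2.1⟩ ⟨hw'.2.1.1, hw'.2.2.1.1, hw'.2.2.2.1⟩ h
  have hsub : ((Ω.image F : Finset _) : Set (ℤ × ℤ × ℤ)) ⊆ A B := by
    intro t ht
    obtain ⟨w, hw, rfl⟩ := mem_image.1 (mem_coe.1 ht)
    obtain ⟨hw, hg⟩ := mem_filter.1 hw
    rw [mem_E1] at hw
    obtain ⟨hy, ⟨hx1, hx1'⟩, ⟨hx2, hx2'⟩, hx3, hx3'⟩ := hw
    obtain ⟨m1, m2, m3⟩ := M_pos (fun k => S0_pos (hy k))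
    rw [le_X_iff hB2 (by assumption)] at hx1' hx2' hx3'
    have hodd : ∀ k, ¬ 2 ∣ w.1 k := fun k h2 => by
      have := dvd_gt hPQ (hy k) (by norm_num) h2
      omega
    have hgcd := good_gcd hg hodd
    obtain ⟨y, x1, x2, x3⟩ := w
    simp only at *
    refine ⟨?_, ?_, ?_, ?_, ?_, ?_, ?_, ?_⟩
    · simp only [F, G]; positivity
    · simp only [F, G]; positivity
    · simp only [F, G]; positivity
    · simp only [F, G]
      rw [Int.cast_mul, Int.cast_natCast, abs_of_nonneg (by positivity)]
      push_cast at hx1' ⊢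
      linarith
    · simp only [F, G]
      rw [Int.cast_mul, Int.cast_natCast, abs_of_nonneg (by positivity)]
      push_cast at hx2' ⊢
      linarith
    · simp only [F, G]
      rw [Int.cast_mul, Int.cast_natCast, abs_of_nonneg (by positivity)]
      push_cast at hx3' ⊢
      linarith
    · rw [gcd_iff]
      intro p hp hh
      simp only [F, G, Int.natAbs_mul, Int.natAbs_natCast, one_mul] at hh
      exact hgcd p hp hh.1 hh.2.1 hh.2.2
    · refine ⟨(x1 * x2 * x3 * (y 0 * y 1 * y 2 * y 3 * y 4 * y 5) : ℕ), ?_⟩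
      simp only [F, G, M1, M2, M3]
      push_cast
      ring
  have : Ω.card ≤ (A B).ncard := by
    rw [← card_image_of_injOn hinj, ← Set.ncard_coe_finset]
    exact Set.ncard_le_ncard hsub (A_finite hB)
  exact_mod_cast this

lemma A_lower' {Q : ℕ} (hQ : 1 < Q) (hPQ : ∀ d, 1 < d → d ≤ 420 → d ∣ Q) {B : ℝ}
    (hB : (2000 * (Q : ℝ) ^ 6) ^ 2 ≤ B) :
    (1 / 16 * (1 / (12 * (Q : ℝ))) ^ 6) * B * Real.log B ^ 6 ≤ ((A B).ncard : ℝ) := by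
  have hQ1 : (1 : ℝ) < Q := by exact_mod_cast hQ
  set R : ℝ := 2000 * (Q : ℝ) ^ 6 with hR
  have hR1 : 1 ≤ R := by
    have := one_le_pow₀ (n := 6) hQ1.le
    linarith
  have hB0 : 0 < B := by nlinarith
  have hlogB : 0 ≤ Real.log B := Real.log_nonneg (by nlinarith)
  set z : ℝ := (B / R) ^ (1 / 6 : ℝ) with hz
  have hz0 : 0 ≤ z := by positivity
  have hz6 : z ^ 6 = B / R := by
    rw [hz, ← Real.rpow_natCast, ← Real.rpow_mul (by positivity)]
    norm_num
  set K := ⌊z⌋₊ with hK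
  have hKz : (K : ℝ) ≤ z := Nat.floor_le hz0
  have hzK : z < K + 1 := Nat.lt_floor_add_one z
  have h1 : 1000 * ((Q * K : ℕ) : ℝ) ^ 6 ≤ B / 2 := by
    have : (K : ℝ) ^ 6 ≤ B / R := by rw [← hz6]; gcongr
    rw [le_div_iff₀ (by positivity)] at this
    push_cast
    rw [mul_pow]
    rw [hR] at this
    linarith
  have h2 := A_lower hB0.le le_rfl hQ hPQ h1
  have h3 := W_ge Q K hQ
  have h4 : Real.log B / 12 ≤ Real.log (K + 1) := by
    have h5 : Real.log (B / R) ≤ 6 * Real.log (K + 1) := by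
      rw [← hz6, show (6 : ℝ) * Real.log (K + 1) = Real.log (((K : ℝ) + 1) ^ 6) by
        rw [Real.log_pow]; norm_num]
      apply Real.log_le_log (by rw [hz6]; positivity)
      gcongr
    rw [Real.log_div hB0.ne' (by positivity)] at h5
    have h6 : 2 * Real.log R ≤ Real.log B := by
      rw [show (2 : ℝ) * Real.log R = Real.log (R ^ 2) by rw [Real.log_pow]; norm_num]
      exact Real.log_le_log (by positivity) hB
    linarith
  have h7 : Real.log B / (12 * Q) ≤ W Q K := by
    refine le_trans ?_ h3
    rw [← div_div]
    gcongr
  calc _ = (1 / 8) * (B / 2 * (Real.log B / (12 * Q)) ^ 6) := by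
        field_simp; ring
    _ ≤ (1 / 8) * (B / 2 * W Q K ^ 6) := by gcongr
    _ ≤ _ := h2

lemma exists_Q : ∃ Q : ℕ, 1 < Q ∧ ∀ d, 1 < d → d ≤ 420 → d ∣ Q := by
  refine ⟨Nat.factorial 420, ?_, fun d h1 h2 => Nat.dvd_factorial (by omega) h2⟩
  exact Nat.one_lt_factorial.2 (by norm_num)

end CubicCount

/-- The number of triples `(a₁,a₂,a₃)` of nonzero integers with
`|aᵢ| ≤ B`, `gcd(a₁,a₂,a₃) = 1` and `a₁a₂a₃ = 2r³` for some rational `r` has exact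
order of magnitude `B·(log B)⁶`. -/
theorem stmt_5 :
    ∃ c₁ c₂ B₀ : ℝ, 0 < c₁ ∧ 0 < c₂ ∧ 3 ≤ B₀ ∧ ∀ B : ℝ, B₀ ≤ B →
      c₁ * B * Real.log B ^ 6 ≤
        ({t : ℤ × ℤ × ℤ | t.1 ≠ 0 ∧ t.2.1 ≠ 0 ∧ t.2.2 ≠ 0 ∧
          |(t.1 : ℝ)| ≤ B ∧ |(t.2.1 : ℝ)| ≤ B ∧ |(t.2.2 : ℝ)| ≤ B ∧
          Int.gcd (Int.gcd t.1 t.2.1) t.2.2 = 1 ∧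
          ∃ r : ℚ, ((t.1 : ℚ) * (t.2.1 : ℚ) * (t.2.2 : ℚ)) = 2 * r ^ 3}.ncard : ℝ) ∧
      ({t : ℤ × ℤ × ℤ | t.1 ≠ 0 ∧ t.2.1 ≠ 0 ∧ t.2.2 ≠ 0 ∧
          |(t.1 : ℝ)| ≤ B ∧ |(t.2.1 : ℝ)| ≤ B ∧ |(t.2.2 : ℝ)| ≤ B ∧
          Int.gcd (Int.gcd t.1 t.2.1) t.2.2 = 1 ∧
          ∃ r : ℚ, ((t.1 : ℚ) * (t.2.1 : ℚ) * (t.2.2 : ℚ)) = 2 * r ^ 3}.ncard : ℝ) ≤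
        c₂ * B * Real.log B ^ 6 := by
  obtain ⟨Q, hQ, hPQ⟩ := CubicCount.exists_Q
  have hQ1 : (1 : ℝ) < Q := by exact_mod_cast hQ
  have h6 := one_le_pow₀ (n := 6) hQ1.le
  have hB3 : (3 : ℝ) ≤ (2000 * (Q : ℝ) ^ 6) ^ 2 := by nlinarith
  refine ⟨1 / 16 * (1 / (12 * (Q : ℝ))) ^ 6, 64 * 2 ^ 6, (2000 * (Q : ℝ) ^ 6) ^ 2,
    by positivity, by norm_num, hB3, fun B hB => ⟨?_, ?_⟩⟩
  · exact CubicCount.A_lower' hQ hPQ hB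
  · exact CubicCount.A_upper (hB3.trans hB)
end

section
/- There exist constants c₁, c₂ > 0 and B₀ ≥ 3 such that for all real B ≥ B₀, the number of quadruples (a₀, a₁, a₂, a₃) of nonzero integers with |aᵢ| ≤ B for all i, gcd(a₁,a₂,a₃) = 1, and such that a₁·a₂·a₃ = 2·r³ for some rational number r, lies between c₁·B²·(log B)⁶ and c₂·B²·(log B)⁶. -/
/-- The monomials in the six off-diagonal parameters. -/
def bb (y : Fin 6 → ℕ) : Fin 3 → ℕ :=
  ![(y 0 * y 1) ^ 2 * (y 2 * y 4), (y 2 * y 3) ^ 2 * (y 0 * y 5), (y 4 * y 5) ^ 2 * (y 1 * y 3)]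

lemma prod_bb (y : Fin 6 → ℕ) : ∏ i, bb y i = (∏ k, y k) ^ 3 := by
  simp [bb, Fin.prod_univ_succ]
  ring

lemma bb_pos (y : Fin 6 → ℕ) (hy : ∀ k, 0 < y k) (i : Fin 3) : 0 < bb y i := by
  fin_cases i <;> simp only [bb] <;>
  exact Nat.mul_pos (Nat.pow_pos (Nat.mul_pos (hy _) (hy _))) (Nat.mul_pos (hy _) (hy _))

lemma bb_le (y : Fin 6 → ℕ) (Y : ℕ) (hy : ∀ k, y k ≤ Y) (i : Fin 3) : bb y i ≤ Y ^ 6 := by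
  have e : Y ^ 6 = (Y * Y) ^ 2 * (Y * Y) := by ring
  rw [e]
  fin_cases i <;> simp only [bb] <;>
  exact Nat.mul_le_mul (Nat.pow_le_pow_left (Nat.mul_le_mul (hy _) (hy _)) 2)
    (Nat.mul_le_mul (hy _) (hy _))

/-- Finset of admissible `x`. -/
def XS (M b f : ℕ) : Finset ℕ := (Finset.Icc 1 M).filter (fun x => x ^ 3 * b ≤ M ∧ f ∣ x)

lemma cube_le_iff (M b x : ℕ) (hb : 0 < b) :
    x ^ 3 * b ≤ M ↔ (x : ℝ) ≤ ((M : ℝ) / b) ^ (1 / 3 : ℝ) := by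
  have hb' : (0 : ℝ) < b := by exact_mod_cast hb
  have h := Real.le_rpow_inv_iff_of_pos (x := (x : ℝ)) (y := (M : ℝ) / b) (z := 3)
    (by positivity) (by positivity) (by norm_num)
  rw [one_div, h, le_div_iff₀ hb']
  norm_cast

lemma card_XS_le (M b f : ℕ) (hb : 0 < b) (hf : 0 < f) :
    ((XS M b f).card : ℝ) ≤ ((M : ℝ) / b) ^ (1 / 3 : ℝ) / f := by
  set X := ((M : ℝ) / b) ^ (1 / 3 : ℝ) with hX
  have hX0 : 0 ≤ X := by positivity
  have hf' : (0 : ℝ) < f := by exact_mod_cast hf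
  have hsub : XS M b f ⊆ (Finset.Icc 1 ⌊X / f⌋₊).image (fun z => f * z) := by
    intro x hx
    simp only [XS, Finset.mem_filter, Finset.mem_Icc] at hx
    obtain ⟨⟨h1, _⟩, h2, z, rfl⟩ := hx
    rw [cube_le_iff _ _ _ hb] at h2
    simp only [Finset.mem_image, Finset.mem_Icc]
    refine ⟨z, ⟨?_, ?_⟩, rfl⟩
    · exact Nat.pos_of_mul_pos_left h1
    · apply Nat.le_floor
      rw [le_div_iff₀ hf']
      push_cast at h2
      linarith
  have := (Finset.card_le_card hsub).trans Finset.card_image_le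
  rw [Nat.card_Icc] at this
  calc ((XS M b f).card : ℝ) ≤ (⌊X / f⌋₊ : ℝ) := by exact_mod_cast this
    _ ≤ X / f := Nat.floor_le (by positivity)

lemma le_card_XS (M b : ℕ) (hb : 0 < b) (hbM : b ≤ M) :
    ((M : ℝ) / b) ^ (1 / 3 : ℝ) / 2 ≤ ((XS M b 1).card : ℝ) := by
  set X := ((M : ℝ) / b) ^ (1 / 3 : ℝ) with hX
  have h1 : 1 ≤ X := by
    have := (cube_le_iff M b 1 hb).1 (by simpa using hbM)
    rwa [Nat.cast_one] at this
  have hsub : Finset.Icc 1 ⌊X⌋₊ ⊆ XS M b 1 := by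
    intro x hx
    simp only [Finset.mem_Icc] at hx
    have h3 : x ^ 3 * b ≤ M := by
      rw [cube_le_iff _ _ _ hb]
      exact (Nat.le_floor_iff (by positivity)).1 hx.2
    simp only [XS, Finset.mem_filter, Finset.mem_Icc]
    refine ⟨⟨hx.1, ?_⟩, h3, one_dvd _⟩
    calc x ≤ x ^ 3 := Nat.le_self_pow (by norm_num) x
      _ ≤ x ^ 3 * b := Nat.le_mul_of_pos_right _ hb
      _ ≤ M := h3
  have h2 := Finset.card_le_card hsub
  rw [Nat.card_Icc] at h2
  have h3 : (⌊X⌋₊ : ℝ) ≤ ((XS M b 1).card : ℝ) := by exact_mod_cast h2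
  have h4 := Nat.lt_floor_add_one X
  have h5 : (1 : ℝ) ≤ ⌊X⌋₊ := by exact_mod_cast (Nat.one_le_floor_iff X).2 h1
  linarith

lemma prod_roots (M : ℕ) (y : Fin 6 → ℕ) :
    ∏ i, ((M : ℝ) / bb y i) ^ (1 / 3 : ℝ) = M * ∏ k, (1 / (y k : ℝ)) := by
  rw [Real.finsetProd_rpow _ _ (fun i _ => by positivity)]
  have : ∏ i, ((M : ℝ) / bb y i) = (M * ∏ k, (1 / (y k : ℝ))) ^ 3 := by
    have h := prod_bb y
    have h' : ∏ i, (bb y i : ℝ) = (∏ k, (y k : ℝ)) ^ 3 := by exact_mod_cast h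
    rw [Finset.prod_div_distrib, h']
    simp [div_eq_mul_inv, mul_pow]
  rw [this, ← Real.rpow_natCast, ← Real.rpow_mul]
  · norm_num
  · exact mul_nonneg (by positivity) (Finset.prod_nonneg fun k _ => by positivity)

/-- Parameter set with divisibility conditions. -/
def Om (M : ℕ) (S : Finset ℕ) (e : Fin 6 → ℕ) (f : Fin 3 → ℕ) :
    Finset ((_ : Fin 6 → ℕ) × (Fin 3 → ℕ)) :=
  (Fintype.piFinset fun k => S.filter (fun z => e k ∣ z)).sigma
    (fun y => Fintype.piFinset fun i => XS M (bb y i) (f i))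

/-- Harmonic sum over a set. -/
noncomputable def HS (S : Finset ℕ) : ℝ := ∑ z ∈ S, 1 / (z : ℝ)

lemma HS_nonneg (S : Finset ℕ) : 0 ≤ HS S := Finset.sum_nonneg fun _ _ => by positivity

lemma HS_dvd (S : Finset ℕ) (e : ℕ) (he : 0 < e) (hc : ∀ d z, d * z ∈ S → z ∈ S) :
    ∑ z ∈ S.filter (fun z => e ∣ z), 1 / (z : ℝ) ≤ HS S / e := by
  have hsub : S.filter (fun z => e ∣ z) ⊆ S.image (fun z => e * z) := by
    intro z hz
    simp only [Finset.mem_filter] at hz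
    obtain ⟨hz, w, rfl⟩ := hz
    exact Finset.mem_image.2 ⟨w, hc _ _ hz, rfl⟩
  calc _ ≤ ∑ z ∈ S.image (fun z => e * z), 1 / (z : ℝ) :=
        Finset.sum_le_sum_of_subset_of_nonneg hsub fun _ _ _ => by positivity
    _ = ∑ z ∈ S, 1 / ((e * z : ℕ) : ℝ) := by
        rw [Finset.sum_image]
        intro a _ b _ hab
        exact Nat.eq_of_mul_eq_mul_left he hab
    _ = HS S / e := by
        rw [HS, Finset.sum_div]
        refine Finset.sum_congr rfl fun z _ => ?_
        push_cast
        rw [div_div, mul_comm]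

lemma card_Om (M : ℕ) (S : Finset ℕ) (e : Fin 6 → ℕ) (f : Fin 3 → ℕ) :
    ((Om M S e f).card : ℝ) =
      ∑ y ∈ Fintype.piFinset (fun k => S.filter (fun z => e k ∣ z)),
        ∏ i, ((XS M (bb y i) (f i)).card : ℝ) := by
  rw [Om, Finset.card_sigma]
  push_cast
  refine Finset.sum_congr rfl fun y _ => ?_
  rw [Fintype.card_piFinset]
  push_cast
  rfl

lemma card_Om_le (M : ℕ) (S : Finset ℕ) (e : Fin 6 → ℕ) (f : Fin 3 → ℕ)
    (he : ∀ k, 0 < e k) (hf : ∀ i, 0 < f i) (hS : ∀ z ∈ S, 0 < z)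
    (hc : ∀ d z, d * z ∈ S → z ∈ S) :
    ((Om M S e f).card : ℝ) ≤ M * HS S ^ 6 / ((∏ k, (e k : ℝ)) * ∏ i, (f i : ℝ)) := by
  rw [card_Om]
  have step : ∀ y ∈ Fintype.piFinset (fun k => S.filter (fun z => e k ∣ z)),
      ∏ i, ((XS M (bb y i) (f i)).card : ℝ) ≤
        (M / ∏ i, (f i : ℝ)) * ∏ k, (1 / (y k : ℝ)) := by
    intro y hy
    have hy0 : ∀ k, 0 < y k := fun k => by
      have := Fintype.mem_piFinset.1 hy k
      exact hS _ (Finset.mem_filter.1 this).1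
    calc _ ≤ ∏ i, (((M : ℝ) / bb y i) ^ (1 / 3 : ℝ) / f i) :=
          Finset.prod_le_prod (fun _ _ => by positivity)
            fun i _ => card_XS_le _ _ _ (bb_pos y hy0 i) (hf i)
      _ = _ := by
          rw [Finset.prod_div_distrib, prod_roots M y]
          ring
  refine (Finset.sum_le_sum step).trans ?_
  rw [← Finset.mul_sum, ← Finset.prod_univ_sum (fun k => S.filter (fun z => e k ∣ z))
    (fun _ z => 1 / (z : ℝ))]
  have h2 : ∏ k : Fin 6, ∑ z ∈ S.filter (fun z => e k ∣ z), 1 / (z : ℝ) ≤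
      ∏ k, (HS S / e k) :=
    Finset.prod_le_prod (fun _ _ => Finset.sum_nonneg fun _ _ => by positivity)
      fun k _ => HS_dvd S (e k) (he k) hc
  rw [Finset.prod_div_distrib] at h2
  simp only [Finset.prod_const, Finset.card_univ, Fintype.card_fin] at h2
  calc _ ≤ (M / ∏ i, (f i : ℝ)) * (HS S ^ 6 / ∏ k, (e k : ℝ)) :=
        mul_le_mul_of_nonneg_left h2
          (div_nonneg (by positivity) (Finset.prod_nonneg fun _ _ => by positivity))
    _ = _ := by rw [div_mul_div_comm, mul_comm (∏ i, (f i : ℝ))]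

lemma le_card_Om (M : ℕ) (S : Finset ℕ) (hS : ∀ z ∈ S, 0 < z) (hSM : ∀ z ∈ S, z ^ 6 ≤ M) :
    M * HS S ^ 6 / 8 ≤ ((Om M S 1 1).card : ℝ) := by
  rw [card_Om]
  have hfil : (fun k : Fin 6 => S.filter (fun z => (1 : Fin 6 → ℕ) k ∣ z)) = fun _ => S := by
    funext k
    simp
  rw [hfil]
  have step : ∀ y ∈ Fintype.piFinset (fun _ : Fin 6 => S),
      ((M : ℝ) / 8) * ∏ k, (1 / (y k : ℝ)) ≤
      ∏ i, ((XS M (bb y i) ((1 : Fin 3 → ℕ) i)).card : ℝ) := by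
    intro y hy
    have hyS : ∀ k, y k ∈ S := fun k => Fintype.mem_piFinset.1 hy k
    have hy0 : ∀ k, 0 < y k := fun k => hS _ (hyS k)
    have hle : ∀ i, bb y i ≤ M := by
      intro i
      obtain ⟨k, hk⟩ := Finite.exists_max y
      exact (bb_le y (y k) hk i).trans (hSM _ (hyS k))
    calc _ = ∏ i, (((M : ℝ) / bb y i) ^ (1 / 3 : ℝ) / 2) := by
          rw [Finset.prod_div_distrib (f := fun i => ((M : ℝ) / bb y i) ^ (1 / 3 : ℝ)),
            prod_roots M y]
          simp
          ring
      _ ≤ _ := Finset.prod_le_prod (fun _ _ => by positivity)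
            fun i _ => le_card_XS _ _ (bb_pos y hy0 i) (hle i)
  refine le_trans ?_ (Finset.sum_le_sum step)
  rw [← Finset.mul_sum, ← Finset.prod_univ_sum (fun _ => S)
    (fun _ z => 1 / (z : ℝ))]
  simp only [Finset.prod_const, Finset.card_univ, Fintype.card_fin]
  rw [HS]
  apply le_of_eq
  ring

/-- The set of values coprime to `P!`. -/
def SS (P Y : ℕ) : Finset ℕ := (Finset.Icc 1 Y).filter (fun z => Nat.Coprime z P.factorial)

/-- The test vector with two coordinates multiplied by `d`. -/
def tv (i j : Fin 6 ⊕ Fin 3) (d : ℕ) : Fin 6 ⊕ Fin 3 → ℕ :=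
  Pi.mulSingle i d * Pi.mulSingle j d

/-- Nonexistence of a large common divisor. -/
def Good (P M : ℕ) (t : (_ : Fin 6 → ℕ) × (Fin 3 → ℕ)) : Prop :=
  ∀ i j : Fin 6 ⊕ Fin 3, ∀ d ∈ Finset.Ioc P M, ¬ ∀ k, tv i j d k ∣ Sum.elim t.1 t.2 k

lemma tv_pos (i j : Fin 6 ⊕ Fin 3) (d : ℕ) (hd : 0 < d) (k) : 0 < tv i j d k := by
  simp only [tv, Pi.mul_apply]
  apply Nat.mul_pos <;>
  · rw [Pi.mulSingle_apply]
    split_ifs <;> omega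

lemma tv_prod (i j : Fin 6 ⊕ Fin 3) (d : ℕ) : ∏ k, tv i j d k = d ^ 2 := by
  simp only [tv, Pi.mul_apply, Finset.prod_mul_distrib]
  simp [sq]

lemma sum_sq_small (P M : ℕ) (hP : 0 < P) (hP' : 1296 ≤ P) :
    ∑ d ∈ Finset.Ioc P M, ((d : ℝ) ^ 2)⁻¹ ≤ 1 / 1296 := by
  rcases le_total P M with h | h
  · have h8 := sum_Ioc_inv_sq_le_sub (α := ℝ) hP.ne' h
    have h9 : (P : ℝ)⁻¹ ≤ 1 / 1296 := by
      rw [one_div]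
      apply inv_anti₀ (by norm_num)
      exact_mod_cast hP'
    have h10 : (0 : ℝ) ≤ (M : ℝ)⁻¹ := by positivity
    linarith
  · rw [Finset.Ioc_eq_empty (by omega)]
    norm_num

set_option maxHeartbeats 400000 in
open Classical in
lemma card_good (M Y P : ℕ) (hP : 0 < P) (hP' : 1296 ≤ P) (hY : Y ^ 6 ≤ M) :
    M * HS (SS P Y) ^ 6 / 16 ≤ (((Om M (SS P Y) 1 1).filter (Good P M)).card : ℝ) := by
  set S := SS P Y with hSdef
  have hS : ∀ z ∈ S, 0 < z := fun z hz => by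
    simp only [hSdef, SS, Finset.mem_filter, Finset.mem_Icc] at hz
    omega
  have hSM : ∀ z ∈ S, z ^ 6 ≤ M := fun z hz => by
    simp only [hSdef, SS, Finset.mem_filter, Finset.mem_Icc] at hz
    exact (Nat.pow_le_pow_left hz.1.2 6).trans hY
  have hc : ∀ d z, d * z ∈ S → z ∈ S := fun d z hz => by
    simp only [hSdef, SS, Finset.mem_filter, Finset.mem_Icc] at hz ⊢
    have hd : 0 < d := Nat.pos_of_mul_pos_right hz.1.1
    refine ⟨⟨Nat.pos_of_mul_pos_left hz.1.1, ?_⟩, ?_⟩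
    · exact (Nat.le_mul_of_pos_left z hd).trans hz.1.2
    · exact Nat.Coprime.coprime_mul_left hz.2
  have hlow := le_card_Om M S hS hSM
  have hbad : (Om M S 1 1).filter (fun t => ¬ Good P M t) ⊆
      (Finset.univ : Finset ((Fin 6 ⊕ Fin 3) × (Fin 6 ⊕ Fin 3))).biUnion fun ij =>
        (Finset.Ioc P M).biUnion fun d =>
          Om M S (fun k => tv ij.1 ij.2 d (Sum.inl k)) (fun k => tv ij.1 ij.2 d (Sum.inr k)) := by
    rintro ⟨y, x⟩ ht
    rw [Finset.mem_filter] at ht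
    obtain ⟨h1, h2⟩ := ht
    unfold Good at h2
    push Not at h2
    obtain ⟨i, j, d, hd, hk⟩ := h2
    simp only [Finset.mem_biUnion, Finset.mem_univ, true_and]
    refine ⟨(i, j), d, hd, ?_⟩
    simp only [Om, Finset.mem_sigma, Fintype.mem_piFinset, XS, Finset.mem_filter] at h1 ⊢
    refine ⟨fun k => ⟨(h1.1 k).1, hk (Sum.inl k)⟩, fun i => ⟨(h1.2 i).1, (h1.2 i).2.1, ?_⟩⟩
    exact hk (Sum.inr i)
  have hMH : 0 ≤ M * HS S ^ 6 := mul_nonneg (Nat.cast_nonneg _) (pow_nonneg (HS_nonneg S) 6)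
  have hbadc : (((Om M S 1 1).filter (fun t => ¬ Good P M t)).card : ℝ) ≤ M * HS S ^ 6 / 16 := by
    have h1 := (Finset.card_le_card hbad).trans Finset.card_biUnion_le
    have h2 : ∀ ij : (Fin 6 ⊕ Fin 3) × (Fin 6 ⊕ Fin 3),
        ((((Finset.Ioc P M).biUnion fun d =>
          Om M S (fun k => tv ij.1 ij.2 d (Sum.inl k))
            (fun k => tv ij.1 ij.2 d (Sum.inr k))).card : ℕ) : ℝ) ≤ M * HS S ^ 6 / 1296 := by
      intro ij
      have h3 : ((((Finset.Ioc P M).biUnion fun d =>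
          Om M S (fun k => tv ij.1 ij.2 d (Sum.inl k))
            (fun k => tv ij.1 ij.2 d (Sum.inr k))).card : ℕ) : ℝ) ≤
          ∑ d ∈ Finset.Ioc P M, ((Om M S (fun k => tv ij.1 ij.2 d (Sum.inl k))
            (fun k => tv ij.1 ij.2 d (Sum.inr k))).card : ℝ) := by
        exact_mod_cast Finset.card_biUnion_le
      refine h3.trans ?_
      have h4 : ∀ d ∈ Finset.Ioc P M, ((Om M S (fun k => tv ij.1 ij.2 d (Sum.inl k))
            (fun k => tv ij.1 ij.2 d (Sum.inr k))).card : ℝ) ≤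
            M * HS S ^ 6 * ((d : ℝ) ^ 2)⁻¹ := by
        intro d hd
        have hd0 : 0 < d := by
          have := (Finset.mem_Ioc.1 hd).1
          omega
        refine (card_Om_le M S _ _ (fun k => tv_pos _ _ _ hd0 _) (fun k => tv_pos _ _ _ hd0 _)
          hS hc).trans ?_
        have h5 := tv_prod ij.1 ij.2 d
        rw [Fintype.prod_sum_type] at h5
        have h6 : (∏ k, (tv ij.1 ij.2 d (Sum.inl k) : ℝ)) *
            ∏ k, (tv ij.1 ij.2 d (Sum.inr k) : ℝ) = (d : ℝ) ^ 2 := by exact_mod_cast h5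
        rw [h6, div_eq_mul_inv]
      refine (Finset.sum_le_sum h4).trans ?_
      rw [← Finset.mul_sum]
      have h7 := sum_sq_small P M hP hP'
      calc _ ≤ M * HS S ^ 6 * (1 / 1296) := mul_le_mul_of_nonneg_left h7 hMH
        _ = _ := by ring
    have h3 : (((Om M S 1 1).filter (fun t => ¬ Good P M t)).card : ℝ) ≤
        ∑ ij : (Fin 6 ⊕ Fin 3) × (Fin 6 ⊕ Fin 3), ((((Finset.Ioc P M).biUnion fun d =>
          Om M S (fun k => tv ij.1 ij.2 d (Sum.inl k))
            (fun k => tv ij.1 ij.2 d (Sum.inr k))).card : ℕ) : ℝ) := by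
      exact_mod_cast h1
    refine h3.trans ((Finset.sum_le_sum fun ij _ => h2 ij).trans ?_)
    rw [Finset.sum_const, Finset.card_univ]
    simp only [Fintype.card_prod, Fintype.card_sum, Fintype.card_fin]
    rw [nsmul_eq_mul]
    norm_num
    linarith
  have hsum := Finset.card_filter_add_card_filter_not (s := Om M S 1 1) (Good P M)
  have hsum' : (((Om M S 1 1).filter (Good P M)).card : ℝ) +
    (((Om M S 1 1).filter (fun t => ¬ Good P M t)).card : ℝ) = ((Om M S 1 1).card : ℝ) := by
    exact_mod_cast hsum
  linarith

lemma HS_lower (P Y : ℕ) (hQ : P.factorial ^ 2 ≤ Y) :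
    Real.log Y / (4 * P.factorial) ≤ HS (SS P Y) := by
  set Q := P.factorial with hQd
  have hQ0 : 0 < Q := Nat.factorial_pos P
  have hY0 : 0 < Y := lt_of_lt_of_le (by positivity) hQ
  set K := (Y - 1) / Q with hK
  have hKQ : K * Q ≤ Y - 1 := Nat.div_mul_le_self _ _
  have hKY : Y ≤ (K + 1) * Q := by
    have := Nat.lt_div_mul_add (a := Y - 1) hQ0
    rw [← hK] at this
    have e : (K + 1) * Q = K * Q + Q := by ring
    omega
  have hsub : (Finset.range K).image (fun k => 1 + (k + 1) * Q) ⊆ SS P Y := by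
    intro z hz
    simp only [Finset.mem_image, Finset.mem_range] at hz
    obtain ⟨k, hk, rfl⟩ := hz
    simp only [SS, Finset.mem_filter, Finset.mem_Icc]
    refine ⟨⟨by omega, ?_⟩, ?_⟩
    · have : (k + 1) * Q ≤ K * Q := Nat.mul_le_mul_right _ hk
      omega
    · rw [← hQd]
      simp
  have h1 : ∑ k ∈ Finset.range K, 1 / ((1 + (k + 1) * Q : ℕ) : ℝ) ≤ HS (SS P Y) := by
    rw [HS]
    refine le_trans (le_of_eq ?_)
      (Finset.sum_le_sum_of_subset_of_nonneg hsub fun _ _ _ => by positivity)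
    rw [Finset.sum_image]
    intro a _ b _ hab
    have : (a + 1) * Q = (b + 1) * Q := by
      simpa using hab
    have := Nat.eq_of_mul_eq_mul_right hQ0 this
    omega
  have h2 : (harmonic K : ℝ) / (2 * Q) ≤ ∑ k ∈ Finset.range K, 1 / ((1 + (k + 1) * Q : ℕ) : ℝ) := by
    rw [harmonic]
    push_cast
    rw [Finset.sum_div]
    refine Finset.sum_le_sum fun k _ => ?_
    have hq : (1 : ℝ) ≤ Q := by exact_mod_cast hQ0
    rw [inv_eq_one_div, div_div]
    apply one_div_le_one_div_of_le (by positivity)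
    nlinarith [(Nat.cast_nonneg k : (0 : ℝ) ≤ k)]
  have h3 := log_add_one_le_harmonic K
  have h4 : Real.log Y / 2 ≤ Real.log (↑(K + 1)) := by
    have a1 : Real.log Y ≤ Real.log (↑(K + 1)) + Real.log Q := by
      rw [← Real.log_mul (by positivity) (by positivity)]
      apply Real.log_le_log (by positivity)
      exact_mod_cast hKY
    have a2 : 2 * Real.log Q ≤ Real.log Y := by
      have : Real.log ((Q : ℝ) ^ 2) ≤ Real.log Y := by
        apply Real.log_le_log (by positivity)
        exact_mod_cast hQ
      rwa [Real.log_pow] at this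
    linarith
  have h5 : Real.log Y / (4 * Q) ≤ (harmonic K : ℝ) / (2 * Q) := by
    have e : Real.log Y / (4 * Q) = (Real.log Y / 2) / (2 * Q) := by
      rw [div_div]
      ring
    rw [e]
    apply div_le_div_of_nonneg_right _ (by positivity)
    linarith
  linarith

/-- The properties of good parameters that are used. -/
structure Nice (P : ℕ) (y : Fin 6 → ℕ) (x : Fin 3 → ℕ) : Prop where
  ypos : ∀ k, 0 < y k
  xpos : ∀ k, 0 < x k
  yprime : ∀ k q, q.Prime → q ∣ y k → P < q
  pair : ∀ i j, i ≠ j → ∀ d, P < d → d ∣ Sum.elim y x i → d ∣ Sum.elim y x j → False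
  sqf : ∀ i d, P < d → d * d ∣ Sum.elim y x i → False

lemma nice_of_good (P M Y : ℕ) (hYM : Y ≤ M) (t : (_ : Fin 6 → ℕ) × (Fin 3 → ℕ))
    (ht : t ∈ Om M (SS P Y) 1 1) (hg : Good P M t) : Nice P t.1 t.2 := by
  obtain ⟨y, x⟩ := t
  simp only [Om, Finset.mem_sigma, Fintype.mem_piFinset, XS, Finset.mem_filter, SS,
    Finset.mem_Icc] at ht
  obtain ⟨hy, hx⟩ := ht
  have hb : ∀ i, 0 < Sum.elim y x i ∧ Sum.elim y x i ≤ M := by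
    rintro (k | k)
    · have := (hy k).1.1
      simp only [Sum.elim_inl]
      omega
    · have := (hx k).1
      simp only [Sum.elim_inr]
      omega
  refine ⟨fun k => (hb (Sum.inl k)).1, fun k => (hb (Sum.inr k)).1, ?_, ?_, ?_⟩
  · intro k q hq hqy
    by_contra hle
    have h1 : q ∣ P.factorial := (hq.dvd_factorial).2 (by omega)
    have h2 := (hy k).1.2
    exact Nat.not_coprime_of_dvd_of_dvd hq.one_lt hqy h1 h2
  · intro i j hij d hd hi hj
    refine hg i j d (Finset.mem_Ioc.2 ⟨hd, (Nat.le_of_dvd (hb i).1 hi).trans (hb i).2⟩) ?_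
    intro k
    simp only [tv, Pi.mul_apply, Pi.mulSingle_apply]
    by_cases h1 : k = i
    · subst h1
      simpa [hij] using hi
    · by_cases h2 : k = j
      · subst h2
        simpa [h1] using hj
      · simp [h1, h2]
  · intro i d hd hi
    refine hg i i d (Finset.mem_Ioc.2 ⟨hd, (Nat.le_of_dvd (hb i).1
      ((Dvd.intro _ rfl).trans hi)).trans (hb i).2⟩) ?_
    intro k
    simp only [tv, Pi.mul_apply, Pi.mulSingle_apply]
    by_cases h1 : k = i
    · subst h1
      simpa using hi
    · simp [h1]

lemma nice_sum {P : ℕ} {y : Fin 6 → ℕ} {x : Fin 3 → ℕ} (h : Nice P y x) (p : ℕ) (hp : p.Prime) :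
    ∑ k, (y k).factorization p ≤ 1 := by
  by_cases hex : ∃ k, p ∣ y k
  · obtain ⟨k, hk⟩ := hex
    have hP := h.yprime k p hp hk
    rw [Finset.sum_eq_single k]
    · by_contra hlt
      have h2 : p ^ 2 ∣ y k := (hp.pow_dvd_iff_le_factorization (h.ypos k).ne').2 (by omega)
      rw [sq] at h2
      exact h.sqf (Sum.inl k) p hP h2
    · intro j _ hj
      apply Nat.factorization_eq_zero_of_not_dvd
      intro hd
      exact h.pair (Sum.inl j) (Sum.inl k) (by simpa using hj) p hP hd hk
    · simp
  · push Not at hex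
    rw [Finset.sum_eq_zero]
    · omega
    · intro k _
      exact Nat.factorization_eq_zero_of_not_dvd (hex k)

lemma fac_bb (x c b0 b1 b2 b3 p : ℕ) (hx : 0 < x) (hc : 0 < c) (h0 : 0 < b0)
    (h1 : 0 < b1) (h2 : 0 < b2) (h3 : 0 < b3) :
    (c * (x ^ 3 * ((b0 * b1) ^ 2 * (b2 * b3)))).factorization p = c.factorization p +
      3 * x.factorization p + 2 * (b0.factorization p + b1.factorization p) +
      (b2.factorization p + b3.factorization p) := by
  rw [Nat.factorization_mul (by positivity) (by positivity),
    Nat.factorization_mul (by positivity) (by positivity),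
    Nat.factorization_mul (by positivity) (by positivity),
    Nat.factorization_mul h2.ne' h3.ne', Nat.factorization_pow, Nat.factorization_pow,
    Nat.factorization_mul h0.ne' h1.ne']
  simp
  ring

/-- The triple attached to the parameters. -/
def aT (y : Fin 6 → ℕ) (x : Fin 3 → ℕ) : Fin 3 → ℕ := fun i => ![2, 1, 1] i * (x i ^ 3 * bb y i)

lemma one_hot (a0 a1 a2 a3 a4 a5 : ℕ) (s : a0 + a1 + a2 + a3 + a4 + a5 ≤ 1) :
    (a0 = (if (2 * (a0 + a1) + (a2 + a4)) % 3 = 2 ∧ (2 * (a2 + a3) + (a0 + a5)) % 3 = 1 then 1 else 0)) ∧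
    (a1 = (if (2 * (a0 + a1) + (a2 + a4)) % 3 = 2 ∧ (2 * (a4 + a5) + (a1 + a3)) % 3 = 1 then 1 else 0)) ∧
    (a2 = (if (2 * (a0 + a1) + (a2 + a4)) % 3 = 1 ∧ (2 * (a2 + a3) + (a0 + a5)) % 3 = 2 then 1 else 0)) ∧
    (a3 = (if (2 * (a2 + a3) + (a0 + a5)) % 3 = 2 ∧ (2 * (a4 + a5) + (a1 + a3)) % 3 = 1 then 1 else 0)) ∧
    (a4 = (if (2 * (a0 + a1) + (a2 + a4)) % 3 = 1 ∧ (2 * (a4 + a5) + (a1 + a3)) % 3 = 2 then 1 else 0)) ∧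
    (a5 = (if (2 * (a2 + a3) + (a0 + a5)) % 3 = 1 ∧ (2 * (a4 + a5) + (a1 + a3)) % 3 = 2 then 1 else 0)) := by
  have key : ∀ b0 ∈ Finset.range 2, ∀ b1 ∈ Finset.range 2, ∀ b2 ∈ Finset.range 2,
      ∀ b3 ∈ Finset.range 2, ∀ b4 ∈ Finset.range 2, ∀ b5 ∈ Finset.range 2,
      b0 + b1 + b2 + b3 + b4 + b5 ≤ 1 →
    (b0 = (if (2 * (b0 + b1) + (b2 + b4)) % 3 = 2 ∧ (2 * (b2 + b3) + (b0 + b5)) % 3 = 1 then 1 else 0)) ∧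
    (b1 = (if (2 * (b0 + b1) + (b2 + b4)) % 3 = 2 ∧ (2 * (b4 + b5) + (b1 + b3)) % 3 = 1 then 1 else 0)) ∧
    (b2 = (if (2 * (b0 + b1) + (b2 + b4)) % 3 = 1 ∧ (2 * (b2 + b3) + (b0 + b5)) % 3 = 2 then 1 else 0)) ∧
    (b3 = (if (2 * (b2 + b3) + (b0 + b5)) % 3 = 2 ∧ (2 * (b4 + b5) + (b1 + b3)) % 3 = 1 then 1 else 0)) ∧
    (b4 = (if (2 * (b0 + b1) + (b2 + b4)) % 3 = 1 ∧ (2 * (b4 + b5) + (b1 + b3)) % 3 = 2 then 1 else 0)) ∧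
    (b5 = (if (2 * (b2 + b3) + (b0 + b5)) % 3 = 1 ∧ (2 * (b4 + b5) + (b1 + b3)) % 3 = 2 then 1 else 0)) := by
    decide +kernel
  refine key _ (Finset.mem_range.2 ?_) _ (Finset.mem_range.2 ?_) _ (Finset.mem_range.2 ?_)
    _ (Finset.mem_range.2 ?_) _ (Finset.mem_range.2 ?_) _ (Finset.mem_range.2 ?_) s <;> omega

lemma mod_aux (c u v m n m' n' : ℕ) (h : c + 3 * u + m + n = c + 3 * v + m' + n') :
    (m + n) % 3 = (m' + n') % 3 := by omega

lemma mod_aux' (u v m n m' n' : ℕ) (h : 3 * u + m + n = 3 * v + m' + n') :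
    (m + n) % 3 = (m' + n') % 3 := by omega

lemma six_eq (a b : Fin 6 → ℕ) (c c0 c1 c2 d0 d1 d2 : ℕ)
    (s : a 0 + a 1 + a 2 + a 3 + a 4 + a 5 ≤ 1) (s' : b 0 + b 1 + b 2 + b 3 + b 4 + b 5 ≤ 1)
    (e0 : c + 3 * c0 + 2 * (a 0 + a 1) + (a 2 + a 4) = c + 3 * d0 + 2 * (b 0 + b 1) + (b 2 + b 4))
    (e1 : 3 * c1 + 2 * (a 2 + a 3) + (a 0 + a 5) = 3 * d1 + 2 * (b 2 + b 3) + (b 0 + b 5))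
    (e2 : 3 * c2 + 2 * (a 4 + a 5) + (a 1 + a 3) = 3 * d2 + 2 * (b 4 + b 5) + (b 1 + b 3)) :
    ∀ k, a k = b k := by
  have f0 := mod_aux _ _ _ _ _ _ _ e0
  have f1 := mod_aux' _ _ _ _ _ _ e1
  have f2 := mod_aux' _ _ _ _ _ _ e2
  obtain ⟨p0, p1, p2, p3, p4, p5⟩ := one_hot _ _ _ _ _ _ s
  obtain ⟨q0, q1, q2, q3, q4, q5⟩ := one_hot _ _ _ _ _ _ s'
  rw [f0, f1] at p0 p2
  rw [f0, f2] at p1 p4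
  rw [f1, f2] at p3 p5
  intro k
  fin_cases k
  · exact p0.trans q0.symm
  · exact p1.trans q1.symm
  · exact p2.trans q2.symm
  · exact p3.trans q3.symm
  · exact p4.trans q4.symm
  · exact p5.trans q5.symm

lemma nice_inj {P : ℕ} {y y' : Fin 6 → ℕ} {x x' : Fin 3 → ℕ} (h : Nice P y x)
    (h' : Nice P y' x') (he : aT y x = aT y' x') : y = y' ∧ x = x' := by
  have hy : y = y' := by
    have key : ∀ p k, (y k).factorization p = (y' k).factorization p := by
      intro p
      by_cases hp : p.Prime
      · have s := nice_sum h p hp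
        have s' := nice_sum h' p hp
        have e0 := congrArg (fun n => Nat.factorization n p) (congrFun he 0)
        have e1 := congrArg (fun n => Nat.factorization n p) (congrFun he 1)
        have e2 := congrArg (fun n => Nat.factorization n p) (congrFun he 2)
        simp only [aT, bb, Matrix.cons_val] at e0 e1 e2
        rw [fac_bb _ _ _ _ _ _ _ (h.xpos _) (by norm_num) (h.ypos _) (h.ypos _) (h.ypos _) (h.ypos _),
          fac_bb _ _ _ _ _ _ _ (h'.xpos _) (by norm_num) (h'.ypos _) (h'.ypos _) (h'.ypos _) (h'.ypos _)]
          at e0 e1 e2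
        simp only [Fin.sum_univ_six] at s s'
        simp only [Nat.factorization_one, Finsupp.coe_zero, Pi.zero_apply, zero_add] at e1 e2
        exact six_eq (fun k => (y k).factorization p) (fun k => (y' k).factorization p)
          _ _ _ _ _ _ _ s s' e0 e1 e2
      · intro k
        rw [Nat.factorization_eq_zero_of_not_prime _ hp, Nat.factorization_eq_zero_of_not_prime _ hp]
    funext k
    exact Nat.eq_of_factorization_eq (h.ypos k).ne' (h'.ypos k).ne' fun p => key p k
  subst hy
  refine ⟨rfl, ?_⟩
  funext i
  have e := congrFun he i
  simp only [aT] at e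
  have c0 : 0 < (![2, 1, 1] : Fin 3 → ℕ) i := by fin_cases i <;> simp
  have e1 := Nat.eq_of_mul_eq_mul_left c0 e
  have e2 := Nat.eq_of_mul_eq_mul_right (bb_pos y h.ypos i) e1
  exact Nat.pow_left_injective (n := 3) (by norm_num) e2

lemma nice_gcd {P : ℕ} {y : Fin 6 → ℕ} {x : Fin 3 → ℕ} (hP : 2 ≤ P) (h : Nice P y x) (g : ℕ)
    (hg : ∀ i, g ∣ aT y x i) : g ≤ P ^ 3 := by
  have hq : ∀ k, Nat.Coprime g (y k) := by
    intro k
    apply Nat.Coprime.symm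
    apply Nat.coprime_of_dvd
    intro q hq hqk hqg
    have hPq := h.yprime k q hq hqk
    have n2 : ¬ q ∣ 2 := fun hd => by
      have := Nat.le_of_dvd (by norm_num) hd
      omega
    have nx : ∀ i, ¬ q ∣ x i := fun i hd =>
      h.pair (Sum.inl k) (Sum.inr i) (by simp) q hPq hqk hd
    have ny : ∀ j, j ≠ k → ¬ q ∣ y j := fun j hj hd =>
      h.pair (Sum.inl j) (Sum.inl k) (by simpa using hj) q hPq hd hqk
    have d0 := hqg.trans (hg 0)
    have d1 := hqg.trans (hg 1)
    have d2 := hqg.trans (hg 2)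
    have n1 : ¬ q ∣ 1 := hq.not_dvd_one
    have dp : ∀ a n : ℕ, q ∣ a ^ n → q ∣ a := fun a n hd => hq.dvd_of_dvd_pow hd
    have dx : ∀ i, ¬ q ∣ x i ^ 3 := fun i hd => nx i (dp _ _ hd)
    have dm : ∀ c i b0 b1 b2 b3 : ℕ, ¬ q ∣ c → ¬ q ∣ i → ¬ q ∣ b0 → ¬ q ∣ b1 → ¬ q ∣ b2 →
        ¬ q ∣ b3 → ¬ q ∣ c * (i * ((b0 * b1) ^ 2 * (b2 * b3))) := by
      intro c i b0 b1 b2 b3 hc hi h0 h1 h2 h3 hd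
      rcases hq.dvd_mul.1 hd with hd | hd
      · exact hc hd
      rcases hq.dvd_mul.1 hd with hd | hd
      · exact hi hd
      rcases hq.dvd_mul.1 hd with hd | hd
      · rcases hq.dvd_mul.1 (dp _ _ hd) with hd | hd
        · exact h0 hd
        · exact h1 hd
      · rcases hq.dvd_mul.1 hd with hd | hd
        · exact h2 hd
        · exact h3 hd
    simp only [aT, bb, Matrix.cons_val] at d0 d1 d2
    fin_cases k
    · exact dm _ _ _ _ _ _ n1 (dx _) (ny _ (by decide)) (ny _ (by decide)) (ny _ (by decide))
        (ny _ (by decide)) d2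
    · exact dm _ _ _ _ _ _ n1 (dx _) (ny _ (by decide)) (ny _ (by decide)) (ny _ (by decide))
        (ny _ (by decide)) d1
    · exact dm _ _ _ _ _ _ n1 (dx _) (ny _ (by decide)) (ny _ (by decide)) (ny _ (by decide))
        (ny _ (by decide)) d2
    · exact dm _ _ _ _ _ _ n2 (dx _) (ny _ (by decide)) (ny _ (by decide)) (ny _ (by decide))
        (ny _ (by decide)) d0
    · exact dm _ _ _ _ _ _ n1 (dx _) (ny _ (by decide)) (ny _ (by decide)) (ny _ (by decide))
        (ny _ (by decide)) d1
    · exact dm _ _ _ _ _ _ n2 (dx _) (ny _ (by decide)) (ny _ (by decide)) (ny _ (by decide))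
        (ny _ (by decide)) d0
  have hb : ∀ i, Nat.Coprime g (bb y i) := by
    intro i
    fin_cases i <;> simp only [bb] <;>
    exact Nat.Coprime.mul_right (Nat.Coprime.pow_right _ (Nat.Coprime.mul_right (hq _) (hq _)))
      (Nat.Coprime.mul_right (hq _) (hq _))
  have g1 : g ∣ x 1 ^ 3 := by
    have := hg 1
    simp only [aT, Matrix.cons_val, one_mul] at this
    exact (hb 1).dvd_of_dvd_mul_right this
  have g2 : g ∣ x 2 ^ 3 := by
    have := hg 2
    simp only [aT, Matrix.cons_val, one_mul] at this
    exact (hb 2).dvd_of_dvd_mul_right this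
  have g3 : g ∣ (Nat.gcd (x 1) (x 2)) ^ 3 := by
    rw [← Nat.pow_gcd_pow]
    exact Nat.dvd_gcd g1 g2
  have g4 : Nat.gcd (x 1) (x 2) ≤ P := by
    by_contra hlt
    exact h.pair (Sum.inr 1) (Sum.inr 2) (by simp) _ (not_le.1 hlt) (Nat.gcd_dvd_left _ _)
      (Nat.gcd_dvd_right _ _)
  have g5 : 0 < Nat.gcd (x 1) (x 2) := Nat.gcd_pos_of_pos_left _ (h.xpos 1)
  exact (Nat.le_of_dvd (by positivity) g3).trans (Nat.pow_le_pow_left g4 3)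

open Classical in
/-- Positive coprime triples in the box whose product is twice a rational cube. -/
noncomputable def GS (N : ℕ) : Finset (ℕ × ℕ × ℕ) :=
  (Finset.Icc 1 N ×ˢ Finset.Icc 1 N ×ˢ Finset.Icc 1 N).filter fun t =>
    Nat.gcd (Nat.gcd t.1 t.2.1) t.2.2 = 1 ∧
      ∃ r : ℚ, (t.1 : ℚ) * (t.2.1 : ℚ) * (t.2.2 : ℚ) = 2 * r ^ 3

lemma mem_GS (N a b c : ℕ) : (a, b, c) ∈ GS N ↔ ((1 ≤ a ∧ a ≤ N) ∧ (1 ≤ b ∧ b ≤ N) ∧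
    (1 ≤ c ∧ c ≤ N)) ∧ Nat.gcd (Nat.gcd a b) c = 1 ∧
      ∃ r : ℚ, (a : ℚ) * (b : ℚ) * (c : ℚ) = 2 * r ^ 3 := by
  simp [GS]

/-- gcd of the triple attached to the parameters. -/
def gT (y : Fin 6 → ℕ) (x : Fin 3 → ℕ) : ℕ := Nat.gcd (Nat.gcd (aT y x 0) (aT y x 1)) (aT y x 2)

lemma gT_dvd (y : Fin 6 → ℕ) (x : Fin 3 → ℕ) (i : Fin 3) : gT y x ∣ aT y x i := by
  unfold gT
  fin_cases i
  · exact (Nat.gcd_dvd_left _ _).trans (Nat.gcd_dvd_left _ _)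
  · exact (Nat.gcd_dvd_left _ _).trans (Nat.gcd_dvd_right _ _)
  · exact Nat.gcd_dvd_right _ _

lemma aT_prod (y : Fin 6 → ℕ) (x : Fin 3 → ℕ) :
    aT y x 0 * aT y x 1 * aT y x 2 = 2 * ((x 0 * x 1 * x 2) * ∏ k, y k) ^ 3 := by
  simp only [aT, bb, Matrix.cons_val, Fin.prod_univ_six]
  ring

open Classical in
lemma card_good_le (P M Y N : ℕ) (hP : 2 ≤ P) (hYM : Y ≤ M) (hMN : 2 * M ≤ N) :
    ((Om M (SS P Y) 1 1).filter (Good P M)).card ≤ P ^ 3 * (GS N).card := by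
  have e : P ^ 3 * (GS N).card = (GS N ×ˢ Finset.Icc 1 (P ^ 3)).card := by
    rw [Finset.card_product, Nat.card_Icc, mul_comm]
    simp
  rw [e]
  apply Finset.card_le_card_of_injOn (fun t => ((aT t.1 t.2 0 / gT t.1 t.2,
    aT t.1 t.2 1 / gT t.1 t.2, aT t.1 t.2 2 / gT t.1 t.2), gT t.1 t.2))
  · rintro ⟨y, x⟩ ht
    have ht' := Finset.mem_filter.1 (Finset.mem_coe.1 ht)
    have hn : Nice P y x := nice_of_good P M Y hYM _ ht'.1 ht'.2
    have hle : ∀ i, aT y x i ≤ N := by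
      intro i
      have h1 := ht'.1
      simp only [Om, Finset.mem_sigma, Fintype.mem_piFinset, XS, Finset.mem_filter] at h1
      have h2 := (h1.2 i).2.1
      have h3 : (![2, 1, 1] : Fin 3 → ℕ) i ≤ 2 := by fin_cases i <;> simp
      simp only [aT]
      exact (Nat.mul_le_mul h3 h2).trans hMN
    have hpos : ∀ i, 0 < aT y x i := by
      intro i
      have c0 : 0 < (![2, 1, 1] : Fin 3 → ℕ) i := by fin_cases i <;> simp
      have := bb_pos y hn.ypos i
      have := hn.xpos i
      simp only [aT]
      positivity
    have hg0 : 0 < gT y x := Nat.pos_of_dvd_of_pos (gT_dvd y x 0) (hpos 0)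
    have hbd : ∀ i, 1 ≤ aT y x i / gT y x ∧ aT y x i / gT y x ≤ N := fun i =>
      ⟨Nat.div_pos (Nat.le_of_dvd (hpos i) (gT_dvd y x i)) hg0,
        (Nat.div_le_self _ _).trans (hle i)⟩
    simp only [Finset.coe_product, Set.mem_prod, Finset.mem_coe, Finset.mem_Icc]
    refine ⟨(mem_GS _ _ _ _).2 ⟨⟨hbd 0, hbd 1, hbd 2⟩, ?_, ?_⟩, hg0, ?_⟩
    · rw [Nat.gcd_div (gT_dvd y x 0) (gT_dvd y x 1), Nat.gcd_div
        (Nat.dvd_gcd (gT_dvd y x 0) (gT_dvd y x 1)) (gT_dvd y x 2)]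
      exact Nat.div_self hg0
    · have hgq : (gT y x : ℚ) ≠ 0 := by exact_mod_cast hg0.ne'
      refine ⟨(((x 0 * x 1 * x 2) * ∏ k, y k : ℕ) : ℚ) / gT y x, ?_⟩
      rw [Nat.cast_div (gT_dvd y x 0) hgq, Nat.cast_div (gT_dvd y x 1) hgq,
        Nat.cast_div (gT_dvd y x 2) hgq]
      have h := aT_prod y x
      have h' : (aT y x 0 : ℚ) * aT y x 1 * aT y x 2 =
          2 * (((x 0 * x 1 * x 2) * ∏ k, y k : ℕ) : ℚ) ^ 3 := by exact_mod_cast h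
      rw [div_mul_div_comm, div_mul_div_comm, h', div_pow]
      ring
    · exact nice_gcd hP hn _ (gT_dvd y x)
  · rintro ⟨y, x⟩ ht ⟨y', x'⟩ ht' he
    have h1 := Finset.mem_filter.1 (Finset.mem_coe.1 ht)
    have h2 := Finset.mem_filter.1 (Finset.mem_coe.1 ht')
    have hn : Nice P y x := nice_of_good P M Y hYM _ h1.1 h1.2
    have hn' : Nice P y' x' := nice_of_good P M Y hYM _ h2.1 h2.2
    simp only [Prod.mk.injEq] at he
    obtain ⟨⟨e0, e1, e2⟩, eg⟩ := he
    have key : ∀ i, aT y x i / gT y x = aT y' x' i / gT y' x' := by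
      intro i
      fin_cases i
      · exact e0
      · exact e1
      · exact e2
    have hae : aT y x = aT y' x' := by
      funext i
      rw [← Nat.div_mul_cancel (gT_dvd y x i), ← Nat.div_mul_cancel (gT_dvd y' x' i), key i, eg]
    obtain ⟨rfl, rfl⟩ := nice_inj hn hn' hae
    rfl

lemma prod_combine (U : Finset ℕ) (g q u v w z : ℕ → ℕ) :
    (∏ p ∈ U, p ^ g p) * ((∏ p ∈ U, p ^ q p) ^ 3 * (((∏ p ∈ U, p ^ u p) * (∏ p ∈ U, p ^ v p)) ^ 2 *
      ((∏ p ∈ U, p ^ w p) * ∏ p ∈ U, p ^ z p))) =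
    ∏ p ∈ U, p ^ (g p + (3 * q p + (2 * (u p + v p) + (w p + z p)))) := by
  simp only [← Finset.prod_mul_distrib, ← Finset.prod_pow]
  refine Finset.prod_congr rfl fun p _ => ?_
  ring

lemma prod_two (U : Finset ℕ) (r : ℕ → ℕ) : ∃ k < 3,
    ∏ p ∈ U, p ^ (if p = 2 then r p % 3 else 0) = 2 ^ k := by
  have h : ∀ p ∈ U, p ^ (if p = 2 then r p % 3 else 0) = if p = 2 then 2 ^ (r 2 % 3) else 1 := by
    intro p _
    split_ifs with h
    · subst h
      rfl
    · simp
  rw [Finset.prod_congr rfl h, Finset.prod_ite_eq' U 2 (fun _ => 2 ^ (r 2 % 3))]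
  split_ifs
  · exact ⟨r 2 % 3, Nat.mod_lt _ (by norm_num), rfl⟩
  · exact ⟨0, by norm_num, rfl⟩

/-- Indicator exponent. -/
def ind (e f : ℕ → ℕ) (p : ℕ) : ℕ := if p ≠ 2 ∧ e p % 3 = 2 ∧ f p % 3 = 1 then 1 else 0

lemma ind_aux (r0 r1 r2 : ℕ) (h0 : r0 < 3) (h1 : r1 < 3) (h2 : r2 < 3)
    (hs : (r0 + r1 + r2) % 3 = 0) (hz : r0 = 0 ∨ r1 = 0 ∨ r2 = 0) :
    r0 = 2 * ((if r0 = 2 ∧ r1 = 1 then 1 else 0) + (if r0 = 2 ∧ r2 = 1 then 1 else 0)) +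
      ((if r1 = 2 ∧ r0 = 1 then 1 else 0) + (if r2 = 2 ∧ r0 = 1 then 1 else 0)) := by
  have key : ∀ r0 ∈ Finset.range 3, ∀ r1 ∈ Finset.range 3, ∀ r2 ∈ Finset.range 3,
    (r0 + r1 + r2) % 3 = 0 → (r0 = 0 ∨ r1 = 0 ∨ r2 = 0) →
    r0 = 2 * ((if r0 = 2 ∧ r1 = 1 then 1 else 0) + (if r0 = 2 ∧ r2 = 1 then 1 else 0)) +
      ((if r1 = 2 ∧ r0 = 1 then 1 else 0) + (if r2 = 2 ∧ r0 = 1 then 1 else 0)) := by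
    decide +kernel
  exact key _ (Finset.mem_range.2 h0) _ (Finset.mem_range.2 h1) _ (Finset.mem_range.2 h2) hs hz

lemma ind_eq (e0 e1 e2 : ℕ → ℕ) (p : ℕ) (hs : p ≠ 2 → (e0 p + e1 p + e2 p) % 3 = 0)
    (hz : e0 p = 0 ∨ e1 p = 0 ∨ e2 p = 0) :
    (if p = 2 then e0 p % 3 else 0) + (3 * (e0 p / 3) + (2 * (ind e0 e1 p + ind e0 e2 p) +
      (ind e1 e0 p + ind e2 e0 p))) = e0 p := by
  by_cases hp : p = 2
  · simp only [ind, hp]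
    simp
    exact Nat.mod_add_div _ _
  · have h := ind_aux (e0 p % 3) (e1 p % 3) (e2 p % 3) (Nat.mod_lt _ (by norm_num))
      (Nat.mod_lt _ (by norm_num)) (Nat.mod_lt _ (by norm_num))
      (by have := hs hp; clear hs hz; omega)
      (by rcases hz with h | h | h <;> simp [h])
    simp only [ind, hp, ne_eq, not_false_eq_true, true_and, if_false, zero_add]
    rw [← h]
    exact Nat.div_add_mod _ _

lemma prod_self (a n : ℕ) (ha : 0 < a) (hn : 0 < n) (h : a ∣ n) :
    ∏ p ∈ n.primeFactors, p ^ a.factorization p = a := by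
  conv_rhs => rw [← Nat.prod_factorization_pow_eq_self ha.ne']
  rw [Finsupp.prod_of_support_subset]
  · rw [Nat.support_factorization]
    exact Nat.primeFactors_mono h hn.ne'
  · intros
    simp

lemma param_exists (a b c : ℕ) (ha : 0 < a) (hb : 0 < b) (hc : 0 < c)
    (hs : ∀ p, p.Prime → p ≠ 2 →
      (a.factorization p + b.factorization p + c.factorization p) % 3 = 0)
    (hg : Nat.gcd (Nat.gcd a b) c = 1) :
    ∃ k0 < 3, ∃ k1 < 3, ∃ k2 < 3, ∃ (y : Fin 6 → ℕ) (x : Fin 3 → ℕ),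
      a = 2 ^ k0 * (x 0 ^ 3 * bb y 0) ∧ b = 2 ^ k1 * (x 1 ^ 3 * bb y 1) ∧
      c = 2 ^ k2 * (x 2 ^ 3 * bb y 2) := by
  set U := (a * b * c).primeFactors with hU
  set e0 : ℕ → ℕ := fun p => a.factorization p with he0
  set e1 : ℕ → ℕ := fun p => b.factorization p with he1
  set e2 : ℕ → ℕ := fun p => c.factorization p with he2
  have hUp : ∀ p ∈ U, p.Prime := fun p hp => Nat.prime_of_mem_primeFactors hp
  have hz : ∀ p ∈ U, e0 p = 0 ∨ e1 p = 0 ∨ e2 p = 0 := by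
    intro p hp
    by_contra hcon
    push Not at hcon
    have d0 := Nat.dvd_of_factorization_pos hcon.1
    have d1 := Nat.dvd_of_factorization_pos hcon.2.1
    have d2 := Nat.dvd_of_factorization_pos hcon.2.2
    have := Nat.dvd_gcd (Nat.dvd_gcd d0 d1) d2
    rw [hg] at this
    exact (hUp p hp).not_dvd_one this
  have hs' : ∀ p ∈ U, p ≠ 2 → (e0 p + e1 p + e2 p) % 3 = 0 := fun p hp h2 => hs p (hUp p hp) h2
  obtain ⟨k0, hk0, hk0'⟩ := prod_two U e0
  obtain ⟨k1, hk1, hk1'⟩ := prod_two U e1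
  obtain ⟨k2, hk2, hk2'⟩ := prod_two U e2
  have hn : 0 < a * b * c := by positivity
  have fa := prod_self a (a * b * c) ha hn (Dvd.intro _ (mul_assoc a b c).symm)
  have fb := prod_self b (a * b * c) hb hn ⟨a * c, by ring⟩
  have fc := prod_self c (a * b * c) hc hn ⟨a * b, by ring⟩
  refine ⟨k0, hk0, k1, hk1, k2, hk2,
    ![∏ p ∈ U, p ^ ind e0 e1 p, ∏ p ∈ U, p ^ ind e0 e2 p, ∏ p ∈ U, p ^ ind e1 e0 p,
      ∏ p ∈ U, p ^ ind e1 e2 p, ∏ p ∈ U, p ^ ind e2 e0 p, ∏ p ∈ U, p ^ ind e2 e1 p],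
    ![∏ p ∈ U, p ^ (e0 p / 3), ∏ p ∈ U, p ^ (e1 p / 3), ∏ p ∈ U, p ^ (e2 p / 3)], ?_, ?_, ?_⟩
  · simp only [bb, Matrix.cons_val]
    rw [← hk0', prod_combine]
    conv_lhs => rw [← fa]
    refine Finset.prod_congr rfl fun p hp => ?_
    rw [ind_eq e0 e1 e2 p (hs' p hp) (hz p hp)]
  · simp only [bb, Matrix.cons_val]
    rw [← hk1', prod_combine]
    conv_lhs => rw [← fb]
    refine Finset.prod_congr rfl fun p hp => ?_
    rw [ind_eq e1 e0 e2 p (fun h => by have := hs' p hp h; rw [add_comm (e1 p)]; exact this)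
      (by have := hz p hp; tauto)]
  · simp only [bb, Matrix.cons_val]
    rw [← hk2', prod_combine]
    conv_lhs => rw [← fc]
    refine Finset.prod_congr rfl fun p hp => ?_
    rw [ind_eq e2 e0 e1 p (fun h => by
        have := hs' p hp h
        rw [add_assoc, add_comm]
        exact this)
      (by have := hz p hp; tauto)]

lemma fac_cond (a b c : ℕ) (ha : 0 < a) (hb : 0 < b) (hc : 0 < c) (r : ℚ)
    (h : (a : ℚ) * (b : ℚ) * (c : ℚ) = 2 * r ^ 3) (p : ℕ) (hp : p.Prime) (hp2 : p ≠ 2) :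
    (a.factorization p + b.factorization p + c.factorization p) % 3 = 0 := by
  have : Fact p.Prime := ⟨hp⟩
  have hr : r ≠ 0 := by
    rintro rfl
    have : (a : ℚ) * b * c ≠ 0 := by positivity
    apply this
    rw [h]
    norm_num
  have h1 := congrArg (padicValRat p) h
  have a0 : (a : ℚ) ≠ 0 := by positivity
  have b0 : (b : ℚ) ≠ 0 := by positivity
  have c0 : (c : ℚ) ≠ 0 := by positivity
  rw [padicValRat.mul (mul_ne_zero a0 b0) c0, padicValRat.mul a0 b0,
    padicValRat.mul two_ne_zero (pow_ne_zero _ hr), padicValRat.pow] at h1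
  have h2 : padicValRat p (2 : ℚ) = 0 := by
    have : padicValRat p ((2 : ℕ) : ℚ) = 0 := by
      rw [padicValRat.of_nat]
      rw [padicValNat.eq_zero_of_not_dvd]
      · rfl
      · intro hd
        exact hp2 ((Nat.prime_dvd_prime_iff_eq hp Nat.prime_two).1 hd)
    exact_mod_cast this
  rw [h2, padicValRat.of_nat, padicValRat.of_nat, padicValRat.of_nat] at h1
  rw [Nat.factorization_def _ hp, Nat.factorization_def _ hp, Nat.factorization_def _ hp]
  simp only [Nat.cast_ofNat] at h1
  generalize padicValRat p r = z at h1
  omega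

lemma card_GS_le (N : ℕ) : ((GS N).card : ℝ) ≤ 27 * (N * HS (Finset.Icc 1 N) ^ 6) := by
  have hsub : GS N ⊆ ((Finset.range 3 ×ˢ Finset.range 3 ×ˢ Finset.range 3) ×ˢ
      Om N (Finset.Icc 1 N) 1 1).image fun s =>
        (2 ^ s.1.1 * (s.2.2 0 ^ 3 * bb s.2.1 0), 2 ^ s.1.2.1 * (s.2.2 1 ^ 3 * bb s.2.1 1),
          2 ^ s.1.2.2 * (s.2.2 2 ^ 3 * bb s.2.1 2)) := by
    rintro ⟨a, b, c⟩ h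
    obtain ⟨⟨ha, hb, hc⟩, hg, r, hr⟩ := (mem_GS _ _ _ _).1 h
    obtain ⟨k0, hk0, k1, hk1, k2, hk2, y, x, ea, eb, ec⟩ := param_exists a b c ha.1 hb.1 hc.1
      (fun p hp hp2 => fac_cond a b c ha.1 hb.1 hc.1 r hr p hp hp2) hg
    have gen : ∀ (A k : ℕ) (i : Fin 3), 1 ≤ A ∧ A ≤ N → A = 2 ^ k * (x i ^ 3 * bb y i) →
        0 < x i ∧ 0 < bb y i ∧ x i ^ 3 * bb y i ≤ N := by
      intro A k i hA e
      have h0 : 0 < 2 ^ k * (x i ^ 3 * bb y i) := by omega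
      have h1 : 0 < x i ^ 3 * bb y i := Nat.pos_of_mul_pos_left h0
      have h2 : 0 < bb y i := Nat.pos_of_mul_pos_left h1
      have h3 : 0 < x i ^ 3 := Nat.pos_of_mul_pos_right h1
      refine ⟨?_, h2, ?_⟩
      · exact Nat.pos_of_ne_zero fun h => by simp [h] at h3
      · have : x i ^ 3 * bb y i ≤ 2 ^ k * (x i ^ 3 * bb y i) :=
          Nat.le_mul_of_pos_left _ (by positivity)
        omega
    have all : ∀ i, 0 < x i ∧ 0 < bb y i ∧ x i ^ 3 * bb y i ≤ N := by
      intro i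
      fin_cases i
      · exact gen a k0 0 ha ea
      · exact gen b k1 1 hb eb
      · exact gen c k2 2 hc ec
    have hbN : ∀ i, bb y i ≤ N := fun i =>
      (Nat.le_mul_of_pos_left _ (Nat.pow_pos (all i).1)).trans (all i).2.2
    have hdiv : ∀ k, ∃ i, y k ∣ bb y i := by
      intro k
      fin_cases k
      · exact ⟨0, y 0 * y 1 ^ 2 * (y 2 * y 4), by simp [bb]; ring⟩
      · exact ⟨0, y 1 * y 0 ^ 2 * (y 2 * y 4), by simp [bb]; ring⟩
      · exact ⟨0, y 4 * (y 0 * y 1) ^ 2, by simp [bb]; ring⟩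
      · exact ⟨2, y 1 * (y 4 * y 5) ^ 2, by simp [bb]; ring⟩
      · exact ⟨0, y 2 * (y 0 * y 1) ^ 2, by simp [bb]; ring⟩
      · exact ⟨1, y 0 * (y 2 * y 3) ^ 2, by simp [bb]; ring⟩
    have hy : ∀ k, 1 ≤ y k ∧ y k ≤ N := by
      intro k
      obtain ⟨i, hi⟩ := hdiv k
      exact ⟨Nat.pos_of_dvd_of_pos hi (all i).2.1, (Nat.le_of_dvd (all i).2.1 hi).trans (hbN i)⟩
    refine Finset.mem_image.2 ⟨((k0, k1, k2), ⟨y, x⟩), ?_, ?_⟩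
    · simp only [Finset.mem_product, Finset.mem_range, Om, Finset.mem_sigma,
        Fintype.mem_piFinset, XS, Finset.mem_filter, Finset.mem_Icc]
      refine ⟨⟨hk0, hk1, hk2⟩, fun k => ⟨hy k, one_dvd _⟩, fun i =>
        ⟨⟨(all i).1, ?_⟩, (all i).2.2, one_dvd _⟩⟩
      calc x i ≤ x i ^ 3 := Nat.le_self_pow (by norm_num) _
        _ ≤ x i ^ 3 * bb y i := Nat.le_mul_of_pos_right _ (all i).2.1
        _ ≤ N := (all i).2.2
    · simp only [← ea, ← eb, ← ec]
  have h1 := (Finset.card_le_card hsub).trans Finset.card_image_le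
  rw [Finset.card_product, Finset.card_product, Finset.card_product, Finset.card_range] at h1
  have h2 := card_Om_le N (Finset.Icc 1 N) 1 1 (fun _ => by simp) (fun _ => by simp)
    (fun z hz => (Finset.mem_Icc.1 hz).1) (fun d z hz => by
      rw [Finset.mem_Icc] at hz ⊢
      have hd : 0 < d := Nat.pos_of_mul_pos_right hz.1
      exact ⟨Nat.pos_of_mul_pos_left hz.1, (Nat.le_mul_of_pos_left z hd).trans hz.2⟩)
  simp only [Pi.one_apply, Nat.cast_one, Finset.prod_const_one, mul_one, div_one] at h2
  have h3 : ((GS N).card : ℝ) ≤ 27 * ((Om N (Finset.Icc 1 N) 1 1).card : ℝ) := by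
    exact_mod_cast h1
  linarith

lemma HS_Icc (N : ℕ) : HS (Finset.Icc 1 N) ≤ 1 + Real.log N := by
  have h := harmonic_le_one_add_log N
  rw [harmonic_eq_sum_Icc] at h
  push_cast at h
  rw [HS]
  simpa [one_div] using h

/-- The set to be counted. -/
def TT (B : ℝ) : Set (ℤ × ℤ × ℤ × ℤ) :=
  {t : ℤ × ℤ × ℤ × ℤ | t.1 ≠ 0 ∧ t.2.1 ≠ 0 ∧ t.2.2.1 ≠ 0 ∧ t.2.2.2 ≠ 0 ∧
          |(t.1 : ℝ)| ≤ B ∧ |(t.2.1 : ℝ)| ≤ B ∧ |(t.2.2.1 : ℝ)| ≤ B ∧ |(t.2.2.2 : ℝ)| ≤ B ∧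
          Int.gcd (Int.gcd t.2.1 t.2.2.1) t.2.2.2 = 1 ∧
          ∃ r : ℚ, ((t.2.1 : ℚ) * (t.2.2.1 : ℚ) * (t.2.2.2 : ℚ)) = 2 * r ^ 3}

lemma abs_le_floor (B : ℝ) (hB : 0 ≤ B) (t : ℤ) : |(t : ℝ)| ≤ B ↔ t.natAbs ≤ ⌊B⌋₊ := by
  rw [Nat.le_floor_iff hB, Nat.cast_natAbs, Int.cast_abs]

/-- Finite superset. -/
noncomputable def TF (N : ℕ) : Finset (ℤ × ℤ × ℤ × ℤ) :=
  ((Finset.Icc 1 N ×ˢ GS N) ×ˢ (({1, -1} : Finset ℤ) ×ˢ ({1, -1} : Finset ℤ) ×ˢ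
    ({1, -1} : Finset ℤ) ×ˢ ({1, -1} : Finset ℤ))).image fun s =>
      (s.2.1 * (s.1.1 : ℤ), s.2.2.1 * (s.1.2.1 : ℤ), s.2.2.2.1 * (s.1.2.2.1 : ℤ),
        s.2.2.2.2 * (s.1.2.2.2 : ℤ))

lemma sign_mem (a : ℤ) (ha : a ≠ 0) : a.sign ∈ ({1, -1} : Finset ℤ) := by
  rcases lt_or_gt_of_ne ha with h | h
  · simp [Int.sign_eq_neg_one_of_neg h]
  · simp [Int.sign_eq_one_of_pos h]

lemma TT_subset (B : ℝ) (hB : 0 ≤ B) : TT B ⊆ ↑(TF ⌊B⌋₊) := by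
  rintro ⟨d, a, b, c⟩ h
  simp only [TT, Set.mem_ofPred_eq] at h
  obtain ⟨hd, ha, hb, hc, bd, ba, bb', bc, hg, r, hr⟩ := h
  rw [abs_le_floor B hB] at bd ba bb' bc
  rw [Finset.mem_coe, TF, Finset.mem_image]
  refine ⟨((d.natAbs, a.natAbs, b.natAbs, c.natAbs), d.sign, a.sign, b.sign, c.sign), ?_, ?_⟩
  · simp only [Finset.mem_product]
    refine ⟨⟨Finset.mem_Icc.2 ⟨Int.natAbs_pos.2 hd, bd⟩, (mem_GS _ _ _ _).2
      ⟨⟨⟨Int.natAbs_pos.2 ha, ba⟩, ⟨Int.natAbs_pos.2 hb, bb'⟩, ⟨Int.natAbs_pos.2 hc, bc⟩⟩, ?_, ?_⟩⟩,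
      sign_mem d hd, sign_mem a ha, sign_mem b hb, sign_mem c hc⟩
    · simpa [Int.gcd] using hg
    · refine ⟨|r|, ?_⟩
      rw [Nat.cast_natAbs, Nat.cast_natAbs, Nat.cast_natAbs, Int.cast_abs, Int.cast_abs,
        Int.cast_abs, ← abs_mul, ← abs_mul, hr, abs_mul, abs_pow]
      simp
  · simp only [Int.sign_mul_natAbs]

lemma TT_upper (B : ℝ) (hB : 0 ≤ B) : (TT B).ncard ≤ 16 * (⌊B⌋₊ * (GS ⌊B⌋₊).card) := by
  have h1 := Set.ncard_le_ncard (TT_subset B hB) (Finset.finite_toSet _)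
  rw [Set.ncard_coe_finset] at h1
  refine h1.trans (Finset.card_image_le.trans ?_)
  simp only [Finset.card_product, Nat.card_Icc]
  have : ({1, -1} : Finset ℤ).card = 2 := by decide
  rw [this]
  simp
  apply le_of_eq
  ring

lemma TT_lower (B : ℝ) (hB : 0 ≤ B) : ⌊B⌋₊ * (GS ⌊B⌋₊).card ≤ (TT B).ncard := by
  have hfin : (TT B).Finite := (Finset.finite_toSet _).subset (TT_subset B hB)
  have e : ⌊B⌋₊ * (GS ⌊B⌋₊).card = (Finset.Icc 1 ⌊B⌋₊ ×ˢ GS ⌊B⌋₊).card := by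
    simp [Finset.card_product]
  rw [e]
  have hinj : Set.InjOn (fun s : ℕ × ℕ × ℕ × ℕ =>
      ((s.1 : ℤ), (s.2.1 : ℤ), (s.2.2.1 : ℤ), (s.2.2.2 : ℤ)))
      (↑(Finset.Icc 1 ⌊B⌋₊ ×ˢ GS ⌊B⌋₊) : Set (ℕ × ℕ × ℕ × ℕ)) := by
    rintro ⟨d, a, b, c⟩ _ ⟨d', a', b', c'⟩ _ h
    simp only [Prod.mk.injEq, Nat.cast_inj] at h ⊢
    exact h
  rw [← Finset.card_image_of_injOn hinj, ← Set.ncard_coe_finset]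
  apply Set.ncard_le_ncard _ hfin
  rintro t ht
  rw [Finset.mem_coe, Finset.mem_image] at ht
  obtain ⟨⟨d, a, b, c⟩, hs, rfl⟩ := ht
  rw [Finset.mem_product, Finset.mem_Icc, mem_GS] at hs
  obtain ⟨hd, ⟨ha, hb, hc⟩, hg, r, hr⟩ := hs
  simp only at hd
  simp only [TT, Set.mem_ofPred_eq]
  refine ⟨by omega, by omega, by omega, by omega, ?_, ?_, ?_, ?_, ?_, r, ?_⟩
  · rw [abs_le_floor B hB]
    exact hd.2
  · rw [abs_le_floor B hB]
    exact ha.2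
  · rw [abs_le_floor B hB]
    exact hb.2
  · rw [abs_le_floor B hB]
    exact hc.2
  · simpa [Int.gcd] using hg
  · exact_mod_cast hr

lemma TT_upper_real (B : ℝ) (hB : 3 ≤ B) :
    ((TT B).ncard : ℝ) ≤ 27648 * B ^ 2 * Real.log B ^ 6 := by
  have hB0 : 0 ≤ B := by linarith
  set N := ⌊B⌋₊ with hN
  have hNB : (N : ℝ) ≤ B := Nat.floor_le hB0
  have hN1 : 1 ≤ N := (Nat.one_le_floor_iff B).2 (by linarith)
  have h1 : ((TT B).ncard : ℝ) ≤ 16 * (N * ((GS N).card : ℝ)) := by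
    exact_mod_cast TT_upper B hB0
  have hlog1 : 1 ≤ Real.log B := by
    rw [Real.le_log_iff_exp_le (by linarith)]
    have := Real.exp_one_lt_d9
    linarith
  have hH : HS (Finset.Icc 1 N) ≤ 2 * Real.log B := by
    have h2 := HS_Icc N
    have h3 : Real.log N ≤ Real.log B := Real.log_le_log (by exact_mod_cast hN1) hNB
    linarith
  have hH6 : HS (Finset.Icc 1 N) ^ 6 ≤ (2 * Real.log B) ^ 6 :=
    pow_le_pow_left₀ (HS_nonneg _) hH 6
  have h2 := card_GS_le N
  have h3 : (N : ℝ) * HS (Finset.Icc 1 N) ^ 6 ≤ B * (2 * Real.log B) ^ 6 :=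
    mul_le_mul hNB hH6 (pow_nonneg (HS_nonneg _) 6) hB0
  have h4 : (N : ℝ) * ((GS N).card : ℝ) ≤ B * (27 * (B * (2 * Real.log B) ^ 6)) :=
    mul_le_mul hNB (by linarith) (Nat.cast_nonneg _) hB0
  calc ((TT B).ncard : ℝ) ≤ 16 * (B * (27 * (B * (2 * Real.log B) ^ 6))) := by linarith
    _ = _ := by ring

open Classical in
lemma TT_lower_real (P : ℕ) (hP : 1296 ≤ P) (B : ℝ)
    (hB : 2 * ((P.factorial : ℝ) ^ 2 + 2) ^ 6 + 5 ≤ B) :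
    1 / (192 * (P : ℝ) ^ 3 * (192 * P.factorial) ^ 6) * B ^ 2 * Real.log B ^ 6 ≤
      ((TT B).ncard : ℝ) := by
  have hQ0 : 0 < P.factorial := Nat.factorial_pos P
  generalize hQ : P.factorial = Q at *
  have hW0 : (0 : ℝ) ≤ 2 * ((Q : ℝ) ^ 2 + 2) ^ 6 := by positivity
  have hB0 : 0 ≤ B := by linarith
  set N := ⌊B⌋₊ with hN
  have hNB : B < N + 1 := Nat.lt_floor_add_one B
  have hN1 : 2 * (Q ^ 2 + 2) ^ 6 + 5 ≤ N := by
    apply Nat.le_floor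
    push_cast
    exact hB
  obtain ⟨M, hM⟩ : ∃ M, M = N / 2 := ⟨_, rfl⟩
  have hM2 : 2 * M ≤ N := by omega
  have hM3 : N ≤ 2 * M + 1 := by omega
  have hMW : (Q ^ 2 + 2) ^ 6 ≤ M := by omega
  have hMp : 2 ^ 6 ≤ M := (Nat.pow_le_pow_left (by omega) 6).trans hMW
  have hM4 : 64 ≤ M := by simpa using hMp
  clear hMp
  obtain ⟨Y, hY1, hY2⟩ : ∃ Y, Y ^ 6 ≤ M ∧ M < (Y + 1) ^ 6 := by
    refine ⟨Nat.findGreatest (fun n => n ^ 6 ≤ M) M, ?_, ?_⟩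
    · exact Nat.findGreatest_spec (P := fun n => n ^ 6 ≤ M) (m := 0) (by omega) (by simp)
    · by_contra hcon
      push Not at hcon
      have hle : Nat.findGreatest (fun n => n ^ 6 ≤ M) M + 1 ≤ M :=
        (Nat.le_self_pow (by norm_num) _).trans hcon
      have := Nat.le_findGreatest (P := fun n => n ^ 6 ≤ M) hle hcon
      omega
  have hYQ : Q ^ 2 + 2 ≤ Y := by
    have : Q ^ 2 + 2 < Y + 1 := lt_of_pow_lt_pow_left₀ 6 (by omega) (lt_of_le_of_lt hMW hY2)
    omega
  have hYM : Y ≤ M := (Nat.le_self_pow (by norm_num) Y).trans hY1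
  have hgood := card_good M Y P (by omega) hP hY1
  have hcl := card_good_le P M Y N (by omega) hYM hM2
  have hH := HS_lower P Y (by rw [hQ]; omega)
  rw [hQ] at hH
  have hT := TT_lower B hB0
  rw [← hN] at hT
  -- logarithms
  have hY2' : (2 : ℝ) ≤ Y := by
    have : 2 ≤ Y := by omega
    exact_mod_cast this
  have hM4' : (64 : ℝ) ≤ M := by exact_mod_cast hM4
  have l1 : Real.log (Y + 1) ≤ 2 * Real.log Y := by
    have : Real.log ((Y : ℝ) + 1) ≤ Real.log ((Y : ℝ) ^ 2) :=
      Real.log_le_log (by linarith) (by nlinarith)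
    rwa [Real.log_pow] at this
  have l2 : Real.log M ≤ 6 * Real.log (Y + 1) := by
    have : Real.log (M : ℝ) ≤ Real.log (((Y : ℝ) + 1) ^ 6) := by
      apply Real.log_le_log (by linarith)
      exact_mod_cast hY2.le
    rwa [Real.log_pow] at this
  have hBM : B ≤ 2 * M + 2 := by
    have : (N : ℝ) ≤ 2 * M + 1 := by exact_mod_cast hM3
    linarith
  have l3 : Real.log B ≤ 2 * Real.log M := by
    have : Real.log B ≤ Real.log ((M : ℝ) ^ 2) :=
      Real.log_le_log (by linarith) (by nlinarith)
    rwa [Real.log_pow] at this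
  have hlogB : 0 ≤ Real.log B := Real.log_nonneg (by linarith)
  have hQr : (0 : ℝ) < Q := by exact_mod_cast hQ0
  have hPr : (0 : ℝ) < P := by
    have : 0 < P := by omega
    exact_mod_cast this
  have hH2 : Real.log B / (192 * Q) ≤ HS (SS P Y) := by
    refine le_trans ?_ hH
    rw [div_le_div_iff₀ (by positivity) (by positivity)]
    have : Real.log B ≤ 48 * Real.log Y := by
      have : 0 ≤ Real.log Y := Real.log_nonneg (by linarith)
      linarith
    calc Real.log B * (4 * Q) ≤ (48 * Real.log Y) * (4 * Q) :=
          mul_le_mul_of_nonneg_right this (by positivity)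
      _ = _ := by ring
  have hH6 : (Real.log B / (192 * Q)) ^ 6 ≤ HS (SS P Y) ^ 6 :=
    pow_le_pow_left₀ (by positivity) hH2 6
  have hMB : B / 6 ≤ M := by linarith
  have hNB2 : B / 2 ≤ N := by
    have : (5 : ℝ) ≤ N := by
      have : 5 ≤ N := by omega
      exact_mod_cast this
    linarith
  have c1 : (B / 6) * (Real.log B / (192 * Q)) ^ 6 ≤ M * HS (SS P Y) ^ 6 :=
    mul_le_mul hMB hH6 (by positivity) (by positivity)
  have c2 : (B / 6) * (Real.log B / (192 * Q)) ^ 6 / 16 ≤ (P : ℝ) ^ 3 * ((GS N).card : ℝ) := by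
    have : (((Om M (SS P Y) 1 1).filter (Good P M)).card : ℝ) ≤
        (P : ℝ) ^ 3 * ((GS N).card : ℝ) := by exact_mod_cast hcl
    refine le_trans ?_ (le_trans hgood this)
    linarith
  have c3 : (B / 6) * (Real.log B / (192 * Q)) ^ 6 / 16 / (P : ℝ) ^ 3 ≤ ((GS N).card : ℝ) := by
    rw [div_le_iff₀ (by positivity)]
    linarith
  have c4 : (B / 2) * ((B / 6) * (Real.log B / (192 * Q)) ^ 6 / 16 / (P : ℝ) ^ 3) ≤
      N * ((GS N).card : ℝ) :=
    mul_le_mul hNB2 c3 (by positivity) (by positivity)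
  have c5 : (N : ℝ) * ((GS N).card : ℝ) ≤ ((TT B).ncard : ℝ) := by exact_mod_cast hT
  refine le_trans (le_of_eq ?_) (c4.trans c5)
  rw [div_pow]
  field_simp
  ring


/-- The number of quadruples `(a₀,a₁,a₂,a₃)` of nonzero integers with
`|aᵢ| ≤ B`, `gcd(a₁,a₂,a₃) = 1` and `a₁a₂a₃ = 2r³` for some rational `r` has exact
order of magnitude `B²·(log B)⁶`. -/
theorem stmt_6 :
    ∃ c₁ c₂ B₀ : ℝ, 0 < c₁ ∧ 0 < c₂ ∧ 3 ≤ B₀ ∧ ∀ B : ℝ, B₀ ≤ B →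
      c₁ * B ^ 2 * Real.log B ^ 6 ≤
        ({t : ℤ × ℤ × ℤ × ℤ | t.1 ≠ 0 ∧ t.2.1 ≠ 0 ∧ t.2.2.1 ≠ 0 ∧ t.2.2.2 ≠ 0 ∧
          |(t.1 : ℝ)| ≤ B ∧ |(t.2.1 : ℝ)| ≤ B ∧ |(t.2.2.1 : ℝ)| ≤ B ∧ |(t.2.2.2 : ℝ)| ≤ B ∧
          Int.gcd (Int.gcd t.2.1 t.2.2.1) t.2.2.2 = 1 ∧
          ∃ r : ℚ, ((t.2.1 : ℚ) * (t.2.2.1 : ℚ) * (t.2.2.2 : ℚ)) = 2 * r ^ 3}.ncard : ℝ) ∧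
      ({t : ℤ × ℤ × ℤ × ℤ | t.1 ≠ 0 ∧ t.2.1 ≠ 0 ∧ t.2.2.1 ≠ 0 ∧ t.2.2.2 ≠ 0 ∧
          |(t.1 : ℝ)| ≤ B ∧ |(t.2.1 : ℝ)| ≤ B ∧ |(t.2.2.1 : ℝ)| ≤ B ∧ |(t.2.2.2 : ℝ)| ≤ B ∧
          Int.gcd (Int.gcd t.2.1 t.2.2.1) t.2.2.2 = 1 ∧
          ∃ r : ℚ, ((t.2.1 : ℚ) * (t.2.2.1 : ℚ) * (t.2.2.2 : ℚ)) = 2 * r ^ 3}.ncard : ℝ) ≤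
        c₂ * B ^ 2 * Real.log B ^ 6 := by
  obtain ⟨P, hP⟩ : ∃ P : ℕ, 1296 ≤ P := ⟨1296, le_rfl⟩
  have hP0 : (0 : ℝ) < P := by
    have : 0 < P := by omega
    exact_mod_cast this
  have hQ0 : (0 : ℝ) < P.factorial := by exact_mod_cast Nat.factorial_pos P
  have hW : (0 : ℝ) ≤ 2 * ((P.factorial : ℝ) ^ 2 + 2) ^ 6 := by positivity
  refine ⟨1 / (192 * (P : ℝ) ^ 3 * (192 * P.factorial) ^ 6), 27648,
    2 * ((P.factorial : ℝ) ^ 2 + 2) ^ 6 + 5, by positivity, by norm_num, by linarith, ?_⟩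
  intro B hB
  exact ⟨TT_lower_real P hP B hB, TT_upper_real B (by linarith)⟩
end
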